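/- Let 2 < p ≤ 3 and assume E|X_i|^p < ∞ for every i and that condition (LD4*) holds; let κ = max_{i∈𝒥} max(|D_i*|, |{j ∈ 𝒥 : i ∈ D_j*}|). Then there is an absolute constant C such that for every z ∈ ℝ, |F(z) − Φ(z)| ≤ C κ^p (1 + |z|)^{−p} Σ_{i∈𝒥} E|X_i|^p. -/

import Mathlib

open MeasureTheory ProbabilityTheory Real

noncomputable def stdGaussianCDF : ℝ → ℝ :=
  fun z => ∫ x in Set.Iic z, (Real.sqrt (2 * Real.pi))⁻¹ * Real.exp (-x ^ 2 / 2)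

/-!
Truncate the summands at the level `t = (1 + |z|) / (32 κ)` and recentre them. Every error made on
the way is measured by `θ = ∑ i, E (|X i| / t) ^ p`, which is comparable to the claimed bound: the
probability that some summand is changed is at most `θ`, the bounded summands have third moments of
total size at most `8 t ^ 3 θ`, and their sum has variance `1 + O(κ t ^ 2 θ)`. If `θ` is not small
compared with a power of `1 + |z|`, both tails are `O(θ)` by moment bounds alone.

For bounded summands, apply Stein's method to a ramp that rises from `0` to `1` near `z ≥ 0`. The
Stein solution and its derivative are negligible on most of the line, and on the remaining far right
part `W` has little mass, which gives the decay in `z`. The jump of the ramp is controlled by a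
non-uniform concentration inequality, conditional on a block of summands; it comes from a
Stein-kernel identity whose test function is the primitive of a trapezoid over the interval in
question. The case `z < 0` follows by negating the summands.
-/

section Gaussian

local notation "γ" => gaussianReal 0 1
local notation "φ" => gaussianPDFReal 0 1

lemma one_le_sqrt_two_mul_pi : 1 ≤ √(2 * π) := by
  rw [Real.one_le_sqrt]
  linarith [Real.pi_gt_three]

lemma sqrt_two_mul_pi_le : √(2 * π) ≤ 3 := by
  rw [Real.sqrt_le_left (by norm_num)]
  linarith [Real.pi_lt_d2]

lemma stdGaussianPDF_eq (x : ℝ) : φ x = (√(2 * π))⁻¹ * exp (-x ^ 2 / 2) := by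
  simp [gaussianPDFReal]

lemma stdGaussianPDF_pos (x : ℝ) : 0 < φ x := gaussianPDFReal_pos 0 1 x one_ne_zero

lemma stdGaussianPDF_le_exp (x : ℝ) : φ x ≤ exp (-x ^ 2 / 2) := by
  rw [stdGaussianPDF_eq]
  exact mul_le_of_le_one_left (exp_pos _).le (inv_le_one_of_one_le₀ one_le_sqrt_two_mul_pi)

lemma inv_stdGaussianPDF_le (x : ℝ) : (φ x)⁻¹ ≤ 3 * exp (x ^ 2 / 2) := by
  rw [stdGaussianPDF_eq, mul_inv, inv_inv, ← exp_neg, neg_div, neg_neg]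
  gcongr
  exact sqrt_two_mul_pi_le

lemma continuous_stdGaussianPDF : Continuous φ := by
  unfold gaussianPDFReal
  fun_prop

lemma hasDerivAt_stdGaussianPDF (x : ℝ) : HasDerivAt φ (-x * φ x) x := by
  have hexponent : HasDerivAt (fun x : ℝ => -x ^ 2 / 2) (-x) x :=
    ((hasDerivAt_pow 2 x).fun_neg.div_const 2).congr_deriv (by push_cast; ring)
  rw [funext stdGaussianPDF_eq]
  exact (hexponent.exp.const_mul _).congr_deriv (by ring)

lemma tendsto_stdGaussianPDF_atTop : Filter.Tendsto φ Filter.atTop (nhds 0) := by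
  rw [funext stdGaussianPDF_eq, ← mul_zero (√(2 * π))⁻¹]
  refine (tendsto_exp_atBot.comp ?_).const_mul _
  simp only [neg_div]
  exact Filter.tendsto_neg_atTop_atBot.comp
    ((Filter.tendsto_pow_atTop two_ne_zero).atTop_div_const two_pos)

lemma integrable_mul_stdGaussianPDF : Integrable fun x => x * φ x := by
  refine ((integrable_mul_exp_neg_mul_sq (b := 1 / 2) (by norm_num)).const_mul
    (√(2 * π))⁻¹).congr (.of_forall fun x => ?_)
  simp only [stdGaussianPDF_eq]
  ring_nf

lemma setIntegral_stdGaussian {s : Set ℝ} (hs : MeasurableSet s) (f : ℝ → ℝ) :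
    ∫ x in s, f x ∂γ = ∫ x in s, φ x * f x := by
  rw [← integral_indicator hs, integral_gaussianReal_eq_integral_smul one_ne_zero,
    ← integral_indicator (μ := volume) hs]
  simp only [smul_eq_mul, Set.indicator_mul_right]

lemma stdGaussian_real_eq_integral (s : Set ℝ) : (γ).real s = ∫ x in s, φ x := by
  rw [measureReal_def, gaussianReal_apply_eq_integral 0 one_ne_zero,
    ENNReal.toReal_ofReal (integral_nonneg fun x => (stdGaussianPDF_pos x).le)]

lemma stdGaussianCDF_eq_real (z : ℝ) : stdGaussianCDF z = (γ).real (Set.Iic z) := by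
  simp only [stdGaussianCDF, stdGaussian_real_eq_integral, stdGaussianPDF_eq]

lemma one_sub_stdGaussianCDF (z : ℝ) : 1 - stdGaussianCDF z = (γ).real (Set.Ioi z) := by
  rw [stdGaussianCDF_eq_real, ← Set.compl_Iic, probReal_compl_eq_one_sub measurableSet_Iic]

lemma stdGaussian_real_Ioi_neg (z : ℝ) : (γ).real (Set.Ioi (-z)) = (γ).real (Set.Iic z) := by
  rw [stdGaussian_real_eq_integral, stdGaussian_real_eq_integral, ← integral_comp_neg_Iic]
  simp only [stdGaussianPDF_eq, neg_sq]

lemma stdGaussianCDF_neg (z : ℝ) : stdGaussianCDF (-z) = 1 - stdGaussianCDF z := by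
  rw [one_sub_stdGaussianCDF, stdGaussianCDF_eq_real, ← stdGaussian_real_Ioi_neg, neg_neg]

lemma stdGaussianCDF_mono : Monotone stdGaussianCDF := fun x y hxy => by
  simp only [stdGaussianCDF_eq_real]
  exact measureReal_mono (Set.Iic_subset_Iic.2 hxy)

lemma stdGaussianCDF_sub_le {x y D : ℝ} (hxy : x ≤ y) (hD : ∀ t ∈ Set.Ioc x y, φ t ≤ D) :
    stdGaussianCDF y - stdGaussianCDF x ≤ (y - x) * D := by
  have hφ := integrable_gaussianPDFReal 0 1
  rw [stdGaussianCDF_eq_real, stdGaussianCDF_eq_real, stdGaussian_real_eq_integral,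
    stdGaussian_real_eq_integral,
    intervalIntegral.integral_Iic_sub_Iic hφ.integrableOn hφ.integrableOn,
    intervalIntegral.integral_of_le hxy]
  calc ∫ t in Set.Ioc x y, φ t ≤ ∫ _t in Set.Ioc x y, D :=
        setIntegral_mono_on hφ.integrableOn (integrableOn_const measure_Ioc_lt_top.ne)
          measurableSet_Ioc hD
    _ = (y - x) * D := by
        rw [setIntegral_const, Real.volume_real_Ioc_of_le hxy, smul_eq_mul]

/-- The Mills ratio `(1 - Φ) / Φ'` of the standard normal distribution. -/
noncomputable def millsRatio (w : ℝ) : ℝ := (γ).real (Set.Ioi w) / φ w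

lemma millsRatio_nonneg (w : ℝ) : 0 ≤ millsRatio w :=
  div_nonneg measureReal_nonneg (stdGaussianPDF_pos w).le

lemma millsRatio_le_exp (w : ℝ) : millsRatio w ≤ 3 * exp (w ^ 2 / 2) := by
  rw [millsRatio, div_eq_mul_inv]
  exact (mul_le_of_le_one_left (inv_pos.2 (stdGaussianPDF_pos w)).le measureReal_le_one).trans
    (inv_stdGaussianPDF_le w)

lemma setIntegral_Ioi_mul_stdGaussianPDF (w : ℝ) : ∫ x in Set.Ioi w, x * φ x = φ w := by
  have h := integral_Ioi_of_hasDerivAt_of_tendsto' (a := w)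
    (fun x _ => (hasDerivAt_stdGaussianPDF x).fun_neg.congr_deriv (by ring))
    integrable_mul_stdGaussianPDF.integrableOn tendsto_stdGaussianPDF_atTop.neg
  rwa [neg_zero, sub_neg_eq_add, zero_add] at h

lemma mul_millsRatio_le_one (w : ℝ) : w * millsRatio w ≤ 1 := by
  rw [millsRatio, mul_div_assoc', div_le_one (stdGaussianPDF_pos w), stdGaussian_real_eq_integral,
    ← setIntegral_Ioi_mul_stdGaussianPDF, ← integral_const_mul]
  exact setIntegral_mono_on ((integrable_gaussianPDFReal 0 1).integrableOn.const_mul _)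
    integrable_mul_stdGaussianPDF.integrableOn measurableSet_Ioi fun x hx =>
      mul_le_mul_of_nonneg_right (le_of_lt hx) (stdGaussianPDF_pos x).le

lemma millsRatio_le_nine {w : ℝ} (hw : 0 ≤ w) : millsRatio w ≤ 9 := by
  rcases le_total w 1 with h | h
  · have hexp : exp (w ^ 2 / 2) ≤ exp 1 := exp_le_exp.2 (by nlinarith)
    linarith [millsRatio_le_exp w, exp_one_lt_d9]
  · nlinarith [mul_millsRatio_le_one w, millsRatio_nonneg w]

lemma stdGaussian_real_Ioi_le {a : ℝ} (ha : 0 ≤ a) :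
    (γ).real (Set.Ioi a) ≤ 9 * exp (-a ^ 2 / 2) := by
  have h := millsRatio_le_nine ha
  rw [millsRatio, div_le_iff₀ (stdGaussianPDF_pos a)] at h
  linarith [stdGaussianPDF_le_exp a]

end Gaussian

section Indicator

variable {α : Type*} {s t : Set α} {x y : α}

/-- The real-valued `0`-`1` indicator function of a set. -/
noncomputable def ind (s : Set α) : α → ℝ := s.indicator 1

lemma ind_of_mem (h : x ∈ s) : ind s x = 1 := Set.indicator_of_mem h _

lemma ind_of_notMem (h : x ∉ s) : ind s x = 0 := Set.indicator_of_notMem h _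

lemma ind_nonneg (s : Set α) (x : α) : 0 ≤ ind s x :=
  Set.indicator_nonneg (fun _ _ => zero_le_one) x

lemma ind_le_one (s : Set α) (x : α) : ind s x ≤ 1 :=
  Set.indicator_le_self' (fun _ _ => zero_le_one) x

lemma ind_le_ind (h : x ∈ s → y ∈ t) : ind s x ≤ ind t y := by
  by_cases hx : x ∈ s
  · rw [ind_of_mem (h hx)]
    exact ind_le_one s x
  · rw [ind_of_notMem hx]
    exact ind_nonneg t y

lemma measurable_ind [MeasurableSpace α] (hs : MeasurableSet s) : Measurable (ind s) :=
  measurable_one.indicator hs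

end Indicator

section SteinEquation

local notation "γ" => gaussianReal 0 1
local notation "φ" => gaussianPDFReal 0 1

variable {h : ℝ → ℝ}

/-- The bounded solution of Stein's equation `f' w - w * f w = h w - ∫ h dγ` for the standard
normal distribution `γ`. -/
noncomputable def steinSol (h : ℝ → ℝ) (w : ℝ) : ℝ :=
  (∫ x in Set.Iic w, (h x - ∫ y, h y ∂γ) ∂γ) / φ w

/-- The derivative of `steinSol h`, in the form given by Stein's equation. -/
noncomputable def steinSolDeriv (h : ℝ → ℝ) (w : ℝ) : ℝ :=
  w * steinSol h w + (h w - ∫ y, h y ∂γ)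

/-- The derivative of `w ↦ w * steinSol h w`. -/
noncomputable def steinMulDeriv (h : ℝ → ℝ) (w : ℝ) : ℝ :=
  steinSol h w + w * steinSolDeriv h w

lemma integrable_stdGaussian_of_mem_Icc (hc : Continuous h) (hh : ∀ x, h x ∈ Set.Icc (0 : ℝ) 1) :
    Integrable h γ :=
  .of_bound hc.aestronglyMeasurable 1 <| .of_forall fun x => by
    rw [norm_eq_abs, abs_of_nonneg (hh x).1]
    exact (hh x).2

lemma integral_stdGaussian_mem_Icc (hc : Continuous h) (hh : ∀ x, h x ∈ Set.Icc (0 : ℝ) 1) :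
    ∫ x, h x ∂γ ∈ Set.Icc (0 : ℝ) 1 := by
  refine ⟨integral_nonneg fun x => (hh x).1, ?_⟩
  have hle := integral_mono (integrable_stdGaussian_of_mem_Icc hc hh)
    (integrable_const (μ := γ) (1 : ℝ)) fun x => (hh x).2
  simpa only [integral_const, probReal_univ, one_smul] using hle

lemma abs_sub_integral_stdGaussian_le (hc : Continuous h) (hh : ∀ x, h x ∈ Set.Icc (0 : ℝ) 1)
    (x : ℝ) : |h x - ∫ y, h y ∂γ| ≤ 1 := by
  have hm := integral_stdGaussian_mem_Icc hc hh
  rw [abs_le]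
  constructor <;> linarith [(hh x).1, (hh x).2, hm.1, hm.2]

lemma hasDerivAt_setIntegral_Iic {g : ℝ → ℝ} (hg : Continuous g) (hi : Integrable g) (w : ℝ) :
    HasDerivAt (fun w => ∫ x in Set.Iic w, g x) (g w) w := by
  have hsplit : ∀ w, ∫ x in Set.Iic w, g x =
      (∫ x in Set.Iic 0, g x) + ∫ x in (0 : ℝ)..w, g x := fun w => by
    rw [← intervalIntegral.integral_Iic_sub_Iic hi.integrableOn hi.integrableOn]
    ring
  rw [funext hsplit]
  exact (intervalIntegral.integral_hasDerivAt_right (hg.intervalIntegrable _ _)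
    (hg.stronglyMeasurableAtFilter _ _) hg.continuousAt).const_add _

lemma hasDerivAt_steinSol (hc : Continuous h) (hh : ∀ x, h x ∈ Set.Icc (0 : ℝ) 1) (w : ℝ) :
    HasDerivAt (steinSol h) (steinSolDeriv h w) w := by
  have hinteg : Integrable fun x => φ x * (h x - ∫ y, h y ∂γ) :=
    (integrable_gaussianPDFReal 0 1).mul_bdd (c := 1) (by fun_prop) <|
      .of_forall fun x => abs_sub_integral_stdGaussian_le hc hh x
  have hnum : HasDerivAt (fun w => ∫ x in Set.Iic w, (h x - ∫ y, h y ∂γ) ∂γ)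
      (φ w * (h w - ∫ y, h y ∂γ)) w := by
    simp only [setIntegral_stdGaussian measurableSet_Iic]
    exact hasDerivAt_setIntegral_Iic (continuous_stdGaussianPDF.mul (hc.sub continuous_const))
      hinteg w
  have hφ := (stdGaussianPDF_pos w).ne'
  refine (hnum.fun_div (hasDerivAt_stdGaussianPDF w) hφ).congr_deriv ?_
  rw [steinSolDeriv, steinSol]
  field_simp
  ring

lemma abs_setIntegral_sub_le (hc : Continuous h) (hh : ∀ x, h x ∈ Set.Icc (0 : ℝ) 1)
    (s : Set ℝ) : |∫ x in s, (h x - ∫ y, h y ∂γ) ∂γ| ≤ (γ).real s := by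
  have hle := norm_setIntegral_le_of_norm_le_const (measure_lt_top γ s) (C := 1)
    (f := fun x => h x - ∫ y, h y ∂γ) fun x _ => abs_sub_integral_stdGaussian_le hc hh x
  rwa [one_mul] at hle

lemma setIntegral_Iic_sub_eq_neg (hc : Continuous h) (hh : ∀ x, h x ∈ Set.Icc (0 : ℝ) 1) (w : ℝ) :
    ∫ x in Set.Iic w, (h x - ∫ y, h y ∂γ) ∂γ = -∫ x in Set.Ioi w, (h x - ∫ y, h y ∂γ) ∂γ := by
  have hi := integrable_stdGaussian_of_mem_Icc hc hh
  have htotal := integral_add_compl (f := fun x => h x - ∫ y, h y ∂γ)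
    (measurableSet_Iic (a := w)) (hi.sub (integrable_const _))
  rw [integral_sub hi (integrable_const _), integral_const, probReal_univ, one_smul, sub_self,
    Set.compl_Iic] at htotal
  linarith

lemma abs_steinSol_le (hc : Continuous h) (hh : ∀ x, h x ∈ Set.Icc (0 : ℝ) 1) (w : ℝ) :
    |steinSol h w| ≤ millsRatio |w| := by
  have hφ : φ |w| = φ w := by simp only [stdGaussianPDF_eq, sq_abs]
  rw [steinSol, millsRatio, abs_div, abs_of_pos (stdGaussianPDF_pos w), hφ]
  refine div_le_div_of_nonneg_right ?_ (stdGaussianPDF_pos w).le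
  rcases le_total w 0 with hw | hw
  · rw [abs_of_nonpos hw, stdGaussian_real_Ioi_neg]
    exact abs_setIntegral_sub_le hc hh _
  · rw [abs_of_nonneg hw, setIntegral_Iic_sub_eq_neg hc hh, abs_neg]
    exact abs_setIntegral_sub_le hc hh _

lemma abs_steinSol_le_nine (hc : Continuous h) (hh : ∀ x, h x ∈ Set.Icc (0 : ℝ) 1) (w : ℝ) :
    |steinSol h w| ≤ 9 :=
  (abs_steinSol_le hc hh w).trans (millsRatio_le_nine (abs_nonneg w))

lemma abs_mul_steinSol_le_one (hc : Continuous h) (hh : ∀ x, h x ∈ Set.Icc (0 : ℝ) 1) (w : ℝ) :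
    |w * steinSol h w| ≤ 1 := by
  rw [abs_mul]
  exact (mul_le_mul_of_nonneg_left (abs_steinSol_le hc hh w) (abs_nonneg w)).trans
    (mul_millsRatio_le_one _)

lemma abs_steinSolDeriv_le_two (hc : Continuous h) (hh : ∀ x, h x ∈ Set.Icc (0 : ℝ) 1) (w : ℝ) :
    |steinSolDeriv h w| ≤ 2 := by
  refine (abs_add_le _ _).trans ?_
  linarith [abs_mul_steinSol_le_one hc hh w, abs_sub_integral_stdGaussian_le hc hh w]

lemma continuous_steinSolDeriv (hc : Continuous h) (hh : ∀ x, h x ∈ Set.Icc (0 : ℝ) 1) :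
    Continuous (steinSolDeriv h) := by
  have hsol : Continuous (steinSol h) :=
    continuous_iff_continuousAt.2 fun w => (hasDerivAt_steinSol hc hh w).continuousAt
  unfold steinSolDeriv
  fun_prop

lemma hasDerivAt_mul_steinSol (hc : Continuous h) (hh : ∀ x, h x ∈ Set.Icc (0 : ℝ) 1) (w : ℝ) :
    HasDerivAt (fun w => w * steinSol h w) (steinMulDeriv h w) w :=
  ((hasDerivAt_id w).fun_mul (hasDerivAt_steinSol hc hh w)).congr_deriv <| by
    rw [steinMulDeriv, one_mul, id]

lemma abs_steinMulDeriv_le {D w : ℝ} (hsol : |steinSol h w| ≤ D)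
    (hderiv : |steinSolDeriv h w| ≤ D) : |steinMulDeriv h w| ≤ D * (1 + |w|) := by
  refine (abs_add_le _ _).trans ?_
  rw [abs_mul]
  nlinarith [mul_le_mul_of_nonneg_left hderiv (abs_nonneg w)]

section VanishingOnLeft

variable {a w : ℝ}

lemma steinSol_eq_of_le (h0 : ∀ x ≤ a, h x = 0) (hw : w ≤ a) :
    steinSol h w = -(∫ x, h x ∂γ) * millsRatio (-w) := by
  have hcongr : ∫ x in Set.Iic w, (h x - ∫ y, h y ∂γ) ∂γ =
      ∫ _x in Set.Iic w, -(∫ y, h y ∂γ) ∂γ :=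
    setIntegral_congr_fun measurableSet_Iic fun x hx => by
      rw [h0 x (le_trans hx hw), zero_sub]
  have hφ : φ (-w) = φ w := by simp only [stdGaussianPDF_eq, neg_sq]
  rw [steinSol, hcongr, setIntegral_const, millsRatio, stdGaussian_real_Ioi_neg, hφ, smul_eq_mul]
  ring

lemma integral_stdGaussian_le_of_eq_zero (hc : Continuous h)
    (hh : ∀ x, h x ∈ Set.Icc (0 : ℝ) 1) (h0 : ∀ x ≤ a, h x = 0) :
    ∫ x, h x ∂γ ≤ (γ).real (Set.Ioi a) := by
  rw [← integral_indicator_one measurableSet_Ioi]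
  refine integral_mono (integrable_stdGaussian_of_mem_Icc hc hh)
    ((integrable_const 1).indicator measurableSet_Ioi) fun x => ?_
  by_cases hx : x ≤ a
  · rw [h0 x hx]
    exact Set.indicator_nonneg (fun _ _ => zero_le_one) x
  · rw [Set.indicator_of_mem (Set.mem_Ioi.2 (not_le.1 hx))]
    exact (hh x).2

lemma millsRatio_neg_le (ha : 0 ≤ a) (hw : w ≤ a / 2) :
    millsRatio (-w) ≤ 9 * exp (a ^ 2 / 8) ∧
      |w| * millsRatio (-w) ≤ 3 * (1 + a) * exp (a ^ 2 / 8) := by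
  have hexp : 1 ≤ exp (a ^ 2 / 8) := one_le_exp (by positivity)
  rcases le_total w 0 with hw0 | hw0
  · have hmul := mul_millsRatio_le_one (-w)
    rw [abs_of_nonpos hw0]
    exact ⟨by linarith [millsRatio_le_nine (neg_nonneg.2 hw0)], by nlinarith⟩
  · have hmills : millsRatio (-w) ≤ 3 * exp (a ^ 2 / 8) := by
      refine (millsRatio_le_exp _).trans ?_
      have hsq : (-w) ^ 2 / 2 ≤ a ^ 2 / 8 := by nlinarith
      gcongr
    refine ⟨by linarith, ?_⟩
    rw [abs_of_nonneg hw0]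
    calc w * millsRatio (-w) ≤ (1 + a) * (3 * exp (a ^ 2 / 8)) :=
          mul_le_mul (by linarith) hmills (millsRatio_nonneg _) (by linarith)
      _ = 3 * (1 + a) * exp (a ^ 2 / 8) := by ring

lemma abs_steinSol_le_of_le_half (hc : Continuous h) (hh : ∀ x, h x ∈ Set.Icc (0 : ℝ) 1)
    (ha : 0 ≤ a) (h0 : ∀ x ≤ a, h x = 0) (hw : w ≤ a / 2) :
    |steinSol h w| ≤ 81 * (1 + a) * exp (-(3 * a ^ 2 / 8)) ∧
      |steinSolDeriv h w| ≤ 81 * (1 + a) * exp (-(3 * a ^ 2 / 8)) := by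
  have hwa : w ≤ a := by linarith
  have hm0 := (integral_stdGaussian_mem_Icc hc hh).1
  have hm := (integral_stdGaussian_le_of_eq_zero hc hh h0).trans (stdGaussian_real_Ioi_le ha)
  have hexp : 1 ≤ exp (a ^ 2 / 8) := one_le_exp (by positivity)
  have hprod : (∫ x, h x ∂γ) * (9 * (1 + a) * exp (a ^ 2 / 8)) ≤
      81 * (1 + a) * exp (-(3 * a ^ 2 / 8)) := by
    calc _ ≤ 9 * exp (-a ^ 2 / 2) * (9 * (1 + a) * exp (a ^ 2 / 8)) := by gcongr
      _ = 81 * (1 + a) * (exp (-a ^ 2 / 2) * exp (a ^ 2 / 8)) := by ring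
      _ = 81 * (1 + a) * exp (-(3 * a ^ 2 / 8)) := by rw [← exp_add]; ring_nf
  obtain ⟨hmills, hwmills⟩ := millsRatio_neg_le ha hw
  have hsol := steinSol_eq_of_le h0 hwa
  constructor
  · rw [hsol, abs_mul, abs_neg, abs_of_nonneg hm0, abs_of_nonneg (millsRatio_nonneg _)]
    refine le_trans ?_ hprod
    gcongr
    nlinarith
  · have hderiv : steinSolDeriv h w = -((∫ x, h x ∂γ) * (w * millsRatio (-w) + 1)) := by
      rw [steinSolDeriv, hsol, h0 w hwa]
      ring
    rw [hderiv, abs_neg, abs_mul, abs_of_nonneg hm0]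
    refine le_trans ?_ hprod
    gcongr
    refine (abs_add_le _ _).trans ?_
    rw [abs_mul, abs_of_nonneg (millsRatio_nonneg _), abs_one]
    nlinarith

end VanishingOnLeft

lemma pow_mul_exp_neg_le (n : ℕ) {x y : ℝ} (hy : 0 ≤ y) (hyx : y ≤ x + 3) :
    y ^ n * exp (-(3 * x ^ 2 / 8)) ≤ n.factorial * exp 4 := by
  have hpow := pow_div_factorial_le_exp y hy n
  rw [div_le_iff₀ (by positivity)] at hpow
  calc y ^ n * exp (-(3 * x ^ 2 / 8)) ≤ exp y * n.factorial * exp (-(3 * x ^ 2 / 8)) := by gcongr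
    _ = n.factorial * exp (y - 3 * x ^ 2 / 8) := by rw [sub_eq_add_neg, exp_add]; ring
    _ ≤ n.factorial * exp 4 := by
      gcongr
      nlinarith [sq_nonneg (3 * x - 4)]

lemma mul_exp_neg_le_inv_pow {Z a : ℝ} (hZ : 1 ≤ Z) (hZa : Z - 2 ≤ a) (ha : 0 ≤ a) :
    (1 + a) * exp (-(3 * a ^ 2 / 8)) ≤ 120 * exp 4 * (Z ^ 4)⁻¹ := by
  have hfive := pow_mul_exp_neg_le 5 (x := a) (y := a + 2) (by linarith) (by linarith)
  rw [← div_eq_mul_inv, le_div_iff₀ (by positivity)]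
  calc (1 + a) * exp (-(3 * a ^ 2 / 8)) * Z ^ 4
      ≤ (a + 2) * exp (-(3 * a ^ 2 / 8)) * (a + 2) ^ 4 := by
        gcongr ?_ * _ * ?_ ^ 4 <;> linarith
    _ = (a + 2) ^ 5 * exp (-(3 * a ^ 2 / 8)) := by ring
    _ ≤ 120 * exp 4 := by simpa [Nat.factorial] using hfive

/-- The shape of the non-uniform bounds at level `Z`: negligible except far to the right. -/
noncomputable def tailBound (Z w : ℝ) : ℝ := (Z ^ 4)⁻¹ + ind (Set.Ici (Z / 2 - 3)) w

/-- The absolute constant in the non-uniform bounds for solutions of Stein's equation. -/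
noncomputable def steinConst : ℝ := 9720 * exp 4

lemma steinConst_pos : 0 < steinConst := by
  unfold steinConst
  positivity

lemma abs_steinSol_le_tailBound (hc : Continuous h) (hh : ∀ x, h x ∈ Set.Icc (0 : ℝ) 1) {Z a : ℝ}
    (hZ : 1 ≤ Z) (hZa : Z - 2 ≤ a) (h0 : ∀ x ≤ a, h x = 0) (w : ℝ) :
    |steinSol h w| ≤ steinConst * tailBound Z w ∧
      |steinSolDeriv h w| ≤ steinConst * tailBound Z w := by
  have hexp : 1 ≤ exp 4 := one_le_exp (by norm_num)
  have hZ4 : 0 < (Z ^ 4)⁻¹ := by positivity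
  have huniform : 9 ≤ steinConst * tailBound Z w →
      |steinSol h w| ≤ steinConst * tailBound Z w ∧
        |steinSolDeriv h w| ≤ steinConst * tailBound Z w := fun hnine =>
    ⟨(abs_steinSol_le_nine hc hh w).trans hnine,
      (abs_steinSolDeriv_le_two hc hh w).trans (by linarith)⟩
  unfold steinConst tailBound at *
  by_cases hw : w ∈ Set.Ici (Z / 2 - 3)
  · rw [ind_of_mem hw] at huniform ⊢
    exact huniform (by nlinarith)
  rcases lt_or_ge a 0 with ha | ha
  · have hZ16 : (1 / 16 : ℝ) ≤ (Z ^ 4)⁻¹ := by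
      rw [one_div]
      gcongr
      calc Z ^ 4 ≤ 2 ^ 4 := by gcongr; linarith
        _ = 16 := by norm_num
    exact huniform (by nlinarith [ind_nonneg (Set.Ici (Z / 2 - 3)) w])
  rw [ind_of_notMem hw, add_zero]
  have hsmall := mul_exp_neg_le_inv_pow hZ hZa ha
  obtain ⟨hsol, hderiv⟩ := abs_steinSol_le_of_le_half hc hh ha h0 (w := w)
    (by linarith [not_le.1 (Set.mem_Ici.not.1 hw)])
  exact ⟨by linarith, by linarith⟩

end SteinEquation

section Ramp

variable {a b w : ℝ}

/-- The piecewise linear function equal to `0` on `(-∞, a]` and to `1` on `[b, ∞)`. -/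
noncomputable def ramp (a b w : ℝ) : ℝ := max 0 (min 1 ((w - a) / (b - a)))

lemma ramp_mem_Icc (a b w : ℝ) : ramp a b w ∈ Set.Icc (0 : ℝ) 1 :=
  ⟨le_max_left _ _, max_le zero_le_one (min_le_left _ _)⟩

lemma continuous_ramp (a b : ℝ) : Continuous (ramp a b) := by
  unfold ramp
  fun_prop

lemma ramp_of_le (hab : a < b) (hw : w ≤ a) : ramp a b w = 0 :=
  max_eq_left ((min_le_right _ _).trans
    (div_nonpos_of_nonpos_of_nonneg (by linarith) (by linarith)))

lemma ramp_of_ge (hab : a < b) (hw : b ≤ w) : ramp a b w = 1 := by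
  have hdiv : 1 ≤ (w - a) / (b - a) := by
    rw [le_div_iff₀ (by linarith)]
    linarith
  rw [ramp, min_eq_left hdiv, max_eq_right zero_le_one]

lemma ramp_of_mem_Ioo (hw : w ∈ Set.Ioo a b) : ramp a b w = (w - a) / (b - a) := by
  have hba : 0 < b - a := by linarith [hw.1, hw.2]
  rw [ramp, min_eq_right, max_eq_right]
  · exact div_nonneg (by linarith [hw.1]) hba.le
  · rw [div_le_one hba]
    linarith [hw.2]

lemma hasDerivAt_ramp (hab : a < b) (ha : w ≠ a) (hb : w ≠ b) :
    HasDerivAt (ramp a b) ((b - a)⁻¹ * ind (Set.Icc a b) w) w := by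
  rcases lt_or_gt_of_ne ha with h | h
  · rw [ind_of_notMem fun hw => h.not_ge hw.1, mul_zero]
    refine (hasDerivAt_const w (0 : ℝ)).congr_of_eventuallyEq ?_
    filter_upwards [Iio_mem_nhds h] with s hs using ramp_of_le hab (le_of_lt hs)
  rcases lt_or_gt_of_ne hb with h' | h'
  · rw [ind_of_mem (Set.mem_Icc.2 ⟨h.le, h'.le⟩)]
    refine ((((hasDerivAt_id w).sub_const a).div_const (b - a)).congr_deriv
      (by rw [one_div, mul_one])).congr_of_eventuallyEq ?_
    filter_upwards [Ioo_mem_nhds h h'] with s hs using ramp_of_mem_Ioo hs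
  · rw [ind_of_notMem fun hw => h'.not_ge hw.2, mul_zero]
    refine (hasDerivAt_const w (1 : ℝ)).congr_of_eventuallyEq ?_
    filter_upwards [Ioi_mem_nhds h'] with s hs using ramp_of_ge hab (le_of_lt hs)

lemma intervalIntegrable_ind {s : Set ℝ} (hs : MeasurableSet s) (x y : ℝ) :
    IntervalIntegrable (ind s) volume x y := by
  refine (intervalIntegrable_const (c := (1 : ℝ))).mono_fun
    (measurable_ind hs).aestronglyMeasurable (.of_forall fun t => ?_)
  simp only [norm_eq_abs, abs_of_nonneg (ind_nonneg s t), abs_one, ind_le_one]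

lemma ramp_sub_ramp (hab : a < b) (x y : ℝ) :
    ramp a b x - ramp a b y =
      (x - y) * ∫ t in (0 : ℝ)..1, (b - a)⁻¹ * ind (Set.Icc a b) (y + (x - y) * t) := by
  have hftc : ∫ t in y..x, (b - a)⁻¹ * ind (Set.Icc a b) t = ramp a b x - ramp a b y :=
    integral_eq_of_hasDerivAt_off_countable (ramp a b) _ (s := {a, b}) (Set.to_countable _)
      (continuous_ramp a b).continuousOn
      (fun t ht => hasDerivAt_ramp hab (fun h => ht.2 (Or.inl h)) (fun h => ht.2 (Or.inr h)))
      ((intervalIntegrable_ind measurableSet_Icc y x).const_mul _)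
  have hsubst := intervalIntegral.mul_integral_comp_add_mul (a := 0) (b := 1)
    (f := fun t => (b - a)⁻¹ * ind (Set.Icc a b) t) (x - y) y
  rw [← hftc, hsubst, mul_zero, mul_one, add_zero, add_sub_cancel]

lemma stdGaussian_real_Ioi_le_integral_ramp (hab : a < b) :
    (gaussianReal 0 1).real (Set.Ioi b) ≤ ∫ x, ramp a b x ∂gaussianReal 0 1 := by
  rw [← integral_indicator_one measurableSet_Ioi]
  refine integral_mono ((integrable_const 1).indicator measurableSet_Ioi)
    (integrable_stdGaussian_of_mem_Icc (continuous_ramp a b) (ramp_mem_Icc a b)) fun x => ?_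
  by_cases hx : x ∈ Set.Ioi b
  · rw [Set.indicator_of_mem hx, ramp_of_ge hab (le_of_lt hx), Pi.one_apply]
  · rw [Set.indicator_of_notMem hx]
    exact (ramp_mem_Icc a b x).1

end Ramp

lemma integral_mul_of_indep {Ω : Type*} {m₁ m₂ m₀ : MeasurableSpace Ω} {μ : Measure[m₀] Ω}
    {f g : Ω → ℝ} (h : Indep m₁ m₂ μ) (hm₁ : m₁ ≤ m₀) (hm₂ : m₂ ≤ m₀)
    (hf : Measurable[m₁] f) (hg : Measurable[m₂] g) :
    ∫ ω, f ω * g ω ∂μ = (∫ ω, f ω ∂μ) * ∫ ω, g ω ∂μ := by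
  have hfg : IndepFun f g μ := by
    rw [IndepFun_iff_Indep]
    exact indep_of_indep_of_le_left (indep_of_indep_of_le_right h hg.comap_le) hf.comap_le
  exact hfg.integral_fun_mul_eq_mul_integral (hf.mono hm₁ le_rfl).aestronglyMeasurable
    (hg.mono hm₂ le_rfl).aestronglyMeasurable

section BddMeasurable

variable {Ω ι : Type*} [MeasurableSpace Ω] {f g : Ω → ℝ}

/-- A bounded measurable real function; on a finite measure space every integral formed below from
such functions exists. -/
structure BddMeasurable (f : Ω → ℝ) : Prop where
  measurable : Measurable f
  exists_abs_le : ∃ K : ℝ, ∀ ω, |f ω| ≤ K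

namespace BddMeasurable

lemma const (c : ℝ) : BddMeasurable fun _ : Ω => c := ⟨measurable_const, |c|, fun _ => le_rfl⟩

lemma add (hf : BddMeasurable f) (hg : BddMeasurable g) : BddMeasurable fun ω => f ω + g ω := by
  obtain ⟨K, hK⟩ := hf.exists_abs_le
  obtain ⟨L, hL⟩ := hg.exists_abs_le
  exact ⟨hf.measurable.add hg.measurable, K + L,
    fun ω => (abs_add_le _ _).trans (add_le_add (hK ω) (hL ω))⟩

lemma neg (hf : BddMeasurable f) : BddMeasurable fun ω => -f ω := by
  obtain ⟨K, hK⟩ := hf.exists_abs_le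
  exact ⟨hf.measurable.neg, K, fun ω => (abs_neg _).trans_le (hK ω)⟩

lemma sub (hf : BddMeasurable f) (hg : BddMeasurable g) : BddMeasurable fun ω => f ω - g ω := by
  simpa only [sub_eq_add_neg] using hf.add hg.neg

lemma mul (hf : BddMeasurable f) (hg : BddMeasurable g) : BddMeasurable fun ω => f ω * g ω := by
  obtain ⟨K, hK⟩ := hf.exists_abs_le
  obtain ⟨L, hL⟩ := hg.exists_abs_le
  refine ⟨hf.measurable.mul hg.measurable, K * L, fun ω => ?_⟩
  rw [abs_mul]
  exact mul_le_mul (hK ω) (hL ω) (abs_nonneg _) ((abs_nonneg _).trans (hK ω))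

lemma abs (hf : BddMeasurable f) : BddMeasurable fun ω => |f ω| := by
  obtain ⟨K, hK⟩ := hf.exists_abs_le
  exact ⟨hf.measurable.abs, K, fun ω => (abs_abs (f ω)).trans_le (hK ω)⟩

lemma pow (hf : BddMeasurable f) (n : ℕ) : BddMeasurable fun ω => f ω ^ n := by
  induction n with
  | zero => simpa only [pow_zero] using const 1
  | succ n ih => simpa only [pow_succ] using ih.mul hf

lemma div_const (hf : BddMeasurable f) (c : ℝ) : BddMeasurable fun ω => f ω / c := by
  simpa only [div_eq_mul_inv] using hf.mul (const c⁻¹)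

lemma sum (s : Finset ι) {F : ι → Ω → ℝ} (h : ∀ i, BddMeasurable (F i)) :
    BddMeasurable fun ω => ∑ i ∈ s, F i ω := by
  classical
  induction s using Finset.induction_on with
  | empty => simpa only [Finset.sum_empty] using const 0
  | insert a s ha ih => simpa only [Finset.sum_insert ha] using (h a).add ih

lemma comp_continuous (hf : BddMeasurable f) {φ : ℝ → ℝ} (hφ : Continuous φ) :
    BddMeasurable fun ω => φ (f ω) := by
  obtain ⟨K, hK⟩ := hf.exists_abs_le
  obtain ⟨L, hL⟩ := (isCompact_Icc (a := -K) (b := K)).exists_bound_of_continuousOn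
    hφ.continuousOn
  exact ⟨hφ.measurable.comp hf.measurable, L, fun ω => hL _ (abs_le.1 (hK ω))⟩

lemma comp {α : Type*} [MeasurableSpace α] (hf : BddMeasurable f) {g : α → Ω} (hg : Measurable g) :
    BddMeasurable fun x => f (g x) := by
  obtain ⟨K, hK⟩ := hf.exists_abs_le
  exact ⟨hf.measurable.comp hg, K, fun x => hK (g x)⟩

lemma ind (hf : Measurable f) {s : Set ℝ} (hs : MeasurableSet s) :
    BddMeasurable fun ω => ind s (f ω) :=
  ⟨(measurable_ind hs).comp hf, 1, fun ω =>
    (abs_of_nonneg (ind_nonneg s (f ω))).trans_le (ind_le_one s (f ω))⟩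

variable {μ : Measure Ω} [IsFiniteMeasure μ]

lemma integrable (hf : BddMeasurable f) : Integrable f μ := by
  obtain ⟨K, hK⟩ := hf.exists_abs_le
  exact .of_bound hf.measurable.aestronglyMeasurable K (.of_forall hK)

lemma integral_mono (hf : BddMeasurable f) (hg : BddMeasurable g) (h : ∀ ω, f ω ≤ g ω) :
    ∫ ω, f ω ∂μ ≤ ∫ ω, g ω ∂μ :=
  MeasureTheory.integral_mono hf.integrable hg.integrable h

lemma integral_sum (s : Finset ι) {F : ι → Ω → ℝ} (h : ∀ i, BddMeasurable (F i)) :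
    ∫ ω, ∑ i ∈ s, F i ω ∂μ = ∑ i ∈ s, ∫ ω, F i ω ∂μ :=
  integral_finsetSum _ fun i _ => (h i).integrable

end BddMeasurable

variable {μ : Measure Ω}

lemma integral_intervalIntegral_swap [IsFiniteMeasure μ] {F : ℝ → Ω → ℝ} {a b K : ℝ} (hab : a ≤ b)
    (hF : Measurable fun q : ℝ × Ω => F q.1 q.2) (hK : ∀ t ∈ Set.Ioc a b, ∀ ω, |F t ω| ≤ K) :
    ∫ ω, (∫ t in a..b, F t ω) ∂μ = ∫ t in a..b, ∫ ω, F t ω ∂μ := by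
  simp only [intervalIntegral.integral_of_le hab]
  refine (integral_integral_swap (.of_bound (C := K) hF.aestronglyMeasurable ?_)).symm
  rw [← Measure.restrict_univ (μ := μ), Measure.prod_restrict]
  exact ae_restrict_of_forall_mem (measurableSet_Ioc.prod .univ) fun q hq => hK q.1 hq.1 q.2

lemma abs_integral_intervalIntegral_le [IsFiniteMeasure μ] {F : ℝ → Ω → ℝ} {a b K D : ℝ}
    (hab : a ≤ b) (hF : Measurable fun q : ℝ × Ω => F q.1 q.2)
    (hK : ∀ t ∈ Set.Ioc a b, ∀ ω, |F t ω| ≤ K) (hD : ∀ t ∈ Set.Ioc a b, ∫ ω, |F t ω| ∂μ ≤ D) :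
    |∫ ω, (∫ t in a..b, F t ω) ∂μ| ≤ D * (b - a) := by
  rw [integral_intervalIntegral_swap hab hF hK]
  have hle := intervalIntegral.norm_integral_le_of_norm_le_const (a := a) (b := b) (C := D)
    (f := fun t => ∫ ω, F t ω ∂μ) fun t ht =>
      abs_integral_le_integral_abs.trans (hD t (Set.uIoc_of_le hab ▸ ht))
  rwa [abs_of_nonneg (sub_nonneg.2 hab)] at hle

lemma BddMeasurable.intervalIntegrable_integral [IsFiniteMeasure μ] {F : ℝ → Ω → ℝ}
    (hF : BddMeasurable fun q : ℝ × Ω => F q.1 q.2) (a b : ℝ) :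
    IntervalIntegrable (fun t => ∫ ω, F t ω ∂μ) volume a b := by
  obtain ⟨K, hK⟩ := hF.exists_abs_le
  refine (intervalIntegrable_const (c := K * μ.real Set.univ)).mono_fun
    hF.measurable.stronglyMeasurable.integral_prod_right.aestronglyMeasurable
    (.of_forall fun t => ?_)
  exact (norm_integral_le_of_norm_le_const (.of_forall fun ω => hK (t, ω))).trans
    (le_abs_self _)

lemma BddMeasurable.integral_intervalIntegral [IsFiniteMeasure μ] {F : ℝ → Ω → ℝ} {a b : ℝ}
    (hab : a ≤ b) (hF : BddMeasurable fun q : ℝ × Ω => F q.1 q.2) :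
    ∫ ω, (∫ t in a..b, F t ω) ∂μ = ∫ t in a..b, ∫ ω, F t ω ∂μ := by
  obtain ⟨K, hK⟩ := hF.exists_abs_le
  exact integral_intervalIntegral_swap hab hF.measurable fun t _ ω => hK (t, ω)

lemma integral_abs_pow_three_le [IsProbabilityMeasure μ] (hf : BddMeasurable f) :
    (∫ ω, |f ω| ∂μ) ^ 3 ≤ ∫ ω, |f ω| ^ 3 ∂μ :=
  (convexOn_pow 3).map_integral_le (continuous_pow 3).continuousOn isClosed_Ici
    (.of_forall fun ω => abs_nonneg (f ω)) hf.abs.integrable (hf.abs.pow 3).integrable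

end BddMeasurable

section Counting

variable {ι : Type*} {C : ι → Finset ι} {κ : ℝ}

lemma mul_mul_le_sum_cubes {a b c : ℝ} (ha : 0 ≤ a) (hb : 0 ≤ b) (hc : 0 ≤ c) :
    a * b * c ≤ (a ^ 3 + b ^ 3 + c ^ 3) / 3 := by
  nlinarith [mul_nonneg (add_nonneg (add_nonneg ha hb) hc) (add_nonneg
    (add_nonneg (sq_nonneg (a - b)) (sq_nonneg (b - c))) (sq_nonneg (a - c)))]

lemma mul_sum_mul_sum_le {s : Finset ι} (hs : (s.card : ℝ) ≤ κ) {x e : ι → ℝ} (hx : ∀ i, 0 ≤ x i)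
    (he : ∀ i, 0 ≤ e i) (i : ι) :
    x i * (∑ j ∈ s, x j) * (∑ k ∈ s, e k) ≤
      κ * ((∑ _j ∈ s, x i ^ 3) + (∑ j ∈ s, x j ^ 3) + ∑ k ∈ s, e k ^ 3) / 3 := by
  calc x i * (∑ j ∈ s, x j) * (∑ k ∈ s, e k) = ∑ j ∈ s, ∑ k ∈ s, x i * x j * e k := by
        rw [mul_assoc, Finset.sum_mul_sum, Finset.mul_sum]
        simp only [Finset.mul_sum, mul_assoc]
    _ ≤ ∑ j ∈ s, ∑ k ∈ s, (x i ^ 3 + x j ^ 3 + e k ^ 3) / 3 :=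
        Finset.sum_le_sum fun j _ => Finset.sum_le_sum fun k _ =>
          mul_mul_le_sum_cubes (hx i) (hx j) (he k)
    _ = s.card * ((∑ _j ∈ s, x i ^ 3) + (∑ j ∈ s, x j ^ 3) + ∑ k ∈ s, e k ^ 3) / 3 := by
        simp only [← Finset.sum_div, Finset.sum_add_distrib, Finset.sum_const, nsmul_eq_mul,
          ← Finset.mul_sum]
        ring
    _ ≤ κ * ((∑ _j ∈ s, x i ^ 3) + (∑ j ∈ s, x j ^ 3) + ∑ k ∈ s, e k ^ 3) / 3 := by
        have hnonneg : 0 ≤ (∑ _j ∈ s, x i ^ 3) + (∑ j ∈ s, x j ^ 3) + ∑ k ∈ s, e k ^ 3 :=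
          add_nonneg (add_nonneg (Finset.sum_nonneg fun _ _ => pow_nonneg (hx i) 3)
            (Finset.sum_nonneg fun j _ => pow_nonneg (hx j) 3))
            (Finset.sum_nonneg fun k _ => pow_nonneg (he k) 3)
        gcongr

variable [Fintype ι]

lemma sum_sum_const_le (hC : ∀ i, ((C i).card : ℝ) ≤ κ) {y : ι → ℝ} (hy : ∀ i, 0 ≤ y i) :
    ∑ i, ∑ _j ∈ C i, y i ≤ κ * ∑ i, y i := by
  rw [Finset.mul_sum]
  refine Finset.sum_le_sum fun i _ => ?_
  rw [Finset.sum_const, nsmul_eq_mul]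
  exact mul_le_mul_of_nonneg_right (hC i) (hy i)

variable [DecidableEq ι]

lemma sum_sum_le (hC' : ∀ i, ((Finset.univ.filter fun j => i ∈ C j).card : ℝ) ≤ κ) {y : ι → ℝ}
    (hy : ∀ i, 0 ≤ y i) : ∑ i, ∑ j ∈ C i, y j ≤ κ * ∑ i, y i := by
  rw [Finset.sum_comm' (t' := Finset.univ) (s' := fun j => Finset.univ.filter fun i => j ∈ C i)
    (fun i j => by simp only [Finset.mem_univ, true_and, Finset.mem_filter, and_true])]
  rw [Finset.mul_sum]
  refine Finset.sum_le_sum fun i _ => ?_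
  rw [Finset.sum_const, nsmul_eq_mul]
  exact mul_le_mul_of_nonneg_right (hC' i) (hy i)

lemma sum_mul_sum_mul_sum_le (hκ : 0 ≤ κ) (hC : ∀ i, ((C i).card : ℝ) ≤ κ)
    (hC' : ∀ i, ((Finset.univ.filter fun j => i ∈ C j).card : ℝ) ≤ κ)
    {x e : ι → ℝ} (hx : ∀ i, 0 ≤ x i) (he : ∀ i, 0 ≤ e i) :
    ∑ i, x i * (∑ j ∈ C i, x j) * (∑ k ∈ C i, e k) ≤
      κ ^ 2 * ((2 * ∑ i, x i ^ 3 + ∑ i, e i ^ 3) / 3) := by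
  refine (Finset.sum_le_sum fun i _ => mul_sum_mul_sum_le (hC i) hx he i).trans ?_
  rw [← Finset.sum_div, ← Finset.mul_sum, Finset.sum_add_distrib, Finset.sum_add_distrib]
  have hown := sum_sum_const_le hC fun i => pow_nonneg (hx i) 3
  have hx3 := sum_sum_le hC' fun i => pow_nonneg (hx i) 3
  have he3 := sum_sum_le hC' fun i => pow_nonneg (he i) 3
  linarith [mul_le_mul_of_nonneg_left (add_le_add (add_le_add hown hx3) he3) hκ]

lemma sum_sq_mul_sum_le (hC : ∀ i, ((C i).card : ℝ) ≤ κ)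
    (hC' : ∀ i, ((Finset.univ.filter fun j => i ∈ C j).card : ℝ) ≤ κ)
    {x : ι → ℝ} (hx : ∀ i, 0 ≤ x i) :
    ∑ i, x i ^ 2 * (∑ j ∈ C i, x j) ≤ κ * ∑ i, x i ^ 3 := by
  have hown := sum_sum_const_le hC fun i => pow_nonneg (hx i) 3
  have hother := sum_sum_le hC' fun i => pow_nonneg (hx i) 3
  calc ∑ i, x i ^ 2 * (∑ j ∈ C i, x j)
      ≤ ∑ i, ((2 * ∑ _j ∈ C i, x i ^ 3) + (∑ j ∈ C i, x j ^ 3)) / 3 := by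
        refine Finset.sum_le_sum fun i _ => ?_
        rw [Finset.mul_sum, Finset.mul_sum, ← Finset.sum_add_distrib, Finset.sum_div]
        refine Finset.sum_le_sum fun j _ => ?_
        linarith [mul_mul_le_sum_cubes (hx i) (hx i) (hx j), sq (x i)]
    _ ≤ κ * ∑ i, x i ^ 3 := by
        rw [← Finset.sum_div, Finset.sum_add_distrib, ← Finset.mul_sum]
        linarith

end Counting

section FamilySigma

variable {Ω ι : Type*} {X : ι → Ω → ℝ} {S T : Set ι}

/-- The σ-algebra generated by the subfamily `X j`, `j ∈ S`. -/
@[reducible] def familySigma (X : ι → Ω → ℝ) (S : Set ι) : MeasurableSpace Ω :=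
  ⨆ j ∈ S, MeasurableSpace.comap (X j) inferInstance

/-- The partial sum over a finite index set; with all indices it is the variable `W` of the
theorem. -/
def blockSum (X : ι → Ω → ℝ) (F : Finset ι) (ω : Ω) : ℝ := ∑ j ∈ F, X j ω

lemma familySigma_le [m₀ : MeasurableSpace Ω] (h : ∀ i, Measurable (X i)) : familySigma X S ≤ m₀ :=
  iSup₂_le fun j _ => (h j).comap_le

lemma measurable_familySigma {j : ι} (h : j ∈ S) : Measurable[familySigma X S] (X j) :=
  measurable_iff_comap_le.2 (le_iSup₂_of_le j h le_rfl)

lemma measurable_blockSum {F : Finset ι} (h : ∀ j ∈ F, j ∈ S) :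
    Measurable[familySigma X S] (blockSum X F) :=
  Finset.measurable_sum F fun j hj => measurable_familySigma (h j hj)

lemma blockSum_univ_sub_blockSum [Fintype ι] [DecidableEq ι] (F : Finset ι) (ω : Ω) :
    blockSum X Finset.univ ω - blockSum X F ω = blockSum X Fᶜ ω :=
  sub_eq_of_eq_add (Finset.sum_compl_add_sum F fun j => X j ω).symm

lemma abs_blockSum_le_of_subset {F G : Finset ι} (h : F ⊆ G) (ω : Ω) :
    |blockSum X F ω| ≤ ∑ j ∈ G, |X j ω| :=
  (Finset.abs_sum_le_sum_abs _ _).trans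
    (Finset.sum_le_sum_of_subset_of_nonneg h fun _ _ _ => abs_nonneg _)

variable [MeasurableSpace Ω]

/-- A bounded random variable that depends only on the variables of the block `F`. -/
structure BlockFun (X : ι → Ω → ℝ) (F : Finset ι) (ξ : Ω → ℝ) : Prop where
  measurable : Measurable[familySigma X F] ξ
  bdd : BddMeasurable ξ

namespace BlockFun

variable {F : Finset ι} {f g : Ω → ℝ}

lemma const (c : ℝ) : BlockFun X F fun _ => c := ⟨measurable_const, .const c⟩

lemma mul (hf : BlockFun X F f) (hg : BlockFun X F g) : BlockFun X F fun ω => f ω * g ω :=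
  ⟨hf.measurable.mul hg.measurable, hf.bdd.mul hg.bdd⟩

lemma add (hf : BlockFun X F f) (hg : BlockFun X F g) : BlockFun X F fun ω => f ω + g ω :=
  ⟨hf.measurable.add hg.measurable, hf.bdd.add hg.bdd⟩

lemma sub (hf : BlockFun X F f) (hg : BlockFun X F g) : BlockFun X F fun ω => f ω - g ω :=
  ⟨hf.measurable.sub hg.measurable, hf.bdd.sub hg.bdd⟩

lemma abs (hf : BlockFun X F f) : BlockFun X F fun ω => |f ω| :=
  ⟨continuous_abs.measurable.comp hf.measurable, hf.bdd.abs⟩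

end BlockFun

end FamilySigma

section LocalDependence

variable {Ω ι : Type*} [MeasurableSpace Ω] [Fintype ι]

/-- The sum `∑ i, E |X i| ^ 3`, which measures the size of the errors for bounded summands. -/
noncomputable def sumThirdMoments (μ : Measure Ω) (X : ι → Ω → ℝ) : ℝ :=
  ∑ i, ∫ ω, |X i ω| ^ 3 ∂μ

lemma sumThirdMoments_nonneg {μ : Measure Ω} {X : ι → Ω → ℝ} : 0 ≤ sumThirdMoments μ X :=
  Finset.sum_nonneg fun _ _ => integral_nonneg fun _ => by positivity

variable [DecidableEq ι]

/-- Local dependence of centred variables with nested neighbourhoods `A i ⊆ B i ⊆ C i` (the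
sets `A_i`, `B_i*` and `C_i*` of the theorem), in terms of generated σ-algebras. The number `κ`
bounds the sizes of the sets `C i` and of the sets `{j | i ∈ C j}`. -/
structure LocalDependence (μ : Measure Ω) (X : ι → Ω → ℝ) (A B C : ι → Finset ι) (κ : ℝ) :
    Prop where
  measurable : ∀ i, Measurable (X i)
  integral_eq_zero : ∀ i, ∫ ω, X i ω ∂μ = 0
  mem_A : ∀ i, i ∈ A i
  A_subset_B : ∀ i, A i ⊆ B i
  B_subset_C : ∀ i, B i ⊆ C i
  one_le : 1 ≤ κ
  card_C_le : ∀ i, ((C i).card : ℝ) ≤ κ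
  card_mem_C_le : ∀ i, ((Finset.univ.filter fun j => i ∈ C j).card : ℝ) ≤ κ
  indep_self : ∀ i, Indep (familySigma X {i}) (familySigma X {j | j ∉ A i}) μ
  indep_A : ∀ i, Indep (familySigma X (A i)) (familySigma X {j | ∃ l ∉ B i, j ∈ A l}) μ
  indep_B : ∀ i, Indep (familySigma X (B i)) (familySigma X {j | ∃ l ∉ C i, j ∈ A l}) μ

/-- Local dependence of variables bounded by `τ`. For these one also needs that `X l` with
`l ∉ C i` is independent of everything outside `A l` together with the block `B i`; truncated
variables inherit this from the moment assumptions. -/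
structure BddLocalDependence (μ : Measure Ω) (X : ι → Ω → ℝ) (A B C : ι → Finset ι) (κ τ : ℝ) :
    Prop extends LocalDependence μ X A B C κ where
  abs_summand_le : ∀ i ω, |X i ω| ≤ τ
  indep_far : ∀ i, ∀ l ∉ C i,
    Indep (familySigma X {l}) (familySigma X {j | j ∉ A l ∨ j ∈ B i}) μ

/-- The derivative bound that Stein's method for `W` needs: `φ` is Lipschitz in mean, with constant
`K`, along shifts of `W` by at most `r` that depend on a single block `B i`, under weights depending
on the same block. -/
def MeanLipschitz (μ : Measure Ω) (X : ι → Ω → ℝ) (B : ι → Finset ι) (r K : ℝ) (φ : ℝ → ℝ) : Prop :=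
  ∀ (i : ι) (ξ v₁ v₂ : Ω → ℝ), BlockFun X (B i) ξ → BlockFun X (B i) v₁ → BlockFun X (B i) v₂ →
    (∀ ω, 0 ≤ ξ ω) → (∀ ω, |v₁ ω| ≤ r) → (∀ ω, |v₂ ω| ≤ r) →
    ∫ ω, ξ ω * |φ (blockSum X Finset.univ ω - v₁ ω) - φ (blockSum X Finset.univ ω - v₂ ω)| ∂μ ≤
      K * ∫ ω, ξ ω * |v₁ ω - v₂ ω| ∂μ

variable {μ : Measure Ω} {X : ι → Ω → ℝ} {A B C : ι → Finset ι} {κ τ : ℝ}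

local notation "W" => blockSum X Finset.univ

lemma LocalDependence.A_subset_C (h : LocalDependence μ X A B C κ) (i : ι) : A i ⊆ C i :=
  (h.A_subset_B i).trans (h.B_subset_C i)

namespace BddLocalDependence

variable (h : BddLocalDependence μ X A B C κ τ)
include h

lemma bdd (i : ι) : BddMeasurable (X i) := ⟨h.measurable i, τ, h.abs_summand_le i⟩

lemma bdd_blockSum (F : Finset ι) : BddMeasurable (blockSum X F) := .sum F h.bdd

lemma blockFun {F : Finset ι} {j : ι} (hj : j ∈ F) : BlockFun X F (X j) :=
  ⟨measurable_familySigma (Finset.mem_coe.2 hj), h.bdd j⟩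

lemma blockFun_blockSum {F G : Finset ι} (hG : G ⊆ F) : BlockFun X F (blockSum X G) :=
  ⟨measurable_blockSum fun _ hj => hG hj, h.bdd_blockSum G⟩

lemma sum_abs_C_le (i : ι) (ω : Ω) : ∑ j ∈ C i, |X j ω| ≤ κ * τ := by
  calc ∑ j ∈ C i, |X j ω| ≤ (C i).card * τ :=
        (Finset.sum_le_card_nsmul _ _ _ fun j _ => h.abs_summand_le j ω).trans_eq (nsmul_eq_mul _ _)
    _ ≤ κ * τ :=
        mul_le_mul_of_nonneg_right (h.card_C_le i) ((abs_nonneg _).trans (h.abs_summand_le i ω))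

lemma abs_blockSum_le {i : ι} {F : Finset ι} (hF : F ⊆ C i) (ω : Ω) : |blockSum X F ω| ≤ κ * τ :=
  (abs_blockSum_le_of_subset hF ω).trans (h.sum_abs_C_le i ω)

lemma integral_mul_eq_zero (i : ι) {g : Ω → ℝ} (hg : Measurable[familySigma X {j | j ∉ A i}] g) :
    ∫ ω, X i ω * g ω ∂μ = 0 := by
  rw [integral_mul_of_indep (h.indep_self i) (familySigma_le h.measurable)
    (familySigma_le h.measurable) (measurable_familySigma rfl) hg, h.integral_eq_zero i, zero_mul]

lemma measurable_blockSum_far (F : Finset ι) :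
    Measurable[familySigma X {j | ∃ l ∉ F, j ∈ A l}] fun ω => W ω - blockSum X F ω := by
  simp only [blockSum_univ_sub_blockSum]
  exact measurable_blockSum fun j hj => ⟨j, Finset.mem_compl.1 hj, h.mem_A j⟩

variable [IsProbabilityMeasure μ]

lemma sum_integral_mul_blockSum_A :
    ∑ i, ∫ ω, X i ω * blockSum X (A i) ω ∂μ = ∫ ω, W ω ^ 2 ∂μ := by
  have hsq (ω : Ω) : W ω ^ 2 = ∑ i, X i ω * W ω := by
    rw [← Finset.sum_mul, sq]
    rfl
  simp only [hsq]
  rw [BddMeasurable.integral_sum _ fun i => (h.bdd i).mul (h.bdd_blockSum _)]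
  refine Finset.sum_congr rfl fun i _ => ?_
  have hzero : ∫ ω, X i ω * (W ω - blockSum X (A i) ω) ∂μ = 0 := by
    simp only [blockSum_univ_sub_blockSum]
    exact h.integral_mul_eq_zero i (measurable_blockSum fun j hj => Finset.mem_compl.1 hj)
  simp only [mul_sub] at hzero
  rw [integral_sub ((h.bdd i).mul (h.bdd_blockSum _)).integrable
    ((h.bdd i).mul (h.bdd_blockSum _)).integrable] at hzero
  linarith

lemma integral_sum_abs_pow_three : ∫ ω, ∑ i, |X i ω| ^ 3 ∂μ = sumThirdMoments μ X :=
  BddMeasurable.integral_sum _ fun i => (h.bdd i).abs.pow 3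

variable {F H : ι → Finset ι}

lemma sum_integral_abs_mul_le (hF : ∀ i, F i ⊆ C i) (hH : ∀ i, H i ⊆ C i) :
    ∑ i, ∫ ω, |X i ω * blockSum X (F i) ω| * |blockSum X (H i) ω| ∂μ ≤
      κ ^ 2 * sumThirdMoments μ X := by
  have hbdd (i : ι) : BddMeasurable fun ω =>
      |X i ω * blockSum X (F i) ω| * |blockSum X (H i) ω| :=
    ((h.bdd i).mul (h.bdd_blockSum _)).abs.mul (h.bdd_blockSum _).abs
  rw [← BddMeasurable.integral_sum _ hbdd, ← h.integral_sum_abs_pow_three, ← integral_const_mul]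
  refine (BddMeasurable.sum _ hbdd).integral_mono
    ((BddMeasurable.const _).mul (.sum _ fun i => (h.bdd i).abs.pow 3)) fun ω => ?_
  calc ∑ i, |X i ω * blockSum X (F i) ω| * |blockSum X (H i) ω|
      ≤ ∑ i, |X i ω| * (∑ j ∈ C i, |X j ω|) * ∑ k ∈ C i, |X k ω| := by
        refine Finset.sum_le_sum fun i _ => ?_
        rw [abs_mul]
        gcongr
        exacts [abs_blockSum_le_of_subset (hF i) ω, abs_blockSum_le_of_subset (hH i) ω]
    _ ≤ κ ^ 2 * ((2 * ∑ i, |X i ω| ^ 3 + ∑ i, |X i ω| ^ 3) / 3) :=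
        sum_mul_sum_mul_sum_le (zero_le_one.trans h.one_le) h.card_C_le h.card_mem_C_le
          (fun _ => abs_nonneg _) fun _ => abs_nonneg _
    _ = κ ^ 2 * ∑ i, |X i ω| ^ 3 := by ring

lemma sum_integral_abs_mul_integral_abs_le (hF : ∀ i, F i ⊆ C i) (hH : ∀ i, H i ⊆ C i) :
    ∑ i, (∫ ω, |X i ω * blockSum X (F i) ω| ∂μ) * ∫ ω, |blockSum X (H i) ω| ∂μ ≤
      κ ^ 2 * sumThirdMoments μ X := by
  set e : ι → ℝ := fun i => ∫ ω, |X i ω| ∂μ with he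
  have he_nonneg (i : ι) : 0 ≤ e i := integral_nonneg fun ω => abs_nonneg _
  have he_cube (i : ι) : e i ^ 3 ≤ ∫ ω, |X i ω| ^ 3 ∂μ := integral_abs_pow_three_le (h.bdd i)
  have hsum (i : ι) : BddMeasurable fun ω => ∑ j ∈ C i, |X j ω| := .sum _ fun j => (h.bdd j).abs
  have hle (i : ι) : ∫ ω, |blockSum X (H i) ω| ∂μ ≤ ∑ k ∈ C i, e k := by
    rw [he, ← BddMeasurable.integral_sum _ fun i => (h.bdd i).abs]
    exact (h.bdd_blockSum _).abs.integral_mono (hsum i) (abs_blockSum_le_of_subset (hH i))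
  have hbdd (i : ι) : BddMeasurable fun ω => |X i ω| * (∑ j ∈ C i, |X j ω|) * ∑ k ∈ C i, e k :=
    ((h.bdd i).abs.mul (hsum i)).mul (.const _)
  have hcubes : BddMeasurable fun ω => 2 * ∑ i, |X i ω| ^ 3 :=
    (BddMeasurable.const _).mul (.sum _ fun i => (h.bdd i).abs.pow 3)
  calc ∑ i, (∫ ω, |X i ω * blockSum X (F i) ω| ∂μ) * ∫ ω, |blockSum X (H i) ω| ∂μ
      ≤ ∑ i, ∫ ω, |X i ω| * (∑ j ∈ C i, |X j ω|) * ∑ k ∈ C i, e k ∂μ := by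
        refine Finset.sum_le_sum fun i _ => ?_
        rw [integral_mul_const]
        refine mul_le_mul (((h.bdd i).mul (h.bdd_blockSum _)).abs.integral_mono
          ((h.bdd i).abs.mul (hsum i)) fun ω => ?_) (hle i)
          (integral_nonneg fun ω => abs_nonneg _) (integral_nonneg fun ω => by positivity)
        rw [abs_mul]
        exact mul_le_mul_of_nonneg_left (abs_blockSum_le_of_subset (hF i) ω) (abs_nonneg _)
    _ = ∫ ω, ∑ i, |X i ω| * (∑ j ∈ C i, |X j ω|) * ∑ k ∈ C i, e k ∂μ :=
        (BddMeasurable.integral_sum _ hbdd).symm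
    _ ≤ ∫ ω, κ ^ 2 * ((2 * ∑ i, |X i ω| ^ 3 + ∑ i, e i ^ 3) / 3) ∂μ :=
        (BddMeasurable.sum _ hbdd).integral_mono
          ((BddMeasurable.const _).mul ((hcubes.add (.const _)).div_const 3)) fun ω =>
            sum_mul_sum_mul_sum_le (zero_le_one.trans h.one_le) h.card_C_le h.card_mem_C_le
              (fun _ => abs_nonneg _) he_nonneg
    _ = κ ^ 2 * ((2 * sumThirdMoments μ X + ∑ i, e i ^ 3) / 3) := by
        rw [integral_const_mul, integral_div, integral_add hcubes.integrable
          (integrable_const _), integral_const_mul, h.integral_sum_abs_pow_three,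
          integral_const, probReal_univ, one_smul]
    _ ≤ κ ^ 2 * ((2 * sumThirdMoments μ X + sumThirdMoments μ X) / 3) := by
        gcongr
        exact Finset.sum_le_sum fun i _ => he_cube i
    _ = κ ^ 2 * sumThirdMoments μ X := by ring

lemma sum_integral_sq_mul_le (hF : ∀ i, F i ⊆ C i) :
    ∑ i, ∫ ω, X i ω ^ 2 * |blockSum X (F i) ω| ∂μ ≤ κ * sumThirdMoments μ X := by
  have hbdd (i : ι) : BddMeasurable fun ω => X i ω ^ 2 * |blockSum X (F i) ω| :=
    ((h.bdd i).pow 2).mul (h.bdd_blockSum _).abs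
  rw [← BddMeasurable.integral_sum _ hbdd, ← h.integral_sum_abs_pow_three, ← integral_const_mul]
  refine (BddMeasurable.sum _ hbdd).integral_mono
    ((BddMeasurable.const _).mul (.sum _ fun i => (h.bdd i).abs.pow 3)) fun ω => ?_
  refine (Finset.sum_le_sum fun i _ => ?_).trans
    (sum_sq_mul_sum_le h.card_C_le h.card_mem_C_le fun i => abs_nonneg (X i ω))
  rw [sq_abs]
  exact mul_le_mul_of_nonneg_left (abs_blockSum_le_of_subset (hF i) ω) (sq_nonneg _)

end BddLocalDependence

end LocalDependence

section Stein

lemma sub_eq_mul_intervalIntegral {f φ : ℝ → ℝ} (hφ : Continuous φ)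
    (hf : ∀ w, HasDerivAt f (φ w) w) (w y : ℝ) :
    f w - f (w - y) = y * ∫ s in (0 : ℝ)..1, φ (w - y * s) := by
  rw [intervalIntegral.mul_integral_comp_sub_mul,
    intervalIntegral.integral_eq_sub_of_hasDerivAt (fun x _ => hf x) (hφ.intervalIntegrable _ _),
    mul_one, mul_zero, sub_zero]

lemma continuous_of_hasDerivAt {f φ : ℝ → ℝ} (hf : ∀ w, HasDerivAt f (φ w) w) : Continuous f :=
  continuous_iff_continuousAt.2 fun w => (hf w).continuousAt

lemma abs_mul_le_abs_of_mem_Ioc {s : ℝ} (hs : s ∈ Set.Ioc (0 : ℝ) 1) (y : ℝ) : |y * s| ≤ |y| := by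
  rw [abs_mul, abs_of_pos hs.1]
  exact mul_le_of_le_one_right (abs_nonneg y) hs.2

variable {Ω ι : Type*} [MeasurableSpace Ω] [Fintype ι] [DecidableEq ι] {μ : Measure Ω}
  [IsProbabilityMeasure μ] {X : ι → Ω → ℝ} {A B C : ι → Finset ι} {κ τ K : ℝ} {f φ : ℝ → ℝ}

local notation "W" => blockSum X Finset.univ

namespace BddLocalDependence

variable (h : BddLocalDependence μ X A B C κ τ)
include h

lemma integral_mul_comp_sub_eq (hφ : Continuous φ) (hf : ∀ w, HasDerivAt f (φ w) w) (i : ι) :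
    ∫ ω, X i ω * f (W ω) ∂μ -
        ∫ ω, X i ω * blockSum X (A i) ω * φ (W ω - blockSum X (B i) ω) ∂μ =
      ∫ ω, (∫ s in (0 : ℝ)..1, X i ω * blockSum X (A i) ω *
        (φ (W ω - blockSum X (A i) ω * s) - φ (W ω - blockSum X (B i) ω))) ∂μ := by
  have hfc := continuous_of_hasDerivAt hf
  have hW := h.bdd_blockSum Finset.univ
  have hWA : BddMeasurable fun ω => f (W ω - blockSum X (A i) ω) :=
    (hW.sub (h.bdd_blockSum _)).comp_continuous hfc
  have hzero : ∫ ω, X i ω * f (W ω - blockSum X (A i) ω) ∂μ = 0 := by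
    simp only [blockSum_univ_sub_blockSum]
    exact h.integral_mul_eq_zero i (hfc.measurable.comp
      (measurable_blockSum fun j hj => Finset.mem_compl.1 hj))
  have hsub : ∫ ω, X i ω * f (W ω) ∂μ =
      ∫ ω, (X i ω * f (W ω) - X i ω * f (W ω - blockSum X (A i) ω)) ∂μ := by
    rw [integral_sub ((h.bdd i).mul (hW.comp_continuous hfc)).integrable
      ((h.bdd i).mul hWA).integrable, hzero, sub_zero]
  rw [hsub, ← integral_sub
      (((h.bdd i).mul (hW.comp_continuous hfc)).sub ((h.bdd i).mul hWA)).integrable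
      (((h.bdd i).mul (h.bdd_blockSum _)).mul
        ((hW.sub (h.bdd_blockSum _)).comp_continuous hφ)).integrable]
  refine integral_congr_ae (.of_forall fun ω => ?_)
  dsimp only
  rw [← mul_sub, sub_eq_mul_intervalIntegral hφ hf, intervalIntegral.integral_const_mul,
    intervalIntegral.integral_sub (Continuous.intervalIntegrable (by fun_prop) _ _)
      intervalIntegrable_const, intervalIntegral.integral_const, sub_zero, one_smul]
  ring

lemma abs_integral_mul_comp_sub_le (hφ : Continuous φ) (hf : ∀ w, HasDerivAt f (φ w) w)
    (hK : 0 ≤ K) (H : MeanLipschitz μ X B (κ * τ) K φ) (i : ι) :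
    |∫ ω, X i ω * f (W ω) ∂μ -
        ∫ ω, X i ω * blockSum X (A i) ω * φ (W ω - blockSum X (B i) ω) ∂μ| ≤
      K * (∫ ω, |X i ω * blockSum X (A i) ω| * |blockSum X (A i) ω| ∂μ +
        ∫ ω, |X i ω * blockSum X (A i) ω| * |blockSum X (B i) ω| ∂μ) := by
  rw [h.integral_mul_comp_sub_eq hφ hf i]
  set Y := blockSum X (A i)
  set V := blockSum X (B i)
  have hW := h.bdd_blockSum Finset.univ
  have hYb : BlockFun X (B i) Y := h.blockFun_blockSum (h.A_subset_B i)
  have hVb : BlockFun X (B i) V := h.blockFun_blockSum subset_rfl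
  have hξ : BlockFun X (B i) fun ω => |X i ω * Y ω| :=
    ((h.blockFun (h.A_subset_B i (h.mem_A i))).mul hYb).abs
  obtain ⟨P, hP⟩ := hξ.bdd.exists_abs_le
  obtain ⟨M, hM⟩ := hW.exists_abs_le
  obtain ⟨Q, hQ⟩ := (isCompact_Icc (a := -(M + κ * τ))
    (b := M + κ * τ)).exists_bound_of_continuousOn hφ.continuousOn
  have hφle {v ω} (hv : |v| ≤ κ * τ) : |φ (W ω - v)| ≤ Q :=
    hQ _ (abs_le.1 ((abs_sub _ _).trans (add_le_add (hM ω) hv)))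
  have hYs {s : ℝ} (hs : s ∈ Set.Ioc (0 : ℝ) 1) (ω : Ω) : |Y ω * s| ≤ κ * τ :=
    (abs_mul_le_abs_of_mem_Ioc hs _).trans (h.abs_blockSum_le (h.A_subset_C i) ω)
  have hmeas : Measurable fun q : ℝ × Ω =>
      X i q.2 * Y q.2 * (φ (W q.2 - Y q.2 * q.1) - φ (W q.2 - V q.2)) := by
    have := hφ.measurable
    have := h.measurable i
    have := hYb.bdd.measurable
    have := hVb.bdd.measurable
    have := hW.measurable
    fun_prop
  refine (abs_integral_intervalIntegral_le zero_le_one hmeas (K := P * (Q + Q)) (fun s hs ω => ?_)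
    fun s hs => ?_).trans_eq (by rw [sub_zero, mul_one])
  · rw [abs_mul, ← abs_abs (X i ω * Y ω)]
    exact mul_le_mul (hP ω) ((abs_sub _ _).trans
      (add_le_add (hφle (hYs hs ω)) (hφle (h.abs_blockSum_le (h.B_subset_C i) ω))))
      (abs_nonneg _) ((abs_nonneg _).trans (hP ω))
  · simp only [abs_mul (X i _ * Y _)]
    refine (H i _ _ V hξ (hYb.mul (.const s)) hVb (fun _ => abs_nonneg _) (hYs hs)
      (h.abs_blockSum_le (h.B_subset_C i))).trans ?_
    rw [← integral_add (hξ.bdd.mul hYb.abs.bdd).integrable (hξ.bdd.mul hVb.abs.bdd).integrable]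
    refine mul_le_mul_of_nonneg_left ((hξ.bdd.mul ((hYb.bdd.mul (.const s)).sub hVb.bdd).abs
      ).integral_mono ((hξ.bdd.mul hYb.abs.bdd).add (hξ.bdd.mul hVb.abs.bdd)) fun ω => ?_) hK
    rw [← mul_add]
    exact mul_le_mul_of_nonneg_left ((abs_sub _ _).trans
      (add_le_add_left (abs_mul_le_abs_of_mem_Ioc hs _) _)) (abs_nonneg _)

lemma abs_integral_mul_comp_sub_mul_integral_le (hφ : Continuous φ)
    (H : MeanLipschitz μ X B (κ * τ) K φ) (i : ι) :
    |∫ ω, X i ω * blockSum X (A i) ω * φ (W ω - blockSum X (B i) ω) ∂μ -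
        (∫ ω, X i ω * blockSum X (A i) ω ∂μ) * ∫ ω, φ (W ω) ∂μ| ≤
      K * ((∫ ω, |X i ω * blockSum X (A i) ω| ∂μ) * ∫ ω, |blockSum X (B i) ω| ∂μ) := by
  have hW := h.bdd_blockSum Finset.univ
  rw [integral_mul_of_indep (f := fun ω => X i ω * blockSum X (A i) ω)
      (g := fun ω => φ (W ω - blockSum X (B i) ω)) (h.indep_A i)
      (familySigma_le h.measurable) (familySigma_le h.measurable)
      ((measurable_familySigma (h.mem_A i)).mul (measurable_blockSum fun j hj => hj))
      (hφ.measurable.comp (h.measurable_blockSum_far (B i))),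
    ← mul_sub, abs_mul, ← integral_sub ((hW.sub (h.bdd_blockSum _)).comp_continuous hφ).integrable
      (hW.comp_continuous hφ).integrable]
  have hshift := H i (fun _ => 1) (blockSum X (B i)) (fun _ => 0) (.const 1)
    (h.blockFun_blockSum subset_rfl) (.const 0) (fun _ => zero_le_one)
    (h.abs_blockSum_le (h.B_subset_C i))
    fun ω => abs_zero.trans_le ((abs_nonneg _).trans (h.abs_blockSum_le (h.B_subset_C i) ω))
  simp only [one_mul, sub_zero] at hshift
  calc _ ≤ (∫ ω, |X i ω * blockSum X (A i) ω| ∂μ) * (K * ∫ ω, |blockSum X (B i) ω| ∂μ) :=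
        mul_le_mul abs_integral_le_integral_abs (abs_integral_le_integral_abs.trans hshift)
          (abs_nonneg _) (integral_nonneg fun _ => abs_nonneg _)
    _ = _ := by ring

theorem abs_integral_mul_comp_sub_integral_sq_mul_le (hφ : Continuous φ)
    (hf : ∀ w, HasDerivAt f (φ w) w) (hK : 0 ≤ K) (H : MeanLipschitz μ X B (κ * τ) K φ) :
    |∫ ω, W ω * f (W ω) ∂μ - (∫ ω, W ω ^ 2 ∂μ) * ∫ ω, φ (W ω) ∂μ| ≤
      3 * K * (κ ^ 2 * sumThirdMoments μ X) := by
  have hsum : ∫ ω, W ω * f (W ω) ∂μ = ∑ i, ∫ ω, X i ω * f (W ω) ∂μ := by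
    rw [← BddMeasurable.integral_sum _ fun i => (h.bdd i).mul
      ((h.bdd_blockSum _).comp_continuous (continuous_of_hasDerivAt hf))]
    simp only [← Finset.sum_mul]
    rfl
  rw [hsum, ← h.sum_integral_mul_blockSum_A, Finset.sum_mul, ← Finset.sum_sub_distrib]
  refine (Finset.abs_sum_le_sum_abs _ _).trans ((Finset.sum_le_sum fun i _ =>
    (abs_sub_le _ (∫ ω, X i ω * blockSum X (A i) ω * φ (W ω - blockSum X (B i) ω) ∂μ) _).trans
      (add_le_add (h.abs_integral_mul_comp_sub_le hφ hf hK H i)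
        (h.abs_integral_mul_comp_sub_mul_integral_le hφ H i))).trans ?_)
  rw [Finset.sum_add_distrib, ← Finset.mul_sum, Finset.sum_add_distrib, ← Finset.mul_sum, ← mul_add]
  have hAA := h.sum_integral_abs_mul_le h.A_subset_C h.A_subset_C
  have hAB := h.sum_integral_abs_mul_le h.A_subset_C h.B_subset_C
  have hA_B := h.sum_integral_abs_mul_integral_abs_le h.A_subset_C h.B_subset_C
  linarith [mul_le_mul_of_nonneg_left (add_le_add (add_le_add hAA hAB) hA_B) hK]

end BddLocalDependence

end Stein

section Tent

/-- The tent function with slopes `±1` supported on `[y / 2, y]`. Its primitive is the test function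
that recursively bounds `P(W ≥ y)` through `P(W ≥ y / 2)`. -/
noncomputable def tent (y w : ℝ) : ℝ := max 0 (min (w - y / 2) (y - w))

/-- The primitive of `tent y` that vanishes at `0`. -/
noncomputable def tentPrimitive (y w : ℝ) : ℝ := ∫ t in (0 : ℝ)..w, tent y t

variable {y w : ℝ}

lemma continuous_tent (y : ℝ) : Continuous (tent y) := by
  unfold tent
  fun_prop

lemma tent_nonneg (y w : ℝ) : 0 ≤ tent y w := le_max_left _ _

lemma abs_tent_sub_tent_le (y v w : ℝ) : |tent y v - tent y w| ≤ |v - w| := by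
  unfold tent
  rw [max_comm 0, max_comm 0]
  refine (abs_max_sub_max_le_abs _ _ _).trans
    ((abs_min_sub_min_le_max _ _ _ _).trans (max_le (le_of_eq ?_) (le_of_eq ?_)))
  · rw [sub_sub_sub_cancel_right]
  · rw [sub_sub_sub_cancel_left, abs_sub_comm]

lemma tent_eq_zero (hw : w ≤ y / 2) : tent y w = 0 :=
  max_eq_left ((min_le_left _ _).trans (sub_nonpos.2 hw))

lemma tent_le (hy : 0 < y) (w : ℝ) : tent y w ≤ y / 4 * ind (Set.Ici (y / 2)) w := by
  by_cases hw : y / 2 ≤ w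
  · rw [ind_of_mem (Set.mem_Ici.2 hw), mul_one]
    refine max_le (by positivity) ?_
    rcases le_total w (3 * y / 4) with hleft | hright
    · exact (min_le_left _ _).trans (by linarith)
    · exact (min_le_right _ _).trans (by linarith)
  · rw [ind_of_notMem (Set.mem_Ici.not.2 hw), mul_zero, tent_eq_zero (not_le.1 hw).le]

lemma hasDerivAt_tentPrimitive (y w : ℝ) : HasDerivAt (tentPrimitive y) (tent y w) w :=
  (continuous_tent y).integral_hasStrictDerivAt 0 w |>.hasDerivAt

lemma monotone_tentPrimitive (y : ℝ) : Monotone (tentPrimitive y) :=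
  monotone_of_deriv_nonneg (fun w => (hasDerivAt_tentPrimitive y w).differentiableAt) fun w =>
    (tent_nonneg y w).trans_eq (hasDerivAt_tentPrimitive y w).deriv.symm

lemma tentPrimitive_eq_zero (hy : 0 < y) (hw : w ≤ y / 2) : tentPrimitive y w = 0 := by
  unfold tentPrimitive
  rw [intervalIntegral.integral_congr (g := fun _ => (0 : ℝ)) fun t ht => ?_,
    intervalIntegral.integral_zero]
  rcases Set.mem_uIcc.1 ht with ⟨_, ht⟩ | ⟨_, ht⟩ <;> exact tent_eq_zero (by linarith)

lemma sq_div_le_tentPrimitive_self (hy : 0 < y) : y ^ 2 / 32 ≤ tentPrimitive y y := by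
  have hinteg (a b : ℝ) : IntervalIntegrable (tent y) volume a b :=
    (continuous_tent y).intervalIntegrable a b
  have hsplit : tentPrimitive y (5 * y / 8) + (∫ t in (5 * y / 8)..(7 * y / 8), tent y t) =
      tentPrimitive y (7 * y / 8) :=
    intervalIntegral.integral_add_adjacent_intervals (hinteg _ _) (hinteg _ _)
  have hleft : 0 ≤ tentPrimitive y (5 * y / 8) :=
    intervalIntegral.integral_nonneg (by linarith) fun t _ => tent_nonneg y t
  have hmiddle := intervalIntegral.integral_mono_on (a := 5 * y / 8) (b := 7 * y / 8)
    (f := fun _ => y / 8) (by linarith) intervalIntegrable_const (hinteg _ _) fun t ht =>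
      le_max_of_le_right (le_min (by linarith [ht.1]) (by linarith [ht.2]))
  rw [intervalIntegral.integral_const, smul_eq_mul] at hmiddle
  linarith [monotone_tentPrimitive y (by linarith : 7 * y / 8 ≤ y)]

lemma mul_ind_le_mul_tentPrimitive (hy : 0 < y) (w : ℝ) :
    y ^ 3 / 32 * ind (Set.Ici y) w ≤ w * tentPrimitive y w := by
  have hy_le := sq_div_le_tentPrimitive_self hy
  by_cases hw : y ≤ w
  · rw [ind_of_mem (Set.mem_Ici.2 hw), mul_one]
    calc y ^ 3 / 32 = y * (y ^ 2 / 32) := by ring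
      _ ≤ w * tentPrimitive y w :=
        mul_le_mul hw (hy_le.trans (monotone_tentPrimitive y hw)) (by positivity) (by linarith)
  · rw [ind_of_notMem (Set.mem_Ici.not.2 hw), mul_zero]
    rcases le_total w (y / 2) with hleft | hright
    · rw [tentPrimitive_eq_zero hy hleft, mul_zero]
    · exact mul_nonneg (by linarith) ((tentPrimitive_eq_zero hy le_rfl).symm.trans_le
        (monotone_tentPrimitive y hright))

end Tent

section Tail

variable {Ω ι : Type*} [MeasurableSpace Ω] [Fintype ι] [DecidableEq ι] {μ : Measure Ω}
  {X : ι → Ω → ℝ} {A B C : ι → Finset ι} {κ τ : ℝ}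

local notation "W" => blockSum X Finset.univ

namespace BddLocalDependence

variable (h : BddLocalDependence μ X A B C κ τ)
include h

lemma bdd_ind_Ici (y : ℝ) : BddMeasurable fun ω => ind (Set.Ici y) (W ω) :=
  .ind (h.bdd_blockSum _).measurable measurableSet_Ici

variable [IsProbabilityMeasure μ]

lemma meanLipschitz_of_lipschitz {φ : ℝ → ℝ} (hφ : Continuous φ)
    (hlip : ∀ v w, |φ v - φ w| ≤ |v - w|) (r : ℝ) : MeanLipschitz μ X B r 1 φ := by
  intro i ξ v₁ v₂ hξ hv₁ hv₂ hξ_nonneg _ _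
  have hW := h.bdd_blockSum Finset.univ
  rw [one_mul]
  refine (hξ.bdd.mul (((hW.sub hv₁.bdd).comp_continuous hφ).sub
    ((hW.sub hv₂.bdd).comp_continuous hφ)).abs).integral_mono
    (hξ.bdd.mul (hv₁.bdd.sub hv₂.bdd).abs) fun ω => mul_le_mul_of_nonneg_left ?_ (hξ_nonneg ω)
  exact (hlip _ _).trans_eq (by rw [sub_sub_sub_cancel_left, abs_sub_comm])

lemma integral_ind_Ici_le_half {y : ℝ} (hy : 0 < y) :
    ∫ ω, ind (Set.Ici y) (W ω) ∂μ ≤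
      8 / y ^ 2 * (∫ ω, W ω ^ 2 ∂μ) * (∫ ω, ind (Set.Ici (y / 2)) (W ω) ∂μ) +
        96 * (κ ^ 2 * sumThirdMoments μ X) / y ^ 3 := by
  have hW := h.bdd_blockSum Finset.univ
  have hlower : y ^ 3 / 32 * ∫ ω, ind (Set.Ici y) (W ω) ∂μ ≤
      ∫ ω, W ω * tentPrimitive y (W ω) ∂μ := by
    rw [← integral_const_mul]
    exact ((BddMeasurable.const _).mul (h.bdd_ind_Ici y)).integral_mono
      (hW.mul (hW.comp_continuous (continuous_of_hasDerivAt (hasDerivAt_tentPrimitive y))))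
      fun ω => mul_ind_le_mul_tentPrimitive hy _
  have hupper : ∫ ω, tent y (W ω) ∂μ ≤ y / 4 * ∫ ω, ind (Set.Ici (y / 2)) (W ω) ∂μ := by
    rw [← integral_const_mul]
    exact (hW.comp_continuous (continuous_tent y)).integral_mono
      ((BddMeasurable.const _).mul (h.bdd_ind_Ici _)) fun ω => tent_le hy _
  have hstein := (abs_le.1 (h.abs_integral_mul_comp_sub_integral_sq_mul_le (continuous_tent y)
    (hasDerivAt_tentPrimitive y) zero_le_one (h.meanLipschitz_of_lipschitz (continuous_tent y)
      (abs_tent_sub_tent_le y) _))).2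
  have hsq : 0 ≤ ∫ ω, W ω ^ 2 ∂μ := integral_nonneg fun ω => sq_nonneg _
  calc ∫ ω, ind (Set.Ici y) (W ω) ∂μ
      = y ^ 3 / 32 * (∫ ω, ind (Set.Ici y) (W ω) ∂μ) * (32 / y ^ 3) := by field_simp
    _ ≤ ((∫ ω, W ω ^ 2 ∂μ) * (y / 4 * ∫ ω, ind (Set.Ici (y / 2)) (W ω) ∂μ) +
          3 * (κ ^ 2 * sumThirdMoments μ X)) * (32 / y ^ 3) := by
        refine mul_le_mul_of_nonneg_right ?_ (by positivity)
        linarith [mul_le_mul_of_nonneg_left hupper hsq]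
    _ = _ := by
        field_simp
        ring

lemma integral_ind_Ici_div_le {Z η c : ℝ} (hZ : 0 < Z) (hsq : ∫ ω, W ω ^ 2 ∂μ ≤ 2)
    (hβ : κ ^ 2 * sumThirdMoments μ X ≤ η * Z ^ 3) (hc : 0 < c) :
    ∫ ω, ind (Set.Ici (Z / c)) (W ω) ∂μ ≤
      16 * c ^ 2 * (Z ^ 2)⁻¹ * (∫ ω, ind (Set.Ici (Z / (2 * c))) (W ω) ∂μ) + 96 * c ^ 3 * η := by
  have hnonneg : 0 ≤ ∫ ω, ind (Set.Ici (Z / (2 * c))) (W ω) ∂μ :=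
    integral_nonneg fun ω => ind_nonneg _ _
  have hhalf := h.integral_ind_Ici_le_half (div_pos hZ hc)
  rw [div_div, mul_comm c 2] at hhalf
  calc ∫ ω, ind (Set.Ici (Z / c)) (W ω) ∂μ
      ≤ 8 / (Z / c) ^ 2 * 2 * (∫ ω, ind (Set.Ici (Z / (2 * c))) (W ω) ∂μ) +
          96 * (η * Z ^ 3) / (Z / c) ^ 3 := hhalf.trans (by gcongr)
    _ = _ := by
        field_simp
        ring

lemma integral_ind_Ici_le {Z η y : ℝ} (hZ : 1 ≤ Z) (hsq : ∫ ω, W ω ^ 2 ∂μ ≤ 2)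
    (hβ : κ ^ 2 * sumThirdMoments μ X ≤ η * Z ^ 3) (hη : 0 ≤ η) (hy : Z / 16 ≤ y) :
    ∫ ω, ind (Set.Ici y) (W ω) ∂μ ≤ 10 ^ 16 * ((Z ^ 6)⁻¹ + η) := by
  set q := (Z ^ 2)⁻¹ with hq
  have hq_pos : 0 < q := by positivity
  have hq_le : q ≤ 1 := inv_le_one_of_one_le₀ (one_le_pow₀ hZ)
  have hrec {c : ℝ} (hc : 0 < c) := h.integral_ind_Ici_div_le (by linarith : 0 < Z) hsq hβ hc
  have h128 : ∫ ω, ind (Set.Ici (Z / (2 * 64))) (W ω) ∂μ ≤ 1 :=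
    ((h.bdd_ind_Ici _).integral_mono (.const 1) fun ω => ind_le_one _ _).trans_eq
      (by rw [integral_const, probReal_univ, one_smul])
  have h64 : ∫ ω, ind (Set.Ici (Z / (2 * 32))) (W ω) ∂μ ≤ 65536 * q + 96 * 64 ^ 3 * η := by
    rw [show (2 : ℝ) * 32 = 64 by norm_num]
    linarith [hrec (c := 64) (by norm_num), mul_le_mul_of_nonneg_left h128 hq_pos.le]
  have h32 : ∫ ω, ind (Set.Ici (Z / (2 * 16))) (W ω) ∂μ ≤
      16384 * 65536 * (q * q) + (16384 * 96 * 64 ^ 3 + 96 * 32 ^ 3) * η := by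
    rw [show (2 : ℝ) * 16 = 32 by norm_num]
    linarith [hrec (c := 32) (by norm_num), mul_le_mul_of_nonneg_left h64 hq_pos.le,
      mul_le_mul_of_nonneg_right hq_le hη]
  calc ∫ ω, ind (Set.Ici y) (W ω) ∂μ
      ≤ ∫ ω, ind (Set.Ici (Z / 16)) (W ω) ∂μ :=
        (h.bdd_ind_Ici _).integral_mono (h.bdd_ind_Ici _) fun ω => ind_le_ind fun hω => hy.trans hω
    _ ≤ 10 ^ 16 * (q * (q * q) + η) := by
        have hq3 : 0 < q * (q * q) := by positivity
        linarith [hrec (c := 16) (by norm_num), mul_le_mul_of_nonneg_left h32 hq_pos.le,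
          mul_le_mul_of_nonneg_right hq_le hη]
    _ = 10 ^ 16 * ((Z ^ 6)⁻¹ + η) := by
        rw [hq]
        field_simp

end BddLocalDependence

end Tail

section SignedInd

/-- The kernel in `t` for which `∫ g t * signedInd y t = ∫ t in (-y)..0, g t`. -/
noncomputable def signedInd (y t : ℝ) : ℝ := ind (Set.Ioc (-y) 0) t - ind (Set.Ioc 0 (-y)) t

lemma signedInd_of_nonneg {y : ℝ} (hy : 0 ≤ y) (t : ℝ) :
    signedInd y t = ind (Set.uIoc (-y) 0) t := by
  rw [signedInd, Set.uIoc_of_le (neg_nonpos.2 hy),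
    ind_of_notMem fun ht : t ∈ Set.Ioc 0 (-y) => by linarith [ht.1, ht.2], sub_zero]

lemma signedInd_of_nonpos {y : ℝ} (hy : y ≤ 0) (t : ℝ) :
    signedInd y t = -ind (Set.uIoc (-y) 0) t := by
  rw [signedInd, Set.uIoc_of_ge (neg_nonneg.2 hy),
    ind_of_notMem fun ht : t ∈ Set.Ioc (-y) 0 => by linarith [ht.1, ht.2], zero_sub]

lemma abs_signedInd (y t : ℝ) : |signedInd y t| = ind (Set.uIoc (-y) 0) t := by
  rcases le_total 0 y with hy | hy
  · rw [signedInd_of_nonneg hy, abs_of_nonneg (ind_nonneg _ _)]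
  · rw [signedInd_of_nonpos hy, abs_neg, abs_of_nonneg (ind_nonneg _ _)]

lemma signedInd_sq (y t : ℝ) : signedInd y t ^ 2 = ind (Set.uIoc (-y) 0) t := by
  rw [← sq_abs, abs_signedInd]
  by_cases ht : t ∈ Set.uIoc (-y) 0
  · rw [ind_of_mem ht, one_pow]
  · rw [ind_of_notMem ht, sq, zero_mul]

lemma abs_mul_ind_uIoc_le (y t : ℝ) :
    |t| * ind (Set.uIoc (-y) 0) t ≤ |y| * ind (Set.uIoc (-y) 0) t := by
  by_cases ht : t ∈ Set.uIoc (-y) 0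
  · refine mul_le_mul_of_nonneg_right ?_ (ind_nonneg _ _)
    rcases Set.mem_uIoc.1 ht with ⟨hleft, hright⟩ | ⟨hleft, hright⟩
    · rw [abs_of_nonpos hright]
      exact (by linarith : -t ≤ y).trans (le_abs_self y)
    · rw [abs_of_pos hleft]
      exact hright.trans (neg_le_abs y)
  · rw [ind_of_notMem ht, mul_zero, mul_zero]

lemma measurable_signedInd : Measurable fun q : ℝ × ℝ => signedInd q.1 q.2 := by
  have hneg : MeasurableSet {q : ℝ × ℝ | q.2 ∈ Set.Ioc (-q.1) 0} :=
    (measurableSet_lt measurable_fst.neg measurable_snd).inter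
      (measurableSet_le measurable_snd measurable_const)
  have hpos : MeasurableSet {q : ℝ × ℝ | q.2 ∈ Set.Ioc 0 (-q.1)} :=
    (measurableSet_lt measurable_const measurable_snd).inter
      (measurableSet_le measurable_snd measurable_fst.neg)
  exact (measurable_ind hneg).sub (measurable_ind hpos)

variable {y R : ℝ}

lemma integral_mul_signedInd (hy : |y| ≤ R) {g : ℝ → ℝ} (hg : Continuous g) :
    ∫ t in (-R)..R, g t * signedInd y t = ∫ t in (-y)..0, g t := by
  obtain ⟨hy_ge, hy_le⟩ := abs_le.1 hy
  have hind {s : Set ℝ} (t : ℝ) : g t * ind s t = s.indicator g t := by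
    rw [ind, ← Set.indicator_mul_right]
    simp only [Pi.one_apply, mul_one]
  have hinteg (a b : ℝ) :
      Integrable ((Set.Ioc a b).indicator g) (volume.restrict (Set.Ioc (-R) R)) :=
    hg.integrableOn_Ioc.integrable.indicator measurableSet_Ioc
  simp only [signedInd, mul_sub, hind]
  rw [intervalIntegral.integral_of_le (by linarith), integral_sub (hinteg _ _) (hinteg _ _),
    setIntegral_indicator measurableSet_Ioc, setIntegral_indicator measurableSet_Ioc,
    Set.inter_eq_right.2 (Set.Ioc_subset_Ioc (by linarith) (by linarith)),
    Set.inter_eq_right.2 (Set.Ioc_subset_Ioc (by linarith) (by linarith)), intervalIntegral]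

lemma integral_ind_uIoc (hy : |y| ≤ R) : ∫ t in (-R)..R, ind (Set.uIoc (-y) 0) t = |y| := by
  rcases le_total 0 y with hy0 | hy0
  · have h := integral_mul_signedInd hy (g := fun _ => 1) continuous_const
    simp only [signedInd_of_nonneg hy0, one_mul] at h
    rw [h, intervalIntegral.integral_const, smul_eq_mul, mul_one, abs_of_nonneg hy0]
    ring
  · have h := integral_mul_signedInd hy (g := fun _ => -1) continuous_const
    simp only [signedInd_of_nonpos hy0, neg_mul_neg, one_mul] at h
    rw [h, intervalIntegral.integral_const, smul_eq_mul, abs_of_nonpos hy0]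
    ring

end SignedInd

section Trapezoid

/-- The trapezoidal function that is `1` on `[x, x + α]`, vanishes outside `[x - α, x + 2 * α]` and
is affine in between. -/
noncomputable def trapezoid (x α w : ℝ) : ℝ :=
  max 0 (min 1 (min ((w - (x - α)) / α) ((x + 2 * α - w) / α)))

/-- The primitive of `trapezoid x α` that vanishes to the left of its support. -/
noncomputable def trapezoidPrimitive (x α w : ℝ) : ℝ := ∫ t in (x - α)..w, trapezoid x α t

variable {x α : ℝ}

lemma continuous_trapezoid (x α : ℝ) : Continuous (trapezoid x α) := by
  unfold trapezoid
  fun_prop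

lemma trapezoid_nonneg (x α w : ℝ) : 0 ≤ trapezoid x α w := le_max_left _ _

lemma trapezoid_le_one (x α w : ℝ) : trapezoid x α w ≤ 1 := max_le zero_le_one (min_le_left _ _)

lemma bddMeasurable_trapezoid (x α : ℝ) : BddMeasurable (trapezoid x α) :=
  ⟨(continuous_trapezoid x α).measurable, 1, fun w =>
    (abs_of_nonneg (trapezoid_nonneg x α w)).trans_le (trapezoid_le_one x α w)⟩

lemma abs_trapezoid_sub_trapezoid_le_div (hα : 0 < α) (v w : ℝ) :
    |trapezoid x α v - trapezoid x α w| ≤ |v - w| / α := by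
  unfold trapezoid
  rw [max_comm 0, max_comm 0]
  refine (abs_max_sub_max_le_abs _ _ _).trans
    ((abs_min_sub_min_le_max _ _ _ _).trans (max_le ?_ ?_))
  · rw [sub_self, abs_zero]
    positivity
  refine (abs_min_sub_min_le_max _ _ _ _).trans (max_le (le_of_eq ?_) (le_of_eq ?_))
  · rw [← sub_div, abs_div, abs_of_pos hα, sub_sub_sub_cancel_right]
  · rw [← sub_div, abs_div, abs_of_pos hα, sub_sub_sub_cancel_left, abs_sub_comm]

lemma trapezoid_eq_zero_of_le (hα : 0 < α) {w : ℝ} (hw : w ≤ x - α) : trapezoid x α w = 0 :=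
  max_eq_left ((min_le_right _ _).trans ((min_le_left _ _).trans
    (div_nonpos_of_nonpos_of_nonneg (sub_nonpos.2 hw) hα.le)))

lemma trapezoid_le_ind (hα : 0 < α) (w : ℝ) :
    trapezoid x α w ≤ ind (Set.Icc (x - α) (x + 2 * α)) w := by
  by_cases hw : w ∈ Set.Icc (x - α) (x + 2 * α)
  · rw [ind_of_mem hw]
    exact trapezoid_le_one x α w
  · rw [ind_of_notMem hw]
    rcases not_and_or.1 hw with hleft | hright
    · exact (trapezoid_eq_zero_of_le hα (not_le.1 hleft).le).le
    · exact max_le le_rfl ((min_le_right _ _).trans ((min_le_right _ _).trans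
        (div_nonpos_of_nonpos_of_nonneg (by linarith) hα.le)))

lemma ind_le_trapezoid (hα : 0 < α) (w : ℝ) : ind (Set.Icc x (x + α)) w ≤ trapezoid x α w := by
  by_cases hw : w ∈ Set.Icc x (x + α)
  · rw [ind_of_mem hw]
    refine le_max_of_le_right (le_min le_rfl (le_min ?_ ?_)) <;>
      rw [one_le_div₀ hα] <;> linarith [hw.1, hw.2]
  · rw [ind_of_notMem hw]
    exact trapezoid_nonneg x α w

lemma abs_trapezoid_sub_trapezoid_le (hα : 0 < α) (v w : ℝ) :
    |trapezoid x α v - trapezoid x α w| ≤ |v - w| / α *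
      (ind (Set.Icc (x - α) (x + 2 * α)) v + ind (Set.Icc (x - α) (x + 2 * α)) w) := by
  have hlip := abs_trapezoid_sub_trapezoid_le_div (x := x) hα v w
  have hnonneg := ind_nonneg (Set.Icc (x - α) (x + 2 * α))
  by_cases hv : v ∈ Set.Icc (x - α) (x + 2 * α)
  · refine hlip.trans (le_mul_of_one_le_right (by positivity) ?_)
    linarith [ind_of_mem hv, hnonneg w]
  by_cases hw : w ∈ Set.Icc (x - α) (x + 2 * α)
  · refine hlip.trans (le_mul_of_one_le_right (by positivity) ?_)
    linarith [ind_of_mem hw, hnonneg v]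
  have hzero {u : ℝ} (hu : u ∉ Set.Icc (x - α) (x + 2 * α)) : trapezoid x α u = 0 :=
    le_antisymm ((trapezoid_le_ind hα u).trans_eq (ind_of_notMem hu)) (trapezoid_nonneg x α u)
  rw [hzero hv, hzero hw, sub_zero, abs_zero]
  exact mul_nonneg (by positivity) (add_nonneg (hnonneg v) (hnonneg w))

lemma integral_trapezoid_le (hα : 0 < α) {u v : ℝ} (huv : u ≤ v) :
    ∫ t in u..v, trapezoid x α t ≤ 3 * α := by
  refine (intervalIntegral.integral_mono_on huv
    ((continuous_trapezoid x α).intervalIntegrable _ _)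
    (intervalIntegrable_ind measurableSet_Icc _ _) fun t _ => trapezoid_le_ind hα t).trans ?_
  rw [intervalIntegral.integral_of_le huv, ind, integral_indicator_one measurableSet_Icc,
    measureReal_restrict_apply measurableSet_Icc]
  refine (measureReal_mono Set.inter_subset_left (by simp)).trans_eq ?_
  rw [Real.volume_real_Icc_of_le (by linarith)]
  ring

lemma integral_trapezoid_sq_le (hα : 0 < α) (w : ℝ) {R : ℝ} (hR : 0 ≤ R) :
    ∫ t in (-R)..R, trapezoid x α (w + t) ^ 2 ≤ 3 * α * ind (Set.Ici (x - α - R)) w := by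
  by_cases hw : x - α - R ≤ w
  · rw [ind_of_mem (Set.mem_Ici.2 hw), mul_one]
    have hcont : Continuous fun t => trapezoid x α (w + t) :=
      (continuous_trapezoid x α).comp (continuous_const.add continuous_id)
    calc ∫ t in (-R)..R, trapezoid x α (w + t) ^ 2
        ≤ ∫ t in (-R)..R, trapezoid x α (w + t) :=
          intervalIntegral.integral_mono_on (by linarith) ((hcont.pow 2).intervalIntegrable _ _)
            (hcont.intervalIntegrable _ _) fun t _ =>
              pow_le_of_le_one (trapezoid_nonneg _ _ _) (trapezoid_le_one _ _ _) two_ne_zero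
      _ = ∫ t in (w + -R)..(w + R), trapezoid x α t :=
          intervalIntegral.integral_comp_add_left (trapezoid x α) w
      _ ≤ 3 * α := integral_trapezoid_le hα (by linarith)
  · rw [ind_of_notMem (Set.mem_Ici.not.2 hw), mul_zero,
      intervalIntegral.integral_congr (g := fun _ => (0 : ℝ)) fun t ht => ?_,
      intervalIntegral.integral_zero]
    rw [Set.uIcc_of_le (by linarith)] at ht
    dsimp only
    rw [trapezoid_eq_zero_of_le hα (by linarith [ht.2]), sq, zero_mul]

lemma hasDerivAt_trapezoidPrimitive (x α w : ℝ) :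
    HasDerivAt (trapezoidPrimitive x α) (trapezoid x α w) w :=
  (continuous_trapezoid x α).integral_hasStrictDerivAt (x - α) w |>.hasDerivAt

lemma abs_trapezoidPrimitive_le (hα : 0 < α) (w : ℝ) :
    |trapezoidPrimitive x α w| ≤ 3 * α * ind (Set.Ici (x - α)) w := by
  unfold trapezoidPrimitive
  by_cases hw : x - α ≤ w
  · rw [ind_of_mem (Set.mem_Ici.2 hw), mul_one,
      abs_of_nonneg (intervalIntegral.integral_nonneg hw fun t _ => trapezoid_nonneg x α t)]
    exact integral_trapezoid_le hα hw
  · rw [ind_of_notMem (Set.mem_Ici.not.2 hw), mul_zero,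
      intervalIntegral.integral_congr (g := fun _ => (0 : ℝ)) fun t ht => ?_,
      intervalIntegral.integral_zero, abs_zero]
    rw [Set.uIcc_of_ge (not_le.1 hw).le] at ht
    exact trapezoid_eq_zero_of_le hα ht.2

end Trapezoid

section Concentration

variable {Ω : Type*} [MeasurableSpace Ω] {μ : Measure Ω} [IsFiniteMeasure μ] {ξ T f g N : Ω → ℝ}
  {x α δ : ℝ}

lemma ind_Icc_sub_add_le (x α w : ℝ) :
    ind (Set.Icc (x - α) (x + 2 * α)) w ≤ ind (Set.Icc (x - α) (x - α + α)) w +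
      ind (Set.Icc x (x + α)) w + ind (Set.Icc (x + α) (x + α + α)) w := by
  have hleft := ind_nonneg (Set.Icc (x - α) (x - α + α)) w
  have hmiddle := ind_nonneg (Set.Icc x (x + α)) w
  have hright := ind_nonneg (Set.Icc (x + α) (x + α + α)) w
  by_cases hw : w ∈ Set.Icc (x - α) (x + 2 * α)
  · rw [ind_of_mem hw]
    rcases le_total w x with hx | hx
    · linarith [ind_of_mem (s := Set.Icc (x - α) (x - α + α)) ⟨hw.1, by linarith⟩]
    rcases le_total w (x + α) with hxα | hxα
    · linarith [ind_of_mem (s := Set.Icc x (x + α)) ⟨hx, hxα⟩]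
    · linarith [ind_of_mem (s := Set.Icc (x + α) (x + α + α)) ⟨hxα, by linarith [hw.2]⟩]
  · rw [ind_of_notMem hw]
    positivity

lemma integral_mul_ind_Icc_sub_add_le (hξ : BddMeasurable ξ) (hξ_nonneg : ∀ ω, 0 ≤ ξ ω)
    (hT : BddMeasurable T) (hδ : ∀ y, ∫ ω, ξ ω * ind (Set.Icc y (y + α)) (T ω) ∂μ ≤ δ) (x : ℝ) :
    ∫ ω, ξ ω * ind (Set.Icc (x - α) (x + 2 * α)) (T ω) ∂μ ≤ 3 * δ := by
  have hbdd (a b : ℝ) : BddMeasurable fun ω => ξ ω * ind (Set.Icc a b) (T ω) :=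
    hξ.mul (.ind hT.measurable measurableSet_Icc)
  have hle := (hbdd _ _).integral_mono (μ := μ) (((hbdd _ _).add (hbdd _ _)).add (hbdd _ _))
    fun ω => (mul_le_mul_of_nonneg_left (ind_Icc_sub_add_le x α (T ω))
      (hξ_nonneg ω)).trans_eq (by rw [mul_add, mul_add])
  rw [integral_add ((hbdd _ _).add (hbdd _ _)).integrable (hbdd _ _).integrable,
    integral_add (hbdd _ _).integrable (hbdd _ _).integrable] at hle
  linarith [hδ (x - α), hδ x, hδ (x + α)]

lemma integral_mul_abs_trapezoid_sub_le (hξ : BddMeasurable ξ) (hξ_nonneg : ∀ ω, 0 ≤ ξ ω)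
    (hT : BddMeasurable T) (hα : 0 < α)
    (hδ : ∀ y, ∫ ω, ξ ω * ind (Set.Icc y (y + α)) (T ω) ∂μ ≤ δ) (t : ℝ) :
    ∫ ω, ξ ω * |trapezoid x α (T ω + t) - trapezoid x α (T ω)| ∂μ ≤ |t| / α * (6 * δ) := by
  have hbdd {V : Ω → ℝ} (hV : BddMeasurable V) (a b : ℝ) :
      BddMeasurable fun ω => ξ ω * ind (Set.Icc a b) (V ω) :=
    hξ.mul (.ind hV.measurable measurableSet_Icc)
  have hTt : BddMeasurable fun ω => T ω + t := hT.add (.const t)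
  have htrap {V : Ω → ℝ} (hV : BddMeasurable V) : BddMeasurable fun ω => trapezoid x α (V ω) :=
    hV.comp_continuous (continuous_trapezoid x α)
  have hshift : ∫ ω, ξ ω * ind (Set.Icc (x - α) (x + 2 * α)) (T ω + t) ∂μ ≤ 3 * δ := by
    refine integral_mul_ind_Icc_sub_add_le hξ hξ_nonneg hTt (fun y => le_trans (le_of_eq ?_)
      (hδ (y - t))) x
    refine integral_congr_ae (.of_forall fun ω => ?_)
    dsimp only
    congr 1
    exact le_antisymm (ind_le_ind fun h => ⟨by linarith [h.1], by linarith [h.2]⟩)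
      (ind_le_ind fun h => ⟨by linarith [h.1], by linarith [h.2]⟩)
  calc ∫ ω, ξ ω * |trapezoid x α (T ω + t) - trapezoid x α (T ω)| ∂μ
      ≤ ∫ ω, |t| / α * (ξ ω * ind (Set.Icc (x - α) (x + 2 * α)) (T ω + t) +
          ξ ω * ind (Set.Icc (x - α) (x + 2 * α)) (T ω)) ∂μ := by
        refine (hξ.mul ((htrap hTt).sub (htrap hT)).abs).integral_mono
          ((BddMeasurable.const _).mul ((hbdd hTt _ _).add (hbdd hT _ _))) fun ω => ?_
        have hpoint := mul_le_mul_of_nonneg_left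
          (abs_trapezoid_sub_trapezoid_le (x := x) hα (T ω + t) (T ω)) (hξ_nonneg ω)
        rw [add_sub_cancel_left] at hpoint
        exact hpoint.trans_eq (by ring)
    _ ≤ |t| / α * (6 * δ) := by
        rw [integral_const_mul, integral_add (hbdd hTt _ _).integrable (hbdd hT _ _).integrable]
        refine mul_le_mul_of_nonneg_left ?_ (by positivity)
        linarith [integral_mul_ind_Icc_sub_add_le hξ hξ_nonneg hT hδ x]

-- `m g - f N = -f (N - m) - m (f - g)`, and the first product is at most `(f² + (N - m)²) / 2`.
lemma mul_integral_mul_le (hξ : BddMeasurable ξ) (hξ_nonneg : ∀ ω, 0 ≤ ξ ω) (hf : BddMeasurable f)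
    (hg : BddMeasurable g) (hN : BddMeasurable N) (m : ℝ) :
    m * ∫ ω, ξ ω * g ω ∂μ ≤ ∫ ω, ξ ω * f ω * N ω ∂μ +
      (1 / 2 * (∫ ω, ξ ω * f ω ^ 2 ∂μ) + 1 / 2 * (∫ ω, ξ ω * (N ω - m) ^ 2 ∂μ) +
        |m| * ∫ ω, ξ ω * |f ω - g ω| ∂μ) := by
  have hfN := (hξ.mul hf).mul hN
  have hf2 := (BddMeasurable.const (1 / 2)).mul (hξ.mul (hf.pow 2))
  have hN2 := (BddMeasurable.const (1 / 2)).mul (hξ.mul ((hN.sub (.const m)).pow 2))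
  have hfg := (BddMeasurable.const |m|).mul (hξ.mul (hf.sub hg).abs)
  simp only [← integral_const_mul]
  rw [← integral_add hf2.integrable hN2.integrable,
    ← integral_add (hf2.add hN2).integrable hfg.integrable,
    ← integral_add hfN.integrable ((hf2.add hN2).add hfg).integrable]
  refine ((BddMeasurable.const m).mul (hξ.mul hg)).integral_mono
    (hfN.add ((hf2.add hN2).add hfg)) fun ω => ?_
  have hsq := mul_nonneg (hξ_nonneg ω) (sq_nonneg (f ω + (N ω - m)))
  have hdiff := mul_le_mul_of_nonneg_left (neg_le_abs (m * (f ω - g ω))) (hξ_nonneg ω)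
  rw [abs_mul] at hdiff
  linarith

end Concentration

section SteinKernel

/-- The kernel `K_l(t)` of Stein's method for the summand `X l`: integrating `f' (W + t)` against it
gives `X l * (f W - f (W - ∑ j ∈ A l, X j))`. -/
noncomputable def steinKernel {Ω ι : Type*} (X : ι → Ω → ℝ) (A : ι → Finset ι) (l : ι) (t : ℝ)
    (ω : Ω) : ℝ :=
  X l ω * signedInd (blockSum X (A l) ω) t

variable {Ω ι : Type*} [MeasurableSpace Ω] [Fintype ι] [DecidableEq ι] {μ : Measure Ω}
  {X : ι → Ω → ℝ} {A B C : ι → Finset ι} {κ τ : ℝ}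

local notation "W" => blockSum X Finset.univ

namespace BddLocalDependence

variable (h : BddLocalDependence μ X A B C κ τ)
include h

lemma bdd_signedInd_prod (l : ι) :
    BddMeasurable fun q : ℝ × Ω => signedInd (blockSum X (A l) q.2) q.1 :=
  ⟨measurable_signedInd.comp
    (((h.bdd_blockSum (A l)).measurable.comp measurable_snd).prodMk measurable_fst), 1,
    fun _ => (abs_signedInd _ _).trans_le (ind_le_one _ _)⟩

lemma bdd_steinKernel_prod (l : ι) :
    BddMeasurable fun q : ℝ × Ω => steinKernel X A l q.1 q.2 :=
  ((h.bdd l).comp measurable_snd).mul (h.bdd_signedInd_prod l)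

lemma bdd_steinKernel (l : ι) (t : ℝ) : BddMeasurable (steinKernel X A l t) :=
  (h.bdd_steinKernel_prod l).comp measurable_prodMk_left

lemma measurable_steinKernel {l : ι} {S : Set ι} (hS : ∀ j ∈ A l, j ∈ S) (t : ℝ) :
    Measurable[familySigma X S] (steinKernel X A l t) :=
  (measurable_familySigma (hS l (h.mem_A l))).mul
    (measurable_signedInd.comp ((measurable_blockSum hS).prodMk measurable_const))

lemma integral_mul_steinKernel (l : ι) (ω : Ω) {g : ℝ → ℝ} (hg : Continuous g) :
    ∫ t in (-(κ * τ))..(κ * τ), g t * steinKernel X A l t ω =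
      X l ω * ∫ t in (-blockSum X (A l) ω)..0, g t := by
  rw [← integral_mul_signedInd (h.abs_blockSum_le (h.A_subset_C l) ω) hg,
    ← intervalIntegral.integral_const_mul]
  refine intervalIntegral.integral_congr fun t _ => ?_
  simp only [steinKernel]
  ring

lemma integral_mul_comp_sub_eq_zero {i l : ι} (hl : l ∉ C i)
    {ξ v : Ω → ℝ} {f : ℝ → ℝ} (hξ : BlockFun X (B i) ξ) (hv : BlockFun X (B i) v)
    (hf : Continuous f) :
    ∫ ω, X l ω * (ξ ω * f (W ω - v ω - blockSum X (A l) ω)) ∂μ = 0 := by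
  have hcompl (ω : Ω) : W ω - v ω - blockSum X (A l) ω = blockSum X (A l)ᶜ ω - v ω := by
    rw [sub_right_comm, blockSum_univ_sub_blockSum]
  simp only [hcompl]
  have hB : familySigma X (B i) ≤ familySigma X {j | j ∉ A l ∨ j ∈ B i} :=
    biSup_mono fun j hj => Or.inr hj
  have hA : Measurable[familySigma X {j | j ∉ A l ∨ j ∈ B i}] (blockSum X (A l)ᶜ) :=
    measurable_blockSum fun j hj => Or.inl (Finset.mem_compl.1 hj)
  have hg : Measurable[familySigma X {j | j ∉ A l ∨ j ∈ B i}] fun ω =>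
      ξ ω * f (blockSum X (A l)ᶜ ω - v ω) :=
    (hξ.measurable.mono hB le_rfl).mul
      (hf.measurable.comp (hA.sub (hv.measurable.mono hB le_rfl)))
  rw [integral_mul_of_indep (h.indep_far i l hl) (familySigma_le h.measurable)
    (familySigma_le h.measurable) (measurable_familySigma rfl) hg, h.integral_eq_zero l, zero_mul]

variable [IsProbabilityMeasure μ]

lemma mul_nonneg_of_index (l : ι) : 0 ≤ κ * τ :=
  have ⟨ω⟩ := nonempty_of_isProbabilityMeasure μ
  mul_nonneg (zero_le_one.trans h.one_le) ((abs_nonneg _).trans (h.abs_summand_le l ω))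

lemma integral_sq_sum_le {c : ι → Ω → ℝ} (F : Finset ι)
    (hc : ∀ l, Measurable[familySigma X (A l)] (c l)) (hbdd : ∀ l, BddMeasurable (c l))
    (hzero : ∀ l, ∫ ω, c l ω ∂μ = 0) :
    ∫ ω, (∑ l ∈ F, c l ω) ^ 2 ∂μ ≤ κ * ∑ l, ∫ ω, c l ω ^ 2 ∂μ := by
  set y : ι → ℝ := fun l => ∫ ω, c l ω ^ 2 ∂μ
  have hy (l : ι) : 0 ≤ y l := integral_nonneg fun ω => sq_nonneg _
  have hcov {l m : ι} (hm : m ∉ C l) : ∫ ω, c l ω * c m ω ∂μ = 0 := by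
    rw [integral_mul_of_indep (h.indep_A l) (familySigma_le h.measurable)
      (familySigma_le h.measurable) (hc l) ((hc m).mono (biSup_mono fun j hj =>
        ⟨m, fun hB => hm (h.B_subset_C l hB), hj⟩) le_rfl), hzero, zero_mul]
  have hhalf (l m : ι) : ∫ ω, c l ω * c m ω ∂μ ≤ (y l + y m) / 2 := by
    rw [← integral_add ((hbdd l).pow 2).integrable ((hbdd m).pow 2).integrable, ← integral_div]
    refine ((hbdd l).mul (hbdd m)).integral_mono
      ((((hbdd l).pow 2).add ((hbdd m).pow 2)).div_const 2) fun ω => ?_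
    linarith [two_mul_le_add_sq (c l ω) (c m ω)]
  have hrow (l : ι) : ∑ m ∈ F, ∫ ω, c l ω * c m ω ∂μ ≤ ∑ m ∈ C l, (y l + y m) / 2 := by
    rw [← Finset.sum_filter_of_ne fun m _ hne => not_not.1 fun hm => hne (hcov hm)]
    refine (Finset.sum_le_sum fun m _ => hhalf l m).trans
      (Finset.sum_le_sum_of_subset_of_nonneg (fun m hm => (Finset.mem_filter.1 hm).2)
        fun m _ _ => by linarith [hy l, hy m])
  calc ∫ ω, (∑ l ∈ F, c l ω) ^ 2 ∂μ = ∑ l ∈ F, ∑ m ∈ F, ∫ ω, c l ω * c m ω ∂μ := by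
        simp only [sq, Finset.sum_mul_sum]
        rw [BddMeasurable.integral_sum _ fun l => .sum _ fun m => (hbdd l).mul (hbdd m)]
        exact Finset.sum_congr rfl fun l _ =>
          BddMeasurable.integral_sum _ fun m => (hbdd l).mul (hbdd m)
    _ ≤ ∑ l, ∑ m ∈ C l, (y l + y m) / 2 :=
        (Finset.sum_le_sum fun l _ => hrow l).trans
          (Finset.sum_le_sum_of_subset_of_nonneg (Finset.subset_univ F)
            fun l _ _ => Finset.sum_nonneg fun m _ => by linarith [hy l, hy m])
    _ ≤ κ * ∑ l, y l := by
        simp only [← Finset.sum_div, Finset.sum_add_distrib]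
        linarith [sum_sum_const_le h.card_C_le hy, sum_sum_le h.card_mem_C_le hy]

lemma integral_sq_sum_sub_le {ζ : ι → Ω → ℝ} (F : Finset ι)
    (hζ : ∀ l, Measurable[familySigma X (A l)] (ζ l)) (hbdd : ∀ l, BddMeasurable (ζ l)) :
    ∫ ω, (∑ l ∈ F, ζ l ω - ∫ ω', ∑ l ∈ F, ζ l ω' ∂μ) ^ 2 ∂μ ≤
      κ * ∫ ω, ∑ l, ζ l ω ^ 2 ∂μ := by
  rw [BddMeasurable.integral_sum _ hbdd, BddMeasurable.integral_sum _ fun l => (hbdd l).pow 2]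
  simp only [← Finset.sum_sub_distrib]
  refine (h.integral_sq_sum_le F (fun l => (hζ l).sub measurable_const)
    (fun l => (hbdd l).sub (.const _)) fun l => ?_).trans
    (mul_le_mul_of_nonneg_left (Finset.sum_le_sum fun l _ => ?_) (zero_le_one.trans h.one_le))
  · simp only [Pi.sub_apply]
    rw [integral_sub (hbdd l).integrable (integrable_const _), integral_const, probReal_univ,
      one_smul, sub_self]
  · simp only [Pi.sub_apply]
    rw [← variance_eq_integral (hbdd l).measurable.aemeasurable]
    exact variance_le_expectation_sq (hbdd l).measurable.aestronglyMeasurable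

lemma integral_integral_sum_steinKernel (F : Finset ι) :
    ∫ t in (-(κ * τ))..(κ * τ), ∫ ω, ∑ l ∈ F, steinKernel X A l t ω ∂μ =
      ∑ l ∈ F, ∫ ω, X l ω * blockSum X (A l) ω ∂μ := by
  simp only [BddMeasurable.integral_sum _ fun l => h.bdd_steinKernel l _]
  rw [intervalIntegral.integral_finsetSum fun l _ =>
    (h.bdd_steinKernel_prod l).intervalIntegrable_integral _ _]
  refine Finset.sum_congr rfl fun l _ => ?_
  rw [← (h.bdd_steinKernel_prod l).integral_intervalIntegral
    (neg_le_self (h.mul_nonneg_of_index l))]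
  refine integral_congr_ae (.of_forall fun ω => ?_)
  have hkernel := h.integral_mul_steinKernel l ω (g := fun _ => 1) continuous_const
  simp only [one_mul, intervalIntegral.integral_const, smul_eq_mul, mul_one, sub_neg_eq_add,
    zero_add] at hkernel
  exact hkernel

lemma integral_integral_sum_mul_abs_signedInd {H : ι → Ω → ℝ} (hH : ∀ l, BddMeasurable (H l)) :
    ∫ t in (-(κ * τ))..(κ * τ), ∫ ω, ∑ l, H l ω * |signedInd (blockSum X (A l) ω) t| ∂μ =
      ∑ l, ∫ ω, H l ω * |blockSum X (A l) ω| ∂μ := by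
  have hprod (l : ι) :
      BddMeasurable fun q : ℝ × Ω => H l q.2 * |signedInd (blockSum X (A l) q.2) q.1| :=
    ((hH l).comp measurable_snd).mul (h.bdd_signedInd_prod l).abs
  simp only [BddMeasurable.integral_sum _ fun l => (hprod l).comp measurable_prodMk_left]
  rw [intervalIntegral.integral_finsetSum fun l _ => (hprod l).intervalIntegrable_integral _ _]
  refine Finset.sum_congr rfl fun l _ => ?_
  rw [← (hprod l).integral_intervalIntegral (neg_le_self (h.mul_nonneg_of_index l))]
  refine integral_congr_ae (.of_forall fun ω => ?_)
  simp only [abs_signedInd]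
  rw [intervalIntegral.integral_const_mul,
    integral_ind_uIoc (h.abs_blockSum_le (h.A_subset_C l) ω)]

lemma integral_integral_sum_steinKernel_sq_le :
    ∫ t in (-(κ * τ))..(κ * τ), ∫ ω, ∑ l, steinKernel X A l t ω ^ 2 ∂μ ≤
      κ * sumThirdMoments μ X := by
  simp only [steinKernel, mul_pow, signedInd_sq, ← abs_signedInd]
  rw [h.integral_integral_sum_mul_abs_signedInd fun l => (h.bdd l).pow 2]
  exact h.sum_integral_sq_mul_le h.A_subset_C

lemma integral_integral_sum_abs_mul_abs_steinKernel_le :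
    ∫ t in (-(κ * τ))..(κ * τ), ∫ ω, ∑ l, |blockSum X (A l) ω| * |steinKernel X A l t ω| ∂μ ≤
      κ ^ 2 * sumThirdMoments μ X := by
  have hrw (l : ι) (t : ℝ) (ω : Ω) : |blockSum X (A l) ω| * |steinKernel X A l t ω| =
      |X l ω * blockSum X (A l) ω| * |signedInd (blockSum X (A l) ω) t| := by
    rw [steinKernel, abs_mul, abs_mul]
    ring
  simp only [hrw]
  rw [h.integral_integral_sum_mul_abs_signedInd fun l => ((h.bdd l).mul (h.bdd_blockSum _)).abs]
  exact h.sum_integral_abs_mul_le h.A_subset_C h.A_subset_C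

lemma abs_mul_abs_integral_sum_steinKernel_le (F : Finset ι) (t : ℝ) :
    |t| * |∫ ω, ∑ l ∈ F, steinKernel X A l t ω ∂μ| ≤
      ∫ ω, ∑ l, |blockSum X (A l) ω| * |steinKernel X A l t ω| ∂μ := by
  have hbdd (l : ι) := h.bdd_steinKernel l t
  refine (mul_le_mul_of_nonneg_left abs_integral_le_integral_abs (abs_nonneg t)).trans ?_
  rw [← integral_const_mul]
  refine ((BddMeasurable.const _).mul (BddMeasurable.sum F hbdd).abs).integral_mono
    (.sum _ fun l => (h.bdd_blockSum _).abs.mul (hbdd l).abs) fun ω => ?_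
  calc |t| * |∑ l ∈ F, steinKernel X A l t ω| ≤ |t| * ∑ l, |steinKernel X A l t ω| :=
        mul_le_mul_of_nonneg_left ((Finset.abs_sum_le_sum_abs _ _).trans
          (Finset.sum_le_sum_of_subset_of_nonneg (Finset.subset_univ F)
            fun _ _ _ => abs_nonneg _)) (abs_nonneg t)
    _ = ∑ l, |X l ω| * (|t| * ind (Set.uIoc (-blockSum X (A l) ω) 0) t) := by
        simp only [steinKernel, abs_mul, abs_signedInd, Finset.mul_sum, mul_left_comm]
    _ ≤ ∑ l, |X l ω| * (|blockSum X (A l) ω| * ind (Set.uIoc (-blockSum X (A l) ω) 0) t) :=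
        Finset.sum_le_sum fun l _ =>
          mul_le_mul_of_nonneg_left (abs_mul_ind_uIoc_le _ t) (abs_nonneg _)
    _ = ∑ l, |blockSum X (A l) ω| * |steinKernel X A l t ω| := by
        simp only [steinKernel, abs_mul, abs_signedInd, mul_left_comm]

variable {i : ι} {ξ v : Ω → ℝ}

lemma integral_mul_sq_sum_steinKernel_sub_le (hξ : BlockFun X (B i) ξ) (hξ_nonneg : ∀ ω, 0 ≤ ξ ω)
    (t : ℝ) :
    ∫ ω, ξ ω * (∑ l ∈ (C i)ᶜ, steinKernel X A l t ω -
        ∫ ω', ∑ l ∈ (C i)ᶜ, steinKernel X A l t ω' ∂μ) ^ 2 ∂μ ≤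
      (∫ ω, ξ ω ∂μ) * (κ * ∫ ω, ∑ l, steinKernel X A l t ω ^ 2 ∂μ) := by
  rw [integral_mul_of_indep (h.indep_B i) (familySigma_le h.measurable)
    (familySigma_le h.measurable) hξ.measurable]
  · exact mul_le_mul_of_nonneg_left
      (h.integral_sq_sum_sub_le _ (fun l => h.measurable_steinKernel (fun _ hj => hj) t)
        fun l => h.bdd_steinKernel l t) (integral_nonneg hξ_nonneg)
  · refine ((Finset.measurable_sum _ fun l hl => ?_).sub measurable_const).pow_const 2
    exact h.measurable_steinKernel (S := {j | ∃ l ∉ C i, j ∈ A l})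
      (fun j hj => ⟨l, Finset.mem_compl.1 hl, hj⟩) t

section Derivative

variable {f φ : ℝ → ℝ}

lemma integral_mul_mul_comp_eq_of_notMem {l : ι} (hl : l ∉ C i) (hξ : BlockFun X (B i) ξ)
    (hv : BlockFun X (B i) v) (hf : ∀ w, HasDerivAt f (φ w) w) (hφ : Continuous φ)
    (hφ_bdd : BddMeasurable φ) :
    ∫ ω, ξ ω * X l ω * f (W ω - v ω) ∂μ =
      ∫ t in (-(κ * τ))..(κ * τ), ∫ ω, ξ ω * φ (W ω - v ω + t) * steinKernel X A l t ω ∂μ := by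
  have hfc : Continuous f := continuous_iff_continuousAt.2 fun w => (hf w).continuousAt
  have hT : BddMeasurable fun ω => W ω - v ω := (h.bdd_blockSum _).sub hv.bdd
  have hprod : BddMeasurable fun q : ℝ × Ω =>
      ξ q.2 * φ (W q.2 - v q.2 + q.1) * steinKernel X A l q.1 q.2 :=
    ((hξ.bdd.comp measurable_snd).mul (hφ_bdd.comp
      ((hT.measurable.comp measurable_snd).add measurable_fst))).mul (h.bdd_steinKernel_prod l)
  rw [← hprod.integral_intervalIntegral (neg_le_self (h.mul_nonneg_of_index l))]
  rw [← sub_zero (∫ ω, ξ ω * X l ω * f (W ω - v ω) ∂μ),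
    ← h.integral_mul_comp_sub_eq_zero hl hξ hv hfc,
    ← integral_sub ((hξ.bdd.mul (h.bdd l)).mul (hT.comp_continuous hfc)).integrable
      ((h.bdd l).mul (hξ.bdd.mul
        ((hT.sub (h.bdd_blockSum _)).comp_continuous hfc))).integrable]
  refine integral_congr_ae (.of_forall fun ω => ?_)
  have hftc : ∫ t in (-blockSum X (A l) ω)..0, φ (W ω - v ω + t) =
      f (W ω - v ω) - f (W ω - v ω - blockSum X (A l) ω) := by
    rw [intervalIntegral.integral_comp_add_left φ,
      intervalIntegral.integral_eq_sub_of_hasDerivAt (fun t _ => hf t)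
        (hφ.intervalIntegrable _ _), add_zero, sub_eq_add_neg (W ω - v ω) (blockSum X (A l) ω)]
  simp only [mul_assoc]
  rw [intervalIntegral.integral_const_mul,
    h.integral_mul_steinKernel l ω (g := fun t => φ (W ω - v ω + t)) (by fun_prop), hftc]
  ring

lemma integral_mul_blockSum_mul_comp_eq (hξ : BlockFun X (B i) ξ) (hv : BlockFun X (B i) v)
    (hf : ∀ w, HasDerivAt f (φ w) w) (hφ : Continuous φ) (hφ_bdd : BddMeasurable φ) :
    ∫ ω, ξ ω * blockSum X (C i)ᶜ ω * f (W ω - v ω) ∂μ =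
      ∫ t in (-(κ * τ))..(κ * τ),
        ∫ ω, ξ ω * φ (W ω - v ω + t) * ∑ l ∈ (C i)ᶜ, steinKernel X A l t ω ∂μ := by
  have hfc : Continuous f := continuous_iff_continuousAt.2 fun w => (hf w).continuousAt
  have hT : BddMeasurable fun ω => W ω - v ω := (h.bdd_blockSum _).sub hv.bdd
  have hprod (l : ι) : BddMeasurable fun q : ℝ × Ω =>
      ξ q.2 * φ (W q.2 - v q.2 + q.1) * steinKernel X A l q.1 q.2 :=
    ((hξ.bdd.comp measurable_snd).mul (hφ_bdd.comp
      ((hT.measurable.comp measurable_snd).add measurable_fst))).mul (h.bdd_steinKernel_prod l)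
  simp only [Finset.mul_sum,
    BddMeasurable.integral_sum _ fun l => (hprod l).comp measurable_prodMk_left]
  rw [intervalIntegral.integral_finsetSum fun l _ => (hprod l).intervalIntegrable_integral _ _]
  have hexpand (ω : Ω) : ξ ω * blockSum X (C i)ᶜ ω * f (W ω - v ω) =
      ∑ l ∈ (C i)ᶜ, ξ ω * X l ω * f (W ω - v ω) := by
    rw [← Finset.sum_mul, ← Finset.mul_sum]
    rfl
  simp only [hexpand]
  rw [BddMeasurable.integral_sum _ fun l =>
    (hξ.bdd.mul (h.bdd l)).mul (hT.comp_continuous hfc)]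
  exact Finset.sum_congr rfl fun l hl =>
    h.integral_mul_mul_comp_eq_of_notMem (Finset.mem_compl.1 hl) hξ hv hf hφ hφ_bdd

end Derivative

end BddLocalDependence

end SteinKernel

section ConcentrationInequality

variable {Ω ι : Type*} [MeasurableSpace Ω] [Fintype ι] [DecidableEq ι] {μ : Measure Ω}
  [IsProbabilityMeasure μ] {X : ι → Ω → ℝ} {A B C : ι → Finset ι} {κ τ : ℝ} {i : ι} {ξ v : Ω → ℝ}
  {α δ : ℝ}

local notation "W" => blockSum X Finset.univ

namespace BddLocalDependence

variable (h : BddLocalDependence μ X A B C κ τ)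
include h

lemma integral_sum_steinKernel_mul_integral_trapezoid_le (hξ : BlockFun X (B i) ξ)
    (hξ_nonneg : ∀ ω, 0 ≤ ξ ω) (hv : BlockFun X (B i) v) (hα : 0 < α)
    (hδ : ∀ y, ∫ ω, ξ ω * ind (Set.Icc y (y + α)) (W ω - v ω) ∂μ ≤ δ) (x t : ℝ) :
    (∫ ω, ∑ l ∈ (C i)ᶜ, steinKernel X A l t ω ∂μ) *
        ∫ ω, ξ ω * trapezoid x α (W ω - v ω) ∂μ ≤
      ∫ ω, ξ ω * trapezoid x α (W ω - v ω + t) * ∑ l ∈ (C i)ᶜ, steinKernel X A l t ω ∂μ +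
      (1 / 2 * (∫ ω, ξ ω * trapezoid x α (W ω - v ω + t) ^ 2 ∂μ) +
        1 / 2 * ((∫ ω, ξ ω ∂μ) * (κ * ∫ ω, ∑ l, steinKernel X A l t ω ^ 2 ∂μ)) +
        6 * δ / α *
          ∫ ω, ∑ l, |blockSum X (A l) ω| * |steinKernel X A l t ω| ∂μ) := by
  have hT : BddMeasurable fun ω => W ω - v ω := (h.bdd_blockSum _).sub hv.bdd
  have hδ_nonneg : 0 ≤ δ :=
    (integral_nonneg fun ω => mul_nonneg (hξ_nonneg ω) (ind_nonneg _ _)).trans (hδ 0)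
  set m := ∫ ω, ∑ l ∈ (C i)ᶜ, steinKernel X A l t ω ∂μ
  have hsplit := mul_integral_mul_le (μ := μ) hξ.bdd hξ_nonneg
    ((hT.add (.const t)).comp_continuous (continuous_trapezoid x α))
    (hT.comp_continuous (continuous_trapezoid x α))
    (.sum (C i)ᶜ fun l => h.bdd_steinKernel l t) m
  have hshift := calc
    |m| * ∫ ω, ξ ω * |trapezoid x α (W ω - v ω + t) - trapezoid x α (W ω - v ω)| ∂μ
      ≤ |m| * (|t| / α * (6 * δ)) := mul_le_mul_of_nonneg_left
        (integral_mul_abs_trapezoid_sub_le hξ.bdd hξ_nonneg hT hα hδ t) (abs_nonneg m)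
    _ = 6 * δ / α * (|t| * |m|) := by ring
    _ ≤ _ := mul_le_mul_of_nonneg_left (h.abs_mul_abs_integral_sum_steinKernel_le _ t)
        (by positivity)
  linarith [h.integral_mul_sq_sum_steinKernel_sub_le hξ hξ_nonneg t]

lemma integral_mul_trapezoid_le_integral_steinKernel (hξ : BlockFun X (B i) ξ)
    (hξ_nonneg : ∀ ω, 0 ≤ ξ ω) (hv : BlockFun X (B i) v) (hα : 0 < α)
    (hδ : ∀ y, ∫ ω, ξ ω * ind (Set.Icc y (y + α)) (W ω - v ω) ∂μ ≤ δ) (x : ℝ) :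
    (∑ l ∈ (C i)ᶜ, ∫ ω, X l ω * blockSum X (A l) ω ∂μ) *
        ∫ ω, ξ ω * trapezoid x α (W ω - v ω) ∂μ ≤
      ∫ ω, ξ ω * blockSum X (C i)ᶜ ω * trapezoidPrimitive x α (W ω - v ω) ∂μ +
      (1 / 2 * (∫ t in (-(κ * τ))..(κ * τ),
          ∫ ω, ξ ω * trapezoid x α (W ω - v ω + t) ^ 2 ∂μ) +
        1 / 2 * ((∫ ω, ξ ω ∂μ) * (κ * ∫ t in (-(κ * τ))..(κ * τ),
          ∫ ω, ∑ l, steinKernel X A l t ω ^ 2 ∂μ)) +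
        6 * δ / α * ∫ t in (-(κ * τ))..(κ * τ),
          ∫ ω, ∑ l, |blockSum X (A l) ω| * |steinKernel X A l t ω| ∂μ) := by
  have hT : BddMeasurable fun ω => W ω - v ω := (h.bdd_blockSum _).sub hv.bdd
  have hshift : BddMeasurable fun q : ℝ × Ω => trapezoid x α (W q.2 - v q.2 + q.1) :=
    (bddMeasurable_trapezoid x α).comp ((hT.measurable.comp measurable_snd).add
      measurable_fst)
  have hmean : IntervalIntegrable (fun t => ∫ ω, ∑ l ∈ (C i)ᶜ, steinKernel X A l t ω ∂μ) volume
      (-(κ * τ)) (κ * τ) :=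
    BddMeasurable.intervalIntegrable_integral (.sum _ h.bdd_steinKernel_prod) _ _
  have hmain : IntervalIntegrable (fun t => ∫ ω, ξ ω * trapezoid x α (W ω - v ω + t) *
      ∑ l ∈ (C i)ᶜ, steinKernel X A l t ω ∂μ) volume (-(κ * τ)) (κ * τ) :=
    BddMeasurable.intervalIntegrable_integral (((hξ.bdd.comp measurable_snd).mul hshift).mul
      (.sum _ h.bdd_steinKernel_prod)) _ _
  have htrap_sq : IntervalIntegrable (fun t => 1 / 2 *
      ∫ ω, ξ ω * trapezoid x α (W ω - v ω + t) ^ 2 ∂μ) volume (-(κ * τ)) (κ * τ) :=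
    (BddMeasurable.intervalIntegrable_integral
      ((hξ.bdd.comp measurable_snd).mul (hshift.pow 2)) _ _).const_mul _
  have hkernel_sq : IntervalIntegrable (fun t => 1 / 2 * ((∫ ω, ξ ω ∂μ) *
      (κ * ∫ ω, ∑ l, steinKernel X A l t ω ^ 2 ∂μ))) volume (-(κ * τ)) (κ * τ) :=
    (((BddMeasurable.intervalIntegrable_integral (.sum _ fun l =>
      (h.bdd_steinKernel_prod l).pow 2) _ _).const_mul _).const_mul _).const_mul _
  have hkernel_abs : IntervalIntegrable (fun t => 6 * δ / α *
      ∫ ω, ∑ l, |blockSum X (A l) ω| * |steinKernel X A l t ω| ∂μ) volume (-(κ * τ)) (κ * τ) :=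
    (BddMeasurable.intervalIntegrable_integral (.sum _ fun l =>
      ((h.bdd_blockSum (A l)).abs.comp measurable_snd).mul (h.bdd_steinKernel_prod l).abs)
      _ _).const_mul _
  have hinteg := intervalIntegral.integral_mono_on (neg_le_self (h.mul_nonneg_of_index i))
    (hmean.mul_const _) (hmain.add ((htrap_sq.add hkernel_sq).add hkernel_abs)) fun t _ =>
      h.integral_sum_steinKernel_mul_integral_trapezoid_le hξ hξ_nonneg hv hα hδ x t
  rw [intervalIntegral.integral_mul_const, h.integral_integral_sum_steinKernel,
    intervalIntegral.integral_add hmain ((htrap_sq.add hkernel_sq).add hkernel_abs),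
    intervalIntegral.integral_add (htrap_sq.add hkernel_sq) hkernel_abs,
    intervalIntegral.integral_add htrap_sq hkernel_sq,
    ← h.integral_mul_blockSum_mul_comp_eq hξ hv (hasDerivAt_trapezoidPrimitive x α)
      (continuous_trapezoid x α) (bddMeasurable_trapezoid x α)] at hinteg
  simpa only [intervalIntegral.integral_const_mul] using hinteg

lemma integral_mul_trapezoid_le (hξ : BlockFun X (B i) ξ)
    (hξ_nonneg : ∀ ω, 0 ≤ ξ ω) (hv : BlockFun X (B i) v) (hα : 0 < α)
    (hδ : ∀ y, ∫ ω, ξ ω * ind (Set.Icc y (y + α)) (W ω - v ω) ∂μ ≤ δ) (x : ℝ) :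
    (∑ l ∈ (C i)ᶜ, ∫ ω, X l ω * blockSum X (A l) ω ∂μ) *
        ∫ ω, ξ ω * trapezoid x α (W ω - v ω) ∂μ ≤
      ∫ ω, ξ ω * blockSum X (C i)ᶜ ω * trapezoidPrimitive x α (W ω - v ω) ∂μ +
      (1 / 2 * (∫ t in (-(κ * τ))..(κ * τ),
          ∫ ω, ξ ω * trapezoid x α (W ω - v ω + t) ^ 2 ∂μ) +
        κ ^ 2 * sumThirdMoments μ X * (1 / 2 * (∫ ω, ξ ω ∂μ) + 6 * δ / α)) := by
  have hδ_nonneg : 0 ≤ δ :=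
    (integral_nonneg fun ω => mul_nonneg (hξ_nonneg ω) (ind_nonneg _ _)).trans (hδ 0)
  have hξ_int : 0 ≤ ∫ ω, ξ ω ∂μ := integral_nonneg hξ_nonneg
  have hκ : 0 ≤ κ := zero_le_one.trans h.one_le
  have hsq_le := mul_le_mul_of_nonneg_left h.integral_integral_sum_steinKernel_sq_le
    (mul_nonneg hξ_int hκ)
  have habs_le := mul_le_mul_of_nonneg_left h.integral_integral_sum_abs_mul_abs_steinKernel_le
    (show 0 ≤ 6 * δ / α by positivity)
  linarith [h.integral_mul_trapezoid_le_integral_steinKernel hξ hξ_nonneg hv hα hδ x]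

lemma integral_integral_mul_trapezoid_sq_le (hξ : BlockFun X (B i) ξ) (hξ_nonneg : ∀ ω, 0 ≤ ξ ω)
    (hv : BlockFun X (B i) v) (hα : 0 < α) (x : ℝ) :
    ∫ t in (-(κ * τ))..(κ * τ), ∫ ω, ξ ω * trapezoid x α (W ω - v ω + t) ^ 2 ∂μ ≤
      3 * α * ∫ ω, ξ ω * ind (Set.Ici (x - α - κ * τ)) (W ω - v ω) ∂μ := by
  have hT : BddMeasurable fun ω => W ω - v ω := (h.bdd_blockSum _).sub hv.bdd
  have hR := h.mul_nonneg_of_index i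
  have hprod : BddMeasurable fun q : ℝ × Ω => ξ q.2 * trapezoid x α (W q.2 - v q.2 + q.1) ^ 2 :=
    (hξ.bdd.comp measurable_snd).mul ((bddMeasurable_trapezoid x α).comp
      ((hT.measurable.comp measurable_snd).add measurable_fst) |>.pow 2)
  rw [← hprod.integral_intervalIntegral (neg_le_self hR), ← integral_const_mul]
  refine integral_mono_of_nonneg (.of_forall fun ω => ?_) ((BddMeasurable.const _).mul
    (hξ.bdd.mul (.ind hT.measurable measurableSet_Ici))).integrable (.of_forall fun ω => ?_)
  · exact intervalIntegral.integral_nonneg (neg_le_self hR)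
      fun t _ => mul_nonneg (hξ_nonneg ω) (sq_nonneg _)
  · dsimp only
    rw [intervalIntegral.integral_const_mul]
    exact (mul_le_mul_of_nonneg_left (integral_trapezoid_sq_le hα _ hR) (hξ_nonneg ω)).trans_eq
      (mul_left_comm _ _ _)

lemma integral_mul_blockSum_mul_trapezoidPrimitive_le (hξ : BlockFun X (B i) ξ)
    (hξ_nonneg : ∀ ω, 0 ≤ ξ ω) (hv : BlockFun X (B i) v) (hα : 0 < α) (F : Finset ι) (x : ℝ) :
    ∫ ω, ξ ω * blockSum X F ω * trapezoidPrimitive x α (W ω - v ω) ∂μ ≤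
      3 * α * ∫ ω, ξ ω * (|blockSum X F ω| * ind (Set.Ici (x - α)) (W ω - v ω)) ∂μ := by
  have hT : BddMeasurable fun ω => W ω - v ω := (h.bdd_blockSum _).sub hv.bdd
  have hcont : Continuous (trapezoidPrimitive x α) :=
    continuous_iff_continuousAt.2 fun w => (hasDerivAt_trapezoidPrimitive x α w).continuousAt
  rw [← integral_const_mul]
  refine ((hξ.bdd.mul (h.bdd_blockSum F)).mul (hT.comp_continuous hcont)).integral_mono
    ((BddMeasurable.const _).mul (hξ.bdd.mul
      ((h.bdd_blockSum F).abs.mul (.ind hT.measurable measurableSet_Ici)))) fun ω => ?_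
  calc ξ ω * blockSum X F ω * trapezoidPrimitive x α (W ω - v ω)
      ≤ ξ ω * |blockSum X F ω| * |trapezoidPrimitive x α (W ω - v ω)| := by
        refine (le_abs_self _).trans_eq ?_
        rw [abs_mul, abs_mul, abs_of_nonneg (hξ_nonneg ω)]
    _ ≤ ξ ω * |blockSum X F ω| * (3 * α * ind (Set.Ici (x - α)) (W ω - v ω)) :=
        mul_le_mul_of_nonneg_left (abs_trapezoidPrimitive_le hα _)
          (mul_nonneg (hξ_nonneg ω) (abs_nonneg _))
    _ = 3 * α * (ξ ω * (|blockSum X F ω| * ind (Set.Ici (x - α)) (W ω - v ω))) := by ring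

-- Stein's identity for a primitive of the trapezoid above `[x, x + α]`.
theorem integral_mul_ind_Icc_le (hξ : BlockFun X (B i) ξ) (hξ_nonneg : ∀ ω, 0 ≤ ξ ω)
    (hv : BlockFun X (B i) v) (hα : 0 < α)
    (hδ : ∀ y, ∫ ω, ξ ω * ind (Set.Icc y (y + α)) (W ω - v ω) ∂μ ≤ δ)
    (hvar : 1 / 2 ≤ ∫ ω, W ω ^ 2 ∂μ - ∑ l ∈ C i, ∫ ω, X l ω * blockSum X (A l) ω ∂μ) (x : ℝ) :
    ∫ ω, ξ ω * ind (Set.Icc x (x + α)) (W ω - v ω) ∂μ ≤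
      6 * α * (∫ ω, ξ ω * (|blockSum X (C i)ᶜ ω| * ind (Set.Ici (x - α)) (W ω - v ω)) ∂μ) +
      3 * α * (∫ ω, ξ ω * ind (Set.Ici (x - α - κ * τ)) (W ω - v ω) ∂μ) +
      κ ^ 2 * sumThirdMoments μ X * (∫ ω, ξ ω ∂μ) +
      12 * δ * (κ ^ 2 * sumThirdMoments μ X) / α := by
  have hT : BddMeasurable fun ω => W ω - v ω := (h.bdd_blockSum _).sub hv.bdd
  rw [← h.sum_integral_mul_blockSum_A, ← Finset.sum_compl_add_sum (C i), add_sub_cancel_right]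
    at hvar
  have htrap : ∫ ω, ξ ω * ind (Set.Icc x (x + α)) (W ω - v ω) ∂μ ≤
      ∫ ω, ξ ω * trapezoid x α (W ω - v ω) ∂μ :=
    (hξ.bdd.mul (.ind hT.measurable measurableSet_Icc)).integral_mono
      (hξ.bdd.mul (hT.comp_continuous (continuous_trapezoid x α)))
      fun ω => mul_le_mul_of_nonneg_left (ind_le_trapezoid hα _) (hξ_nonneg ω)
  have htrap_nonneg : 0 ≤ ∫ ω, ξ ω * trapezoid x α (W ω - v ω) ∂μ :=
    integral_nonneg fun ω => mul_nonneg (hξ_nonneg ω) (trapezoid_nonneg _ _ _)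
  have hstein := (mul_le_mul_of_nonneg_right hvar htrap_nonneg).trans
    (h.integral_mul_trapezoid_le hξ hξ_nonneg hv hα hδ x)
  have hprimitive :=
    h.integral_mul_blockSum_mul_trapezoidPrimitive_le hξ hξ_nonneg hv hα (C i)ᶜ x
  have hsquare := h.integral_integral_mul_trapezoid_sq_le hξ hξ_nonneg hv hα x
  have hdiv : 12 * δ * (κ ^ 2 * sumThirdMoments μ X) / α =
      2 * (κ ^ 2 * sumThirdMoments μ X * (6 * δ / α)) := by ring
  linarith

end BddLocalDependence

end ConcentrationInequality

section SecondMoments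

lemma sum_integral_abs_pow_three_le {Ω ι : Type*} [MeasurableSpace Ω] [Fintype ι] {μ : Measure Ω}
    {X : ι → Ω → ℝ} (s : Finset ι) :
    ∑ l ∈ s, ∫ ω, |X l ω| ^ 3 ∂μ ≤ sumThirdMoments μ X :=
  Finset.sum_le_sum_of_subset_of_nonneg (Finset.subset_univ _) fun _ _ _ =>
    integral_nonneg fun ω => by positivity

variable {Ω ι : Type*} [MeasurableSpace Ω] [Fintype ι] [DecidableEq ι] {μ : Measure Ω}
  [IsProbabilityMeasure μ] {X : ι → Ω → ℝ} {A B C : ι → Finset ι} {κ τ : ℝ}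

local notation "W" => blockSum X Finset.univ

lemma sq_le_sq_add_abs_pow_three_div {x ε : ℝ} (hε : 0 < ε) : x ^ 2 ≤ ε ^ 2 + |x| ^ 3 / ε := by
  rw [← sq_abs x]
  rcases le_total |x| ε with hx | hx
  · exact (pow_le_pow_left₀ (abs_nonneg x) hx 2).trans (le_add_of_nonneg_right (by positivity))
  · have hle : |x| ^ 2 ≤ |x| ^ 3 / ε := by
      rw [le_div_iff₀ hε, pow_succ |x| 2]
      gcongr
    exact hle.trans (le_add_of_nonneg_left (sq_nonneg ε))

namespace BddLocalDependence

variable (h : BddLocalDependence μ X A B C κ τ)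
include h

lemma integral_sq_le (l : ι) {ε : ℝ} (hε : 0 < ε) :
    ∫ ω, X l ω ^ 2 ∂μ ≤ ε ^ 2 + (∫ ω, |X l ω| ^ 3 ∂μ) / ε := by
  have hcube : BddMeasurable fun ω => |X l ω| ^ 3 / ε := ((h.bdd l).abs.pow 3).div_const ε
  calc ∫ ω, X l ω ^ 2 ∂μ ≤ ∫ ω, (ε ^ 2 + |X l ω| ^ 3 / ε) ∂μ :=
        ((h.bdd l).pow 2).integral_mono ((BddMeasurable.const _).add hcube) fun ω =>
          sq_le_sq_add_abs_pow_three_div hε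
    _ = ε ^ 2 + (∫ ω, |X l ω| ^ 3 ∂μ) / ε := by
        rw [integral_add (integrable_const _) hcube.integrable, integral_div, integral_const,
          probReal_univ, one_smul]

lemma integral_blockSum_C_sq_le (i : ι) :
    ∫ ω, blockSum X (C i) ω ^ 2 ∂μ ≤ 1 + κ ^ 2 * sumThirdMoments μ X := by
  have hκ_pos : 0 < κ := zero_lt_one.trans_le h.one_le
  have hsq (l : ι) : BddMeasurable fun ω => X l ω ^ 2 := (h.bdd l).pow 2
  calc ∫ ω, blockSum X (C i) ω ^ 2 ∂μ ≤ ∫ ω, κ * ∑ l ∈ C i, X l ω ^ 2 ∂μ := by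
        refine ((h.bdd_blockSum _).pow 2).integral_mono ((BddMeasurable.const _).mul (.sum _ hsq))
          fun ω => (sq_sum_le_card_mul_sum_sq (s := C i)).trans
            (mul_le_mul_of_nonneg_right (h.card_C_le i) (Finset.sum_nonneg fun l _ => sq_nonneg _))
    _ = κ * ∑ l ∈ C i, ∫ ω, X l ω ^ 2 ∂μ := by
        rw [integral_const_mul, BddMeasurable.integral_sum _ hsq]
    _ ≤ κ * ∑ l ∈ C i, ((1 / κ) ^ 2 + (∫ ω, |X l ω| ^ 3 ∂μ) / (1 / κ)) := by
        gcongr with l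
        exact h.integral_sq_le l (by positivity)
    _ ≤ κ * (κ * (1 / κ) ^ 2 + sumThirdMoments μ X / (1 / κ)) := by
        rw [Finset.sum_add_distrib, Finset.sum_const, nsmul_eq_mul, ← Finset.sum_div]
        gcongr
        exacts [h.card_C_le i, sum_integral_abs_pow_three_le _]
    _ = 1 + κ ^ 2 * sumThirdMoments μ X := by field_simp

lemma integral_mul_blockSum_A_le (l : ι) :
    ∫ ω, X l ω * blockSum X (A l) ω ∂μ ≤
      ∑ j ∈ C l, ((∫ ω, X l ω ^ 2 ∂μ) + ∫ ω, X j ω ^ 2 ∂μ) / 2 := by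
  have hbdd (j : ι) : BddMeasurable fun ω => (X l ω ^ 2 + X j ω ^ 2) / 2 :=
    (((h.bdd l).pow 2).add ((h.bdd j).pow 2)).div_const 2
  calc ∫ ω, X l ω * blockSum X (A l) ω ∂μ
      ≤ ∫ ω, ∑ j ∈ C l, (X l ω ^ 2 + X j ω ^ 2) / 2 ∂μ := by
        refine ((h.bdd l).mul (h.bdd_blockSum _)).integral_mono (.sum _ hbdd) fun ω => ?_
        calc X l ω * blockSum X (A l) ω ≤ |X l ω| * ∑ j ∈ C l, |X j ω| := by
              refine (le_abs_self _).trans ?_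
              rw [abs_mul]
              gcongr
              exact abs_blockSum_le_of_subset (h.A_subset_C l) ω
          _ ≤ ∑ j ∈ C l, (X l ω ^ 2 + X j ω ^ 2) / 2 := by
              rw [Finset.mul_sum]
              refine Finset.sum_le_sum fun j _ => ?_
              rw [← sq_abs (X l ω), ← sq_abs (X j ω)]
              linarith [two_mul_le_add_sq |X l ω| |X j ω|]
    _ = ∑ j ∈ C l, ((∫ ω, X l ω ^ 2 ∂μ) + ∫ ω, X j ω ^ 2 ∂μ) / 2 := by
        rw [BddMeasurable.integral_sum _ hbdd]
        refine Finset.sum_congr rfl fun j _ => ?_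
        rw [integral_div, integral_add ((h.bdd l).pow 2).integrable ((h.bdd j).pow 2).integrable]

lemma sum_C_integral_mul_blockSum_A_le (i : ι) :
    ∑ l ∈ C i, ∫ ω, X l ω * blockSum X (A l) ω ∂μ ≤
      1 / 16 + 4 * (κ ^ 2 * sumThirdMoments μ X) := by
  have hκ_pos : 0 < κ := zero_lt_one.trans_le h.one_le
  set c : ι → ℝ := fun l => ∫ ω, |X l ω| ^ 3 ∂μ with hc
  have hc_nonneg (l : ι) : 0 ≤ c l := integral_nonneg fun ω => by positivity
  have hsq (l : ι) : ∫ ω, X l ω ^ 2 ∂μ ≤ (1 / (4 * κ)) ^ 2 + 4 * κ * c l :=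
    (h.integral_sq_le l (ε := 1 / (4 * κ)) (by positivity)).trans_eq (by
      rw [hc, div_eq_mul_inv (∫ ω, |X l ω| ^ 3 ∂μ), one_div, inv_inv, mul_comm (4 * κ)])
  have hinner (l : ι) : ∑ j ∈ C l, ((∫ ω, X l ω ^ 2 ∂μ) + ∫ ω, X j ω ^ 2 ∂μ) / 2 ≤
      κ * ((1 / (4 * κ)) ^ 2 + 2 * κ * c l) + 2 * κ * ∑ j ∈ C l, c j := by
    calc ∑ j ∈ C l, ((∫ ω, X l ω ^ 2 ∂μ) + ∫ ω, X j ω ^ 2 ∂μ) / 2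
        ≤ ∑ j ∈ C l, (((1 / (4 * κ)) ^ 2 + 2 * κ * c l) + 2 * κ * c j) :=
          Finset.sum_le_sum fun j _ => by linarith [hsq l, hsq j]
      _ ≤ κ * ((1 / (4 * κ)) ^ 2 + 2 * κ * c l) + 2 * κ * ∑ j ∈ C l, c j := by
          rw [Finset.sum_add_distrib, Finset.sum_const, nsmul_eq_mul, ← Finset.mul_sum]
          have := hc_nonneg l
          gcongr
          exact h.card_C_le l
  have hdouble : ∑ l ∈ C i, ∑ j ∈ C l, c j ≤ κ * sumThirdMoments μ X :=
    (Finset.sum_le_sum_of_subset_of_nonneg (Finset.subset_univ _) fun _ _ _ =>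
      Finset.sum_nonneg fun j _ => hc_nonneg j).trans (sum_sum_le h.card_mem_C_le hc_nonneg)
  calc ∑ l ∈ C i, ∫ ω, X l ω * blockSum X (A l) ω ∂μ
      ≤ ∑ l ∈ C i, (κ * (1 / (4 * κ)) ^ 2 + 2 * κ ^ 2 * c l + 2 * κ * ∑ j ∈ C l, c j) :=
        Finset.sum_le_sum fun l _ =>
          ((h.integral_mul_blockSum_A_le l).trans (hinner l)).trans_eq (by ring)
    _ = (C i).card * (κ * (1 / (4 * κ)) ^ 2) + 2 * κ ^ 2 * ∑ l ∈ C i, c l +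
          2 * κ * ∑ l ∈ C i, ∑ j ∈ C l, c j := by
        rw [Finset.sum_add_distrib, Finset.sum_add_distrib, Finset.sum_const, nsmul_eq_mul,
          Finset.mul_sum, Finset.mul_sum]
    _ ≤ κ * (κ * (1 / (4 * κ)) ^ 2) + 2 * κ ^ 2 * sumThirdMoments μ X +
          2 * κ * (κ * sumThirdMoments μ X) := by
        gcongr
        exacts [h.card_C_le i, sum_integral_abs_pow_three_le _]
    _ = 1 / 16 + 4 * (κ ^ 2 * sumThirdMoments μ X) := by field_simp; ring

end BddLocalDependence

end SecondMoments

section TailRegime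

variable {Ω ι : Type*} [MeasurableSpace Ω] [Fintype ι] [DecidableEq ι]

/-- Bounded local dependence together with the smallness assumptions under which the normal
approximation of `W` is compared at level `Z`. In the application `η` is proportional to the claimed
error `κ ^ p (1 + |z|)^(-p) ∑ i, E |X i| ^ p` and `Z` to `1 + |z|`. -/
structure TailRegime (μ : Measure Ω) (X : ι → Ω → ℝ) (A B C : ι → Finset ι) (κ τ η Z : ℝ) :
    Prop extends BddLocalDependence μ X A B C κ τ where
  one_le_level : 1 ≤ Z
  error_pos : 0 < η
  error_mul_le : η * Z ^ 6 ≤ 1 / 48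
  block_le : κ * τ ≤ Z / 16
  thirdMoments_le : κ ^ 3 * sumThirdMoments μ X ≤ η * Z ^ 3
  abs_variance_sub_one_le : |∫ ω, blockSum X Finset.univ ω ^ 2 ∂μ - 1| ≤ η * Z ^ 2

lemma mul_ind_Ici_le {Z u w : ℝ} (hZ : 1 ≤ Z) (huw : |w - u| ≤ Z / 16) :
    (1 + |w| + |u|) * ind (Set.Ici (Z / 4 - 4)) w ≤
      64 ^ 3 * (Z ^ 3)⁻¹ * (11 + 2 * u ^ 2) + 2 * Z ^ 3 * ind (Set.Ici (Z / 8)) u := by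
  have hu_nonneg := ind_nonneg (Set.Ici (Z / 8)) u
  have hw : |w| ≤ |u| + Z / 16 := by linarith [abs_sub_abs_le_abs_sub w u]
  have hsq := sq_abs u
  rcases lt_or_ge Z 64 with hZ_lt | hZ_ge
  · have hone : 1 ≤ 64 ^ 3 * (Z ^ 3)⁻¹ := by
      rw [← div_eq_mul_inv, one_le_div (by positivity)]
      gcongr
    calc (1 + |w| + |u|) * ind (Set.Ici (Z / 4 - 4)) w ≤ 1 + |w| + |u| :=
          mul_le_of_le_one_right (by positivity) (ind_le_one _ _)
      _ ≤ 11 + 2 * u ^ 2 := by nlinarith [sq_nonneg (|u| - 1)]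
      _ ≤ 64 ^ 3 * (Z ^ 3)⁻¹ * (11 + 2 * u ^ 2) := le_mul_of_one_le_left (by positivity) hone
      _ ≤ _ := le_add_of_nonneg_right (by positivity)
  · by_cases hmem : Z / 4 - 4 ≤ w
    · have hu : Z / 8 ≤ u := by linarith [(abs_le.1 huw).2]
      rw [ind_of_mem (Set.mem_Ici.2 hmem), ind_of_mem (Set.mem_Ici.2 hu), mul_one, mul_one]
      have hlin : 1 + |w| + |u| ≤ 4 * u := by
        rw [abs_of_nonneg (by linarith : 0 ≤ u)] at hw ⊢
        linarith
      have hsquare : 0 ≤ 2 * (Z ^ 3)⁻¹ * (u - Z ^ 3) ^ 2 := by positivity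
      have hexpand : 2 * (Z ^ 3)⁻¹ * (u - Z ^ 3) ^ 2 =
          2 * ((Z ^ 3)⁻¹ * u ^ 2) + 2 * Z ^ 3 - 4 * u := by
        field_simp
        ring
      have hnonneg : 0 ≤ (Z ^ 3)⁻¹ * u ^ 2 := by positivity
      have hinv_nonneg : 0 ≤ (Z ^ 3)⁻¹ := by positivity
      linarith
    · rw [ind_of_notMem (Set.mem_Ici.not.2 hmem), mul_zero]
      positivity

variable {μ : Measure Ω} {X : ι → Ω → ℝ} {A B C : ι → Finset ι} {κ τ η Z : ℝ} {i : ι}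
  {ξ v : Ω → ℝ}

local notation "W" => blockSum X Finset.univ

namespace TailRegime

variable (r : TailRegime μ X A B C κ τ η Z)
include r

lemma error_mul_pow_le {n : ℕ} (hn : n ≤ 6) : η * Z ^ n ≤ 1 / 48 :=
  (mul_le_mul_of_nonneg_left (pow_le_pow_right₀ r.one_le_level hn) r.error_pos.le).trans
    r.error_mul_le

lemma sq_mul_sumThirdMoments_le : κ ^ 2 * sumThirdMoments μ X ≤ η * Z ^ 3 :=
  (mul_le_mul_of_nonneg_right (pow_le_pow_right₀ r.one_le (by norm_num))
    sumThirdMoments_nonneg).trans r.thirdMoments_le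

lemma integral_sq_le_two : ∫ ω, W ω ^ 2 ∂μ ≤ 2 := by
  linarith [(abs_le.1 r.abs_variance_sub_one_le).2, r.error_mul_pow_le (n := 2) (by norm_num)]

lemma measurable_blockSum_compl (i : ι) :
    Measurable[familySigma X {j | ∃ l ∉ C i, j ∈ A l}] (blockSum X (C i)ᶜ) := by
  simpa only [blockSum_univ_sub_blockSum] using r.measurable_blockSum_far (C i)

lemma abs_sub_blockSum_compl_le (i : ι) (ω : Ω) : |W ω - blockSum X (C i)ᶜ ω| ≤ Z / 16 := by
  rw [← blockSum_univ_sub_blockSum, sub_sub_cancel]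
  exact (r.abs_blockSum_le subset_rfl ω).trans r.block_le

lemma integral_mul_comp_blockSum_compl (hξ : BlockFun X (B i) ξ) {g : ℝ → ℝ} (hg : Measurable g) :
    ∫ ω, ξ ω * g (blockSum X (C i)ᶜ ω) ∂μ =
      (∫ ω, ξ ω ∂μ) * ∫ ω, g (blockSum X (C i)ᶜ ω) ∂μ := by
  have hcomp : Measurable[familySigma X {j | ∃ l ∉ C i, j ∈ A l}] fun ω =>
      g (blockSum X (C i)ᶜ ω) := hg.comp (r.measurable_blockSum_compl i)
  exact integral_mul_of_indep (r.indep_B i) (familySigma_le r.measurable)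
    (familySigma_le r.measurable) hξ.measurable hcomp

variable [IsProbabilityMeasure μ]

lemma half_le_integral_sq_sub (i : ι) :
    1 / 2 ≤ ∫ ω, W ω ^ 2 ∂μ - ∑ l ∈ C i, ∫ ω, X l ω * blockSum X (A l) ω ∂μ := by
  linarith [(abs_le.1 r.abs_variance_sub_one_le).1, r.error_mul_pow_le (n := 2) (by norm_num),
    r.error_mul_pow_le (n := 3) (by norm_num), r.sq_mul_sumThirdMoments_le,
    r.sum_C_integral_mul_blockSum_A_le i]

lemma integral_blockSum_compl_sq_le (i : ι) : ∫ ω, blockSum X (C i)ᶜ ω ^ 2 ∂μ ≤ 8 := by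
  have hW := (BddMeasurable.const 2).mul ((r.bdd_blockSum Finset.univ).pow 2)
  have hC := (BddMeasurable.const 2).mul ((r.bdd_blockSum (C i)).pow 2)
  have hle : ∫ ω, blockSum X (C i)ᶜ ω ^ 2 ∂μ ≤ ∫ ω, (2 * W ω ^ 2 + 2 * blockSum X (C i) ω ^ 2) ∂μ :=
    ((r.bdd_blockSum _).pow 2).integral_mono (hW.add hC) fun ω => by
      rw [← blockSum_univ_sub_blockSum]
      linarith [sq_nonneg (W ω + blockSum X (C i) ω)]
  rw [integral_add hW.integrable hC.integrable, integral_const_mul, integral_const_mul] at hle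
  linarith [r.integral_blockSum_C_sq_le i, r.integral_sq_le_two, r.sq_mul_sumThirdMoments_le,
    r.error_mul_pow_le (n := 3) (by norm_num)]

lemma integral_ind_Ici_le_inv {y : ℝ} (hy : Z / 16 ≤ y) :
    ∫ ω, ind (Set.Ici y) (W ω) ∂μ ≤ 2 * 10 ^ 16 * (Z ^ 6)⁻¹ := by
  have hZ := r.one_le_level
  have htail := r.integral_ind_Ici_le hZ r.integral_sq_le_two r.sq_mul_sumThirdMoments_le
    r.error_pos.le hy
  have hη : η ≤ (Z ^ 6)⁻¹ := by
    rw [← one_div, le_div_iff₀ (by positivity)]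
    linarith [r.error_mul_le]
  linarith

lemma integral_ind_Ici_blockSum_compl_le (i : ι) :
    ∫ ω, ind (Set.Ici (Z / 8)) (blockSum X (C i)ᶜ ω) ∂μ ≤ 2 * 10 ^ 16 * (Z ^ 6)⁻¹ :=
  ((BddMeasurable.ind (r.bdd_blockSum _).measurable measurableSet_Ici).integral_mono
    (r.bdd_ind_Ici (Z / 16)) fun ω => ind_le_ind fun hmem => by
      have := (abs_le.1 (r.abs_sub_blockSum_compl_le i ω)).1
      rw [Set.mem_Ici] at hmem ⊢
      linarith).trans (r.integral_ind_Ici_le_inv le_rfl)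

lemma integral_weighted_tail_le (hξ : BlockFun X (B i) ξ) (hξ_nonneg : ∀ ω, 0 ≤ ξ ω) :
    ∫ ω, ξ ω * ((1 + |W ω| + |blockSum X (C i)ᶜ ω|) * ind (Set.Ici (Z / 4 - 4)) (W ω)) ∂μ ≤
      10 ^ 17 * (Z ^ 3)⁻¹ * ∫ ω, ξ ω ∂μ := by
  have hZ := r.one_le_level
  set U := blockSum X (C i)ᶜ with hU
  set g : ℝ → ℝ := fun u =>
    64 ^ 3 * (Z ^ 3)⁻¹ * (11 + 2 * u ^ 2) + 2 * Z ^ 3 * ind (Set.Ici (Z / 8)) u with hg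
  have hU_bdd : BddMeasurable U := r.bdd_blockSum _
  have hg_meas : Measurable g := by
    have := measurable_ind (measurableSet_Ici (a := Z / 8))
    fun_prop
  have hsq : BddMeasurable fun ω => 2 * U ω ^ 2 := (BddMeasurable.const 2).mul (hU_bdd.pow 2)
  have hpoly : BddMeasurable fun ω => 64 ^ 3 * (Z ^ 3)⁻¹ * (11 + 2 * U ω ^ 2) :=
    (BddMeasurable.const _).mul ((BddMeasurable.const _).add hsq)
  have hind : BddMeasurable fun ω => 2 * Z ^ 3 * ind (Set.Ici (Z / 8)) (U ω) :=
    (BddMeasurable.const _).mul (.ind hU_bdd.measurable measurableSet_Ici)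
  have hg_le : ∫ ω, g (U ω) ∂μ ≤ 10 ^ 17 * (Z ^ 3)⁻¹ := by
    have hUsq := r.integral_blockSum_compl_sq_le i
    have htail := r.integral_ind_Ici_blockSum_compl_le i
    rw [← hU] at hUsq htail
    calc ∫ ω, g (U ω) ∂μ
        = 64 ^ 3 * (Z ^ 3)⁻¹ * (11 + 2 * ∫ ω, U ω ^ 2 ∂μ) +
            2 * Z ^ 3 * ∫ ω, ind (Set.Ici (Z / 8)) (U ω) ∂μ := by
          rw [hg, integral_add hpoly.integrable hind.integrable, integral_const_mul,
            integral_const_mul, integral_add (integrable_const _) hsq.integrable,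
            integral_const_mul, integral_const, probReal_univ, one_smul]
      _ ≤ 64 ^ 3 * (Z ^ 3)⁻¹ * (11 + 2 * 8) + 2 * Z ^ 3 * (2 * 10 ^ 16 * (Z ^ 6)⁻¹) := by gcongr
      _ = (64 ^ 3 * (11 + 2 * 8) + 4 * 10 ^ 16) * (Z ^ 3)⁻¹ := by field_simp; ring
      _ ≤ 10 ^ 17 * (Z ^ 3)⁻¹ := by gcongr; norm_num
  calc ∫ ω, ξ ω * ((1 + |W ω| + |U ω|) * ind (Set.Ici (Z / 4 - 4)) (W ω)) ∂μ
      ≤ ∫ ω, ξ ω * g (U ω) ∂μ :=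
        (hξ.bdd.mul ((((BddMeasurable.const 1).add (r.bdd_blockSum _).abs).add hU_bdd.abs).mul
          (r.bdd_ind_Ici _))).integral_mono (hξ.bdd.mul (hpoly.add hind)) fun ω =>
            mul_le_mul_of_nonneg_left (mul_ind_Ici_le hZ (r.abs_sub_blockSum_compl_le i ω))
              (hξ_nonneg ω)
    _ = (∫ ω, ξ ω ∂μ) * ∫ ω, g (U ω) ∂μ := r.integral_mul_comp_blockSum_compl hξ hg_meas
    _ ≤ (∫ ω, ξ ω ∂μ) * (10 ^ 17 * (Z ^ 3)⁻¹) :=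
        mul_le_mul_of_nonneg_left hg_le (integral_nonneg hξ_nonneg)
    _ = 10 ^ 17 * (Z ^ 3)⁻¹ * ∫ ω, ξ ω ∂μ := mul_comm _ _

lemma integral_mul_abs_blockSum_compl_le (hξ : BlockFun X (B i) ξ) (hξ_nonneg : ∀ ω, 0 ≤ ξ ω) :
    ∫ ω, ξ ω * |blockSum X (C i)ᶜ ω| ∂μ ≤ 9 / 2 * ∫ ω, ξ ω ∂μ := by
  rw [r.integral_mul_comp_blockSum_compl hξ continuous_abs.measurable, mul_comm]
  refine mul_le_mul_of_nonneg_right ?_ (integral_nonneg hξ_nonneg)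
  have hU := r.bdd_blockSum (C i)ᶜ
  have hsq : BddMeasurable fun ω => 1 / 2 * blockSum X (C i)ᶜ ω ^ 2 :=
    (BddMeasurable.const _).mul (hU.pow 2)
  calc ∫ ω, |blockSum X (C i)ᶜ ω| ∂μ ≤ ∫ ω, (1 / 2 + 1 / 2 * blockSum X (C i)ᶜ ω ^ 2) ∂μ :=
        hU.abs.integral_mono ((BddMeasurable.const _).add hsq) fun ω => by
          rw [← sq_abs]
          linarith [two_mul_le_add_sq |blockSum X (C i)ᶜ ω| 1]
    _ = 1 / 2 + 1 / 2 * ∫ ω, blockSum X (C i)ᶜ ω ^ 2 ∂μ := by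
        rw [integral_add (integrable_const _) hsq.integrable, integral_const_mul, integral_const,
          probReal_univ, one_smul]
    _ ≤ 9 / 2 := by linarith [r.integral_blockSum_compl_sq_le i]

end TailRegime

end TailRegime

section Concentration

variable {Ω ι : Type*} [MeasurableSpace Ω] [Fintype ι] [DecidableEq ι] {μ : Measure Ω}
  {X : ι → Ω → ℝ} {A B C : ι → Finset ι} {κ τ η Z α : ℝ} {i : ι} {ξ v : Ω → ℝ}

local notation "W" => blockSum X Finset.univ

namespace TailRegime

variable (r : TailRegime μ X A B C κ τ η Z)
include r

lemma sq_mul_sumThirdMoments_le_width (hα : α = 24 * η * Z ^ 6) :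
    κ ^ 2 * sumThirdMoments μ X ≤ α / 24 * (Z ^ 3)⁻¹ := by
  have hZ := r.one_le_level
  refine r.sq_mul_sumThirdMoments_le.trans_eq ?_
  rw [hα]
  field_simp

lemma width_pos (hα : α = 24 * η * Z ^ 6) : 0 < α := by
  have := r.one_le_level
  have := r.error_pos
  rw [hα]
  positivity

variable [IsProbabilityMeasure μ]

lemma integral_mul_ind_Icc_le_uniform (hξ : BlockFun X (B i) ξ) (hξ_nonneg : ∀ ω, 0 ≤ ξ ω)
    (hv : BlockFun X (B i) v) (hα : α = 24 * η * Z ^ 6) (x : ℝ) :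
    ∫ ω, ξ ω * ind (Set.Icc x (x + α)) (W ω - v ω) ∂μ ≤ 62 * α * ∫ ω, ξ ω ∂μ := by
  have hα_pos := r.width_pos hα
  have hβ : κ ^ 2 * sumThirdMoments μ X ≤ α / 24 :=
    (r.sq_mul_sumThirdMoments_le_width hα).trans
      (mul_le_of_le_one_right (by positivity) (inv_le_one_of_one_le₀ (one_le_pow₀ r.one_le_level)))
  have hU := r.bdd_blockSum (C i)ᶜ
  have hT : BddMeasurable fun ω => W ω - v ω := (r.bdd_blockSum _).sub hv.bdd
  have hIci (y : ℝ) : BddMeasurable fun ω => ind (Set.Ici y) (W ω - v ω) :=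
    .ind hT.measurable measurableSet_Ici
  set q : ℝ → ℝ := fun x => ∫ ω, ξ ω * ind (Set.Icc x (x + α)) (W ω - v ω) ∂μ
  have hq_bdd : BddAbove (Set.range q) := by
    refine ⟨∫ ω, ξ ω ∂μ, ?_⟩
    rintro _ ⟨y, rfl⟩
    exact (hξ.bdd.mul (.ind hT.measurable measurableSet_Icc)).integral_mono hξ.bdd fun ω =>
      mul_le_of_le_one_right (hξ_nonneg ω) (ind_le_one _ _)
  set δ := ⨆ y, q y
  have hδ_nonneg : 0 ≤ δ :=
    (integral_nonneg fun ω => mul_nonneg (hξ_nonneg ω) (ind_nonneg _ _)).trans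
      (le_ciSup hq_bdd 0)
  have hq (y : ℝ) : q y ≤ 31 * α * (∫ ω, ξ ω ∂μ) + δ / 2 := by
    have habs : ∫ ω, ξ ω * (|blockSum X (C i)ᶜ ω| * ind (Set.Ici (y - α)) (W ω - v ω)) ∂μ ≤
        9 / 2 * ∫ ω, ξ ω ∂μ :=
      ((hξ.bdd.mul (hU.abs.mul (hIci _))).integral_mono (hξ.bdd.mul hU.abs) fun ω =>
        mul_le_mul_of_nonneg_left (mul_le_of_le_one_right (abs_nonneg _) (ind_le_one _ _))
          (hξ_nonneg ω)).trans (r.integral_mul_abs_blockSum_compl_le hξ hξ_nonneg)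
    have hmass : ∫ ω, ξ ω * ind (Set.Ici (y - α - κ * τ)) (W ω - v ω) ∂μ ≤ ∫ ω, ξ ω ∂μ :=
      (hξ.bdd.mul (hIci _)).integral_mono hξ.bdd fun ω =>
        mul_le_of_le_one_right (hξ_nonneg ω) (ind_le_one _ _)
    have hξ_int : 0 ≤ ∫ ω, ξ ω ∂μ := integral_nonneg hξ_nonneg
    calc q y ≤ 6 * α * (9 / 2 * ∫ ω, ξ ω ∂μ) + 3 * α * (∫ ω, ξ ω ∂μ) +
          α / 24 * (∫ ω, ξ ω ∂μ) + 12 * δ * (α / 24) / α := by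
          refine (r.integral_mul_ind_Icc_le hξ hξ_nonneg hv hα_pos (le_ciSup hq_bdd)
            (r.half_le_integral_sq_sub i) y).trans ?_
          gcongr
      _ = 30 * α * (∫ ω, ξ ω ∂μ) + α / 24 * (∫ ω, ξ ω ∂μ) + δ / 2 := by field_simp; ring
      _ ≤ 31 * α * (∫ ω, ξ ω ∂μ) + δ / 2 := by nlinarith
  have hδ : δ ≤ 31 * α * (∫ ω, ξ ω ∂μ) + δ / 2 := ciSup_le hq
  linarith [le_ciSup hq_bdd x]

theorem integral_mul_ind_Icc_le_local (hξ : BlockFun X (B i) ξ) (hξ_nonneg : ∀ ω, 0 ≤ ξ ω)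
    (hv : BlockFun X (B i) v) (hv_le : ∀ ω, |v ω| ≤ 2 * (κ * τ)) (hα : α = 24 * η * Z ^ 6) {x : ℝ}
    (hx : Z - 2 ≤ x) :
    ∫ ω, ξ ω * ind (Set.Icc x (x + α)) (W ω - v ω) ∂μ ≤
      10 ^ 19 * α * (Z ^ 3)⁻¹ * ∫ ω, ξ ω ∂μ := by
  have hα_pos := r.width_pos hα
  have hα_le : α ≤ 1 / 2 := by linarith [r.error_mul_le]
  have hblock := r.block_le
  have hZ := r.one_le_level
  have hU := r.bdd_blockSum (C i)ᶜ
  have hW := r.bdd_blockSum Finset.univ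
  have hξ_int : 0 ≤ ∫ ω, ξ ω ∂μ := integral_nonneg hξ_nonneg
  have hIci (y : ℝ) : BddMeasurable fun ω => ind (Set.Ici y) (W ω - v ω) :=
    .ind (hW.sub hv.bdd).measurable measurableSet_Ici
  have htail := r.integral_weighted_tail_le hξ hξ_nonneg
  have htail_bdd : BddMeasurable fun ω =>
      ξ ω * ((1 + |W ω| + |blockSum X (C i)ᶜ ω|) * ind (Set.Ici (Z / 4 - 4)) (W ω)) :=
    hξ.bdd.mul ((((BddMeasurable.const 1).add hW.abs).add hU.abs).mul (r.bdd_ind_Ici _))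
  have hind_le {y : ℝ} (hy : Z - 5 / 2 - Z / 16 ≤ y) (ω : Ω) :
      ind (Set.Ici y) (W ω - v ω) ≤ ind (Set.Ici (Z / 4 - 4)) (W ω) :=
    ind_le_ind fun hmem => by
      rw [Set.mem_Ici] at hmem ⊢
      linarith [(abs_le.1 (hv_le ω)).1]
  have habs : ∫ ω, ξ ω * (|blockSum X (C i)ᶜ ω| * ind (Set.Ici (x - α)) (W ω - v ω)) ∂μ ≤
      10 ^ 17 * (Z ^ 3)⁻¹ * ∫ ω, ξ ω ∂μ :=
    ((hξ.bdd.mul (hU.abs.mul (hIci _))).integral_mono htail_bdd fun ω =>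
      mul_le_mul_of_nonneg_left (mul_le_mul (by linarith [abs_nonneg (W ω)])
        (hind_le (by linarith) ω) (ind_nonneg _ _) (by positivity)) (hξ_nonneg ω)).trans htail
  have hmass : ∫ ω, ξ ω * ind (Set.Ici (x - α - κ * τ)) (W ω - v ω) ∂μ ≤
      10 ^ 17 * (Z ^ 3)⁻¹ * ∫ ω, ξ ω ∂μ :=
    ((hξ.bdd.mul (hIci _)).integral_mono htail_bdd fun ω =>
      mul_le_mul_of_nonneg_left ((hind_le (by linarith) ω).trans (le_mul_of_one_le_left
        (ind_nonneg _ _) (by linarith [abs_nonneg (W ω), abs_nonneg (blockSum X (C i)ᶜ ω)])))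
          (hξ_nonneg ω)).trans htail
  calc ∫ ω, ξ ω * ind (Set.Icc x (x + α)) (W ω - v ω) ∂μ
      ≤ 6 * α * (10 ^ 17 * (Z ^ 3)⁻¹ * ∫ ω, ξ ω ∂μ) + 3 * α * (10 ^ 17 * (Z ^ 3)⁻¹ * ∫ ω, ξ ω ∂μ) +
          α / 24 * (Z ^ 3)⁻¹ * (∫ ω, ξ ω ∂μ) +
          12 * (62 * α * ∫ ω, ξ ω ∂μ) * (α / 24 * (Z ^ 3)⁻¹) / α := by
        refine (r.integral_mul_ind_Icc_le hξ hξ_nonneg hv hα_pos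
          (r.integral_mul_ind_Icc_le_uniform hξ hξ_nonneg hv hα)
          (r.half_le_integral_sq_sub i) x).trans ?_
        have hβ := r.sq_mul_sumThirdMoments_le_width hα
        gcongr
    _ = (9 * 10 ^ 17 + 1 / 24 + 31) * (α * (Z ^ 3)⁻¹ * ∫ ω, ξ ω ∂μ) := by field_simp; ring
    _ ≤ 10 ^ 19 * (α * (Z ^ 3)⁻¹ * ∫ ω, ξ ω ∂μ) := by gcongr; norm_num
    _ = 10 ^ 19 * α * (Z ^ 3)⁻¹ * ∫ ω, ξ ω ∂μ := by ring

end TailRegime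

end Concentration

section TailEnvelope

/-- An upper bound for `(1 + |x|) * tailBound Z x` that is uniform over `|x - w| ≤ Z / 16`. -/
noncomputable def tailEnvelope (Z w : ℝ) : ℝ :=
  2 * (Z ^ 4)⁻¹ * (1 + Z + |w|) + 2 * ((1 + |w|) * ind (Set.Ici (Z / 4 - 4)) w)

lemma one_add_abs_mul_tailBound_le {Z w x : ℝ} (hZ : 1 ≤ Z) (hxw : |x - w| ≤ Z / 16) :
    (1 + |x|) * tailBound Z x ≤ tailEnvelope Z w := by
  have hx : |x| ≤ |w| + Z / 16 := by linarith [abs_sub_abs_le_abs_sub x w]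
  have hZ4 : 0 < (Z ^ 4)⁻¹ := by positivity
  have hw_nonneg := abs_nonneg w
  have hinv : (1 + |x|) * (Z ^ 4)⁻¹ ≤ 2 * (Z ^ 4)⁻¹ * (1 + Z + |w|) := by nlinarith
  have hind : (1 + |x|) * ind (Set.Ici (Z / 2 - 3)) x ≤
      2 * ((1 + |w|) * ind (Set.Ici (Z / 4 - 4)) w) := by
    by_cases hmem : Z / 2 - 3 ≤ x
    · have hw : Z / 4 - 4 ≤ w := by linarith [(abs_le.1 hxw).2]
      rw [ind_of_mem (Set.mem_Ici.2 hmem), ind_of_mem (Set.mem_Ici.2 hw)]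
      linarith [le_abs_self w, (abs_le.1 hxw).2]
    · rw [ind_of_notMem (Set.mem_Ici.not.2 hmem), mul_zero]
      have := ind_nonneg (Set.Ici (Z / 4 - 4)) w
      positivity
  rw [tailBound, tailEnvelope, mul_add]
  exact add_le_add hinv hind

lemma abs_mul_steinSol_sub_le {h : ℝ → ℝ} (hc : Continuous h)
    (hh : ∀ x, h x ∈ Set.Icc (0 : ℝ) 1) {Z a w x y : ℝ} (hZ : 1 ≤ Z) (hZa : Z - 2 ≤ a)
    (h0 : ∀ x ≤ a, h x = 0) (hx : |x - w| ≤ Z / 16) (hy : |y - w| ≤ Z / 16) :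
    |x * steinSol h x - y * steinSol h y| ≤ steinConst * tailEnvelope Z w * |x - y| := by
  refine (convex_closedBall w (Z / 16)).norm_image_sub_le_of_norm_hasDerivWithin_le
    (f := fun x => x * steinSol h x) (f' := steinMulDeriv h)
    (fun x _ => (hasDerivAt_mul_steinSol hc hh x).hasDerivWithinAt) (fun x hx => ?_) hy hx
  obtain ⟨hsol, hderiv⟩ := abs_steinSol_le_tailBound hc hh hZ hZa h0 x
  calc ‖steinMulDeriv h x‖ ≤ steinConst * tailBound Z x * (1 + |x|) :=
        abs_steinMulDeriv_le hsol hderiv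
    _ = steinConst * ((1 + |x|) * tailBound Z x) := by ring
    _ ≤ steinConst * tailEnvelope Z w :=
        mul_le_mul_of_nonneg_left (one_add_abs_mul_tailBound_le hZ hx) steinConst_pos.le

lemma abs_steinSolDeriv_sub_le {h : ℝ → ℝ} (hc : Continuous h)
    (hh : ∀ x, h x ∈ Set.Icc (0 : ℝ) 1) {Z a w x y : ℝ} (hZ : 1 ≤ Z) (hZa : Z - 2 ≤ a)
    (h0 : ∀ x ≤ a, h x = 0) (hx : |x - w| ≤ Z / 16) (hy : |y - w| ≤ Z / 16) :
    |steinSolDeriv h x - steinSolDeriv h y| ≤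
      steinConst * tailEnvelope Z w * |x - y| + |h x - h y| := by
  have hsplit : steinSolDeriv h x - steinSolDeriv h y =
      (x * steinSol h x - y * steinSol h y) + (h x - h y) := by
    unfold steinSolDeriv
    ring
  rw [hsplit]
  exact (abs_add_le _ _).trans
    (add_le_add_left (abs_mul_steinSol_sub_le hc hh hZ hZa h0 hx hy) _)

lemma tailEnvelope_le {Z u w : ℝ} (hwu : |w| ≤ |u| + 2 * Z - 1) :
    tailEnvelope Z w ≤ 2 * (Z ^ 4)⁻¹ * (3 * Z + |u|) +
      2 * ((1 + |w| + |u|) * ind (Set.Ici (Z / 4 - 4)) w) := by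
  refine add_le_add (mul_le_mul_of_nonneg_left (by linarith) (by positivity))
    (mul_le_mul_of_nonneg_left ?_ zero_le_two)
  exact mul_le_mul_of_nonneg_right (le_add_of_nonneg_right (abs_nonneg u)) (ind_nonneg _ w)

end TailEnvelope

lemma abs_ramp_sub_ramp {a b : ℝ} (hab : a < b) (u v₁ v₂ : ℝ) :
    |ramp a b (u - v₁) - ramp a b (u - v₂)| =
      |v₁ - v₂| * ∫ t in (0 : ℝ)..1, (b - a)⁻¹ *
        ind (Set.Icc a b) (u - (v₂ + (v₁ - v₂) * t)) := by
  have hpath (t : ℝ) : u - v₂ + (u - v₁ - (u - v₂)) * t = u - (v₂ + (v₁ - v₂) * t) := by ring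
  have hinv : 0 ≤ (b - a)⁻¹ := (inv_pos.2 (sub_pos.2 hab)).le
  simp only [ramp_sub_ramp hab, hpath]
  rw [abs_mul, sub_sub_sub_cancel_left, abs_sub_comm, abs_of_nonneg
    (intervalIntegral.integral_nonneg zero_le_one fun t _ => mul_nonneg hinv (ind_nonneg _ _))]

section RampApproximation

variable {Ω ι : Type*} [MeasurableSpace Ω] [Fintype ι] [DecidableEq ι] {μ : Measure Ω}
  {X : ι → Ω → ℝ} {A B C : ι → Finset ι} {κ τ η Z a b : ℝ} {i : ι} {ξ v₁ v₂ : Ω → ℝ}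

local notation "W" => blockSum X Finset.univ

namespace TailRegime

variable (r : TailRegime μ X A B C κ τ η Z)
include r

lemma bdd_tailEnvelope : BddMeasurable fun ω => tailEnvelope Z (W ω) :=
  ((BddMeasurable.const _).mul ((BddMeasurable.const _).add (r.bdd_blockSum _).abs)).add
    ((BddMeasurable.const _).mul
      (((BddMeasurable.const _).add (r.bdd_blockSum _).abs).mul (r.bdd_ind_Ici _)))

lemma lt_of_eq_add_width (hb : b = a + 24 * η * Z ^ 6) : a < b := by
  have := r.width_pos rfl
  linarith

variable [IsProbabilityMeasure μ]

lemma integral_mul_tailEnvelope_le (hξ : BlockFun X (B i) ξ) (hξ_nonneg : ∀ ω, 0 ≤ ξ ω) :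
    ∫ ω, ξ ω * tailEnvelope Z (W ω) ∂μ ≤ 10 ^ 18 * (Z ^ 3)⁻¹ * ∫ ω, ξ ω ∂μ := by
  have hZ := r.one_le_level
  set U := blockSum X (C i)ᶜ
  have hU : BddMeasurable fun ω => ξ ω * |U ω| := hξ.bdd.mul (r.bdd_blockSum _).abs
  have htail : BddMeasurable fun ω =>
      ξ ω * ((1 + |W ω| + |U ω|) * ind (Set.Ici (Z / 4 - 4)) (W ω)) :=
    hξ.bdd.mul ((((BddMeasurable.const 1).add (r.bdd_blockSum _).abs).add
      (r.bdd_blockSum _).abs).mul (r.bdd_ind_Ici _))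
  have hconst := (BddMeasurable.const (2 * (Z ^ 4)⁻¹ * (3 * Z))).mul hξ.bdd
  have hUconst := (BddMeasurable.const (2 * (Z ^ 4)⁻¹)).mul hU
  have htail2 := (BddMeasurable.const 2).mul htail
  have hpoint (ω : Ω) : ξ ω * tailEnvelope Z (W ω) ≤ 2 * (Z ^ 4)⁻¹ * (3 * Z) * ξ ω +
      2 * (Z ^ 4)⁻¹ * (ξ ω * |U ω|) +
      2 * (ξ ω * ((1 + |W ω| + |U ω|) * ind (Set.Ici (Z / 4 - 4)) (W ω))) := by
    have hW : |W ω| ≤ |U ω| + 2 * Z - 1 := by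
      linarith [abs_sub_abs_le_abs_sub (W ω) (U ω), r.abs_sub_blockSum_compl_le i ω]
    exact (mul_le_mul_of_nonneg_left (tailEnvelope_le hW)
      (hξ_nonneg ω)).trans_eq (by ring)
  have hξ_int : 0 ≤ ∫ ω, ξ ω ∂μ := integral_nonneg hξ_nonneg
  calc ∫ ω, ξ ω * tailEnvelope Z (W ω) ∂μ
      ≤ 2 * (Z ^ 4)⁻¹ * (3 * Z) * (∫ ω, ξ ω ∂μ) + 2 * (Z ^ 4)⁻¹ * (∫ ω, ξ ω * |U ω| ∂μ) +
          2 * ∫ ω, ξ ω * ((1 + |W ω| + |U ω|) * ind (Set.Ici (Z / 4 - 4)) (W ω)) ∂μ := by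
        refine ((hξ.bdd.mul r.bdd_tailEnvelope).integral_mono
          ((hconst.add hUconst).add htail2) hpoint).trans_eq ?_
        rw [integral_add (hconst.add hUconst).integrable htail2.integrable,
          integral_add hconst.integrable hUconst.integrable, integral_const_mul,
          integral_const_mul, integral_const_mul]
    _ ≤ 2 * (Z ^ 4)⁻¹ * (3 * Z) * (∫ ω, ξ ω ∂μ) + 2 * (Z ^ 3)⁻¹ * (9 / 2 * ∫ ω, ξ ω ∂μ) +
          2 * (10 ^ 17 * (Z ^ 3)⁻¹ * ∫ ω, ξ ω ∂μ) := by
        gcongr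
        exacts [integral_nonneg fun ω => mul_nonneg (hξ_nonneg ω) (abs_nonneg _), by norm_num,
          r.integral_mul_abs_blockSum_compl_le hξ hξ_nonneg,
          r.integral_weighted_tail_le hξ hξ_nonneg]
    _ = (15 + 2 * 10 ^ 17) * ((Z ^ 3)⁻¹ * ∫ ω, ξ ω ∂μ) := by field_simp; ring
    _ ≤ 10 ^ 18 * ((Z ^ 3)⁻¹ * ∫ ω, ξ ω ∂μ) := by gcongr; norm_num
    _ = 10 ^ 18 * (Z ^ 3)⁻¹ * ∫ ω, ξ ω ∂μ := by ring

lemma integral_mul_abs_ramp_sub_le (hξ : BlockFun X (B i) ξ) (hξ_nonneg : ∀ ω, 0 ≤ ξ ω)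
    (hv₁ : BlockFun X (B i) v₁) (hv₂ : BlockFun X (B i) v₂) (hv₁_le : ∀ ω, |v₁ ω| ≤ κ * τ)
    (hv₂_le : ∀ ω, |v₂ ω| ≤ κ * τ) (ha : Z - 2 ≤ a) (hb : b = a + 24 * η * Z ^ 6) :
    ∫ ω, ξ ω * |ramp a b (W ω - v₁ ω) - ramp a b (W ω - v₂ ω)| ∂μ ≤
      10 ^ 19 * (Z ^ 3)⁻¹ * ∫ ω, ξ ω * |v₁ ω - v₂ ω| ∂μ := by
  have hab := r.lt_of_eq_add_width hb
  have hwidth : b - a = 24 * η * Z ^ 6 := by linarith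
  have hinv_pos : 0 < (b - a)⁻¹ := inv_pos.2 (sub_pos.2 hab)
  set ζ : Ω → ℝ := fun ω => ξ ω * |v₁ ω - v₂ ω|
  have hζ : BlockFun X (B i) ζ := hξ.mul (hv₁.sub hv₂).abs
  have hζ_nonneg (ω : Ω) : 0 ≤ ζ ω := mul_nonneg (hξ_nonneg ω) (abs_nonneg _)
  set v : ℝ → Ω → ℝ := fun t ω => v₂ ω + (v₁ ω - v₂ ω) * t with hv_def
  have hv (t : ℝ) : BlockFun X (B i) (v t) := hv₂.add ((hv₁.sub hv₂).mul (.const t))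
  have hv_le {t : ℝ} (ht : t ∈ Set.Ioc (0 : ℝ) 1) (ω : Ω) : |v t ω| ≤ 2 * (κ * τ) := by
    have h₁ := abs_le.1 (hv₁_le ω)
    have h₂ := abs_le.1 (hv₂_le ω)
    refine abs_le.2 ⟨?_, ?_⟩ <;> simp only [hv_def] <;> nlinarith [ht.1, ht.2]
  set F : ℝ → Ω → ℝ := fun t ω => ζ ω * ((b - a)⁻¹ * ind (Set.Icc a b) (W ω - v t ω)) with hF
  have hF_bdd : BddMeasurable fun q : ℝ × Ω => F q.1 q.2 := by
    have hW := (r.bdd_blockSum Finset.univ).measurable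
    have hv₁_meas := hv₁.bdd.measurable
    have hv₂_meas := hv₂.bdd.measurable
    exact (hζ.bdd.comp measurable_snd).mul
      ((BddMeasurable.const _).mul (.ind (by fun_prop) measurableSet_Icc))
  have hramp (ω : Ω) : ξ ω * |ramp a b (W ω - v₁ ω) - ramp a b (W ω - v₂ ω)| =
      ∫ t in (0 : ℝ)..1, F t ω := by
    rw [abs_ramp_sub_ramp hab, ← mul_assoc]
    exact (intervalIntegral.integral_const_mul _ _).symm
  obtain ⟨K, hK⟩ := hF_bdd.exists_abs_le
  simp only [hramp]
  have hle := (le_abs_self _).trans (abs_integral_intervalIntegral_le (μ := μ) zero_le_one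
    hF_bdd.measurable (fun t _ ω => hK (t, ω))
    (D := 10 ^ 19 * (Z ^ 3)⁻¹ * ∫ ω, ζ ω ∂μ) fun t ht => ?_)
  · rwa [sub_zero, mul_one] at hle
  · have hconc := r.integral_mul_ind_Icc_le_local hζ hζ_nonneg (hv t) (hv_le ht) hwidth ha
    rw [add_sub_cancel] at hconc
    have hF_nonneg (ω : Ω) : 0 ≤ F t ω :=
      mul_nonneg (hζ_nonneg ω) (mul_nonneg hinv_pos.le (ind_nonneg _ _))
    calc ∫ ω, |F t ω| ∂μ = (b - a)⁻¹ * ∫ ω, ζ ω * ind (Set.Icc a b) (W ω - v t ω) ∂μ := by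
          simp only [abs_of_nonneg (hF_nonneg _)]
          simp only [hF, mul_left_comm (ζ _), integral_const_mul]
      _ ≤ (b - a)⁻¹ * (10 ^ 19 * (b - a) * (Z ^ 3)⁻¹ * ∫ ω, ζ ω ∂μ) := by gcongr
      _ = 10 ^ 19 * (Z ^ 3)⁻¹ * ∫ ω, ζ ω ∂μ := by
          have := (sub_pos.2 hab).ne'
          field_simp

lemma meanLipschitz_steinSolDeriv_ramp (ha : Z - 2 ≤ a) (hb : b = a + 24 * η * Z ^ 6) :
    MeanLipschitz μ X B (κ * τ) ((10 ^ 18 * steinConst + 10 ^ 19) * (Z ^ 3)⁻¹)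
      (steinSolDeriv (ramp a b)) := by
  intro i ξ v₁ v₂ hξ hv₁ hv₂ hξ_nonneg hv₁_le hv₂_le
  have hab := r.lt_of_eq_add_width hb
  set h := ramp a b
  have hc : Continuous h := continuous_ramp a b
  have hh : ∀ x, h x ∈ Set.Icc (0 : ℝ) 1 := ramp_mem_Icc a b
  have hζ : BlockFun X (B i) fun ω => ξ ω * |v₁ ω - v₂ ω| := hξ.mul (hv₁.sub hv₂).abs
  have hζ_nonneg (ω : Ω) : 0 ≤ ξ ω * |v₁ ω - v₂ ω| := mul_nonneg (hξ_nonneg ω) (abs_nonneg _)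
  have hcomp {f : ℝ → ℝ} (hf : Continuous f) :
      BddMeasurable fun ω => ξ ω * |f (W ω - v₁ ω) - f (W ω - v₂ ω)| :=
    hξ.bdd.mul ((((r.bdd_blockSum _).sub hv₁.bdd).comp_continuous hf).sub
      (((r.bdd_blockSum _).sub hv₂.bdd).comp_continuous hf)).abs
  have henv : BddMeasurable fun ω =>
      steinConst * (ξ ω * |v₁ ω - v₂ ω| * tailEnvelope Z (W ω)) :=
    (BddMeasurable.const _).mul (hζ.bdd.mul r.bdd_tailEnvelope)
  have hnear {v : ℝ} (hv : |v| ≤ κ * τ) (ω : Ω) : |W ω - v - W ω| ≤ Z / 16 := by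
    rw [sub_sub_cancel_left, abs_neg]
    exact hv.trans r.block_le
  have hpoint (ω : Ω) :
      ξ ω * |steinSolDeriv h (W ω - v₁ ω) - steinSolDeriv h (W ω - v₂ ω)| ≤
        steinConst * (ξ ω * |v₁ ω - v₂ ω| * tailEnvelope Z (W ω)) +
          ξ ω * |h (W ω - v₁ ω) - h (W ω - v₂ ω)| := by
    have hsub := abs_steinSolDeriv_sub_le hc hh r.one_le_level ha (fun x hx => ramp_of_le hab hx)
      (hnear (hv₁_le ω) ω) (hnear (hv₂_le ω) ω)
    rw [sub_sub_sub_cancel_left, abs_sub_comm (v₂ ω)] at hsub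
    exact (mul_le_mul_of_nonneg_left hsub (hξ_nonneg ω)).trans_eq (by ring)
  calc ∫ ω, ξ ω * |steinSolDeriv h (W ω - v₁ ω) - steinSolDeriv h (W ω - v₂ ω)| ∂μ
      ≤ steinConst * (∫ ω, ξ ω * |v₁ ω - v₂ ω| * tailEnvelope Z (W ω) ∂μ) +
          ∫ ω, ξ ω * |h (W ω - v₁ ω) - h (W ω - v₂ ω)| ∂μ := by
        refine ((hcomp (continuous_steinSolDeriv hc hh)).integral_mono (henv.add (hcomp hc))
          hpoint).trans_eq ?_
        rw [integral_add henv.integrable (hcomp hc).integrable, integral_const_mul]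
    _ ≤ steinConst * (10 ^ 18 * (Z ^ 3)⁻¹ * ∫ ω, ξ ω * |v₁ ω - v₂ ω| ∂μ) +
          10 ^ 19 * (Z ^ 3)⁻¹ * ∫ ω, ξ ω * |v₁ ω - v₂ ω| ∂μ :=
        add_le_add (mul_le_mul_of_nonneg_left (r.integral_mul_tailEnvelope_le hζ hζ_nonneg)
          steinConst_pos.le)
          (r.integral_mul_abs_ramp_sub_le hξ hξ_nonneg hv₁ hv₂ hv₁_le hv₂_le ha hb)
    _ = (10 ^ 18 * steinConst + 10 ^ 19) * (Z ^ 3)⁻¹ * ∫ ω, ξ ω * |v₁ ω - v₂ ω| ∂μ := by ring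

lemma integral_ind_Ici_half_le :
    ∫ ω, ind (Set.Ici (Z / 2 - 3)) (W ω) ∂μ ≤ 3 * 10 ^ 16 * (Z ^ 2)⁻¹ := by
  have hZ := r.one_le_level
  rcases lt_or_ge Z 7 with hZ_lt | hZ_ge
  · calc ∫ ω, ind (Set.Ici (Z / 2 - 3)) (W ω) ∂μ ≤ ∫ _, (1 : ℝ) ∂μ :=
          (r.bdd_ind_Ici _).integral_mono (.const 1) fun ω => ind_le_one _ _
      _ = 3 * 10 ^ 16 * (3 * 10 ^ 16)⁻¹ := by
          rw [integral_const, probReal_univ, one_smul]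
          norm_num
      _ ≤ 3 * 10 ^ 16 * (Z ^ 2)⁻¹ := by
          gcongr
          nlinarith
  · refine (r.integral_ind_Ici_le_inv (by linarith)).trans ?_
    gcongr <;> norm_num

lemma abs_integral_steinSolDeriv_ramp_le (hab : a < b) (ha : Z - 2 ≤ a) :
    |∫ ω, steinSolDeriv (ramp a b) (W ω) ∂μ| ≤ steinConst * (4 * 10 ^ 16 * (Z ^ 2)⁻¹) := by
  have hZ := r.one_le_level
  have hind := r.bdd_ind_Ici (Z / 2 - 3)
  have hderiv := continuous_steinSolDeriv (continuous_ramp a b) (ramp_mem_Icc a b)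
  have hinv : (Z ^ 4)⁻¹ ≤ (Z ^ 2)⁻¹ := by gcongr; norm_num
  have hinv_pos : 0 < (Z ^ 2)⁻¹ := by positivity
  calc |∫ ω, steinSolDeriv (ramp a b) (W ω) ∂μ|
      ≤ ∫ ω, |steinSolDeriv (ramp a b) (W ω)| ∂μ := abs_integral_le_integral_abs
    _ ≤ ∫ ω, steinConst * tailBound Z (W ω) ∂μ :=
        ((r.bdd_blockSum _).comp_continuous hderiv).abs.integral_mono
          ((BddMeasurable.const _).mul ((BddMeasurable.const _).add hind)) fun ω =>
            (abs_steinSol_le_tailBound (continuous_ramp a b) (ramp_mem_Icc a b) hZ ha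
              (fun x hx => ramp_of_le hab hx) _).2
    _ = steinConst * ((Z ^ 4)⁻¹ + ∫ ω, ind (Set.Ici (Z / 2 - 3)) (W ω) ∂μ) := by
        unfold tailBound
        rw [integral_const_mul, integral_add (integrable_const _) hind.integrable, integral_const,
          probReal_univ, one_smul]
    _ ≤ steinConst * (4 * 10 ^ 16 * (Z ^ 2)⁻¹) :=
        mul_le_mul_of_nonneg_left (by linarith [r.integral_ind_Ici_half_le]) steinConst_pos.le

theorem abs_integral_ramp_sub_integral_stdGaussian_le (ha : Z - 2 ≤ a)
    (hb : b = a + 24 * η * Z ^ 6) :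
    |∫ ω, ramp a b (W ω) ∂μ - ∫ x, ramp a b x ∂gaussianReal 0 1| ≤
      10 ^ 20 * (steinConst + 1) * η := by
  have hab := r.lt_of_eq_add_width hb
  have hZ := r.one_le_level
  have hη := r.error_pos
  have hc_pos := steinConst_pos
  set h := ramp a b
  have hc : Continuous h := continuous_ramp a b
  have hh : ∀ x, h x ∈ Set.Icc (0 : ℝ) 1 := ramp_mem_Icc a b
  have hderiv := hasDerivAt_steinSol hc hh
  have hstein := r.abs_integral_mul_comp_sub_integral_sq_mul_le (continuous_steinSolDeriv hc hh)
    hderiv (by positivity) (r.meanLipschitz_steinSolDeriv_ramp ha hb)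
  have hequation : ∫ ω, steinSolDeriv h (W ω) ∂μ =
      ∫ ω, W ω * steinSol h (W ω) ∂μ + (∫ ω, h (W ω) ∂μ - ∫ x, h x ∂gaussianReal 0 1) := by
    have hsol := (r.bdd_blockSum Finset.univ).mul
      ((r.bdd_blockSum Finset.univ).comp_continuous (continuous_of_hasDerivAt hderiv))
    have hramp := (r.bdd_blockSum Finset.univ).comp_continuous hc
    unfold steinSolDeriv
    rw [integral_add hsol.integrable (hramp.sub (.const _)).integrable,
      integral_sub hramp.integrable (integrable_const _), integral_const, probReal_univ, one_smul]
  set D := ∫ ω, steinSolDeriv h (W ω) ∂μ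
  have hvariance : |(1 - ∫ ω, W ω ^ 2 ∂μ) * D| ≤ 4 * 10 ^ 16 * steinConst * η := by
    rw [abs_mul, abs_sub_comm]
    calc _ ≤ η * Z ^ 2 * (steinConst * (4 * 10 ^ 16 * (Z ^ 2)⁻¹)) :=
          mul_le_mul r.abs_variance_sub_one_le (r.abs_integral_steinSolDeriv_ramp_le hab ha)
            (abs_nonneg _) (by positivity)
      _ = 4 * 10 ^ 16 * steinConst * η := by field_simp
  have hthird : 3 * ((10 ^ 18 * steinConst + 10 ^ 19) * (Z ^ 3)⁻¹) *
      (κ ^ 2 * sumThirdMoments μ X) ≤ 3 * (10 ^ 18 * steinConst + 10 ^ 19) * η :=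
    (mul_le_mul_of_nonneg_left r.sq_mul_sumThirdMoments_le (by positivity)).trans_eq
      (by field_simp)
  calc |∫ ω, h (W ω) ∂μ - ∫ x, h x ∂gaussianReal 0 1|
      = |(1 - ∫ ω, W ω ^ 2 ∂μ) * D -
          (∫ ω, W ω * steinSol h (W ω) ∂μ - (∫ ω, W ω ^ 2 ∂μ) * D)| := by
        congr 1
        linarith
    _ ≤ 4 * 10 ^ 16 * steinConst * η + 3 * (10 ^ 18 * steinConst + 10 ^ 19) * η :=
        (abs_sub _ _).trans (add_le_add hvariance (hstein.trans hthird))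
    _ ≤ 10 ^ 20 * (steinConst + 1) * η := by nlinarith [mul_pos hc_pos hη]

end TailRegime

end RampApproximation

section TailApproximation

lemma one_le_steinConst : 1 ≤ steinConst := by
  have hexp : 1 ≤ exp 4 := one_le_exp (by norm_num)
  unfold steinConst
  linarith

lemma exp_neg_sq_half_le {Z t : ℝ} (hZ : 1 ≤ Z) (hZt : Z - 3 ≤ t) :
    exp (-t ^ 2 / 2) ≤ steinConst * (Z ^ 6)⁻¹ := by
  have hpow := pow_mul_exp_neg_le 6 (x := t) (y := Z) (by linarith) (by linarith)
  have hexp : exp (-t ^ 2 / 2) ≤ exp (-(3 * t ^ 2 / 8)) :=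
    exp_le_exp.2 (by linarith [sq_nonneg t])
  rw [← div_eq_mul_inv, le_div_iff₀ (by positivity), mul_comm]
  calc Z ^ 6 * exp (-t ^ 2 / 2) ≤ Z ^ 6 * exp (-(3 * t ^ 2 / 8)) := by gcongr
    _ ≤ (Nat.factorial 6) * exp 4 := hpow
    _ ≤ 9720 * exp 4 := by gcongr; norm_num [Nat.factorial]

lemma stdGaussianCDF_sub_le_mul {Z x y : ℝ} (hZ : 1 ≤ Z) (hZx : Z - 3 ≤ x) (hxy : x ≤ y) :
    stdGaussianCDF y - stdGaussianCDF x ≤ (y - x) * (steinConst * (Z ^ 6)⁻¹) :=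
  stdGaussianCDF_sub_le hxy fun t ht =>
    (stdGaussianPDF_le_exp t).trans (exp_neg_sq_half_le hZ (hZx.trans ht.1.le))

lemma abs_stdGaussianCDF_sub_le {Z x y : ℝ} (hZ : 1 ≤ Z) (hZx : Z - 3 ≤ x) (hZy : Z - 3 ≤ y) :
    |stdGaussianCDF x - stdGaussianCDF y| ≤ |x - y| * (steinConst * (Z ^ 6)⁻¹) := by
  wlog hxy : x ≤ y generalizing x y
  · rw [abs_sub_comm, abs_sub_comm x]
    exact this hZy hZx (le_of_not_ge hxy)
  · rw [abs_sub_comm, abs_sub_comm x, abs_of_nonneg (sub_nonneg.2 (stdGaussianCDF_mono hxy)),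
      abs_of_nonneg (sub_nonneg.2 hxy)]
    exact stdGaussianCDF_sub_le_mul hZ hZx hxy

lemma stdGaussianCDF_sub_le_of_level {Z η x y : ℝ} (hZ : 1 ≤ Z) (hZx : Z - 3 ≤ x) (hxy : x ≤ y)
    (hyx : y - x = 24 * η * Z ^ 6) :
    stdGaussianCDF y - stdGaussianCDF x ≤ 24 * steinConst * η := by
  refine (stdGaussianCDF_sub_le_mul hZ hZx hxy).trans_eq ?_
  rw [hyx]
  field_simp

variable {Ω ι : Type*} [MeasurableSpace Ω]

lemma integral_ind_comp {μ : Measure Ω} {f : Ω → ℝ} (hf : Measurable f) {s : Set ℝ}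
    (hs : MeasurableSet s) :
    ∫ ω, ind s (f ω) ∂μ = μ.real {ω | f ω ∈ s} :=
  integral_indicator_one (hf hs)

variable [Fintype ι] [DecidableEq ι] {μ : Measure Ω} [IsProbabilityMeasure μ]
  {X : ι → Ω → ℝ} {A B C : ι → Finset ι} {κ τ η Z y : ℝ}

local notation "W" => blockSum X Finset.univ

namespace TailRegime

variable (r : TailRegime μ X A B C κ τ η Z)
include r

lemma measureReal_Ici_le (hy : |y - (Z - 1)| ≤ 1 / 2) :
    μ.real {ω | W ω ∈ Set.Ici y} ≤ 1 - stdGaussianCDF y + 10 ^ 21 * steinConst * η := by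
  have hy_lower := (abs_le.1 hy).1
  set α := 24 * η * Z ^ 6
  have hα_pos : 0 < α := r.width_pos rfl
  have hα_le : α ≤ 1 / 2 := by linarith [r.error_mul_le]
  have hramp := (abs_le.1 (r.abs_integral_ramp_sub_integral_stdGaussian_le (a := y - α) (b := y)
    (by linarith) (by linarith))).2
  have hgauss : ∫ x, ramp (y - α) y x ∂gaussianReal 0 1 ≤ 1 - stdGaussianCDF (y - α) := by
    rw [one_sub_stdGaussianCDF]
    exact integral_stdGaussian_le_of_eq_zero (continuous_ramp _ _) (ramp_mem_Icc _ _)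
      fun x hx => ramp_of_le (by linarith) hx
  have hcdf := stdGaussianCDF_sub_le_of_level (η := η) (x := y - α) (y := y)
    r.one_le_level (by linarith) (by linarith) (by linarith)
  have hind : ∫ ω, ind (Set.Ici y) (W ω) ∂μ ≤ ∫ ω, ramp (y - α) y (W ω) ∂μ := by
    refine (r.bdd_ind_Ici y).integral_mono
      ((r.bdd_blockSum _).comp_continuous (continuous_ramp _ _)) fun ω => ?_
    by_cases hw : y ≤ W ω
    · rw [ramp_of_ge (by linarith) hw]
      exact ind_le_one _ _
    · rw [ind_of_notMem (Set.mem_Ici.not.2 hw)]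
      exact (ramp_mem_Icc _ _ _).1
  rw [← integral_ind_comp (r.bdd_blockSum _).measurable measurableSet_Ici]
  nlinarith [r.error_pos, one_le_steinConst]

lemma le_measureReal_Ioi (hy : |y - (Z - 1)| ≤ 1 / 2) :
    1 - stdGaussianCDF y - 10 ^ 21 * steinConst * η ≤ μ.real {ω | W ω ∈ Set.Ioi y} := by
  have hy_lower := (abs_le.1 hy).1
  set α := 24 * η * Z ^ 6
  have hα_pos : 0 < α := r.width_pos rfl
  have hramp := (abs_le.1 (r.abs_integral_ramp_sub_integral_stdGaussian_le (a := y) (b := y + α)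
    (by linarith) rfl)).1
  have hgauss : 1 - stdGaussianCDF (y + α) ≤ ∫ x, ramp y (y + α) x ∂gaussianReal 0 1 := by
    rw [one_sub_stdGaussianCDF]
    exact stdGaussian_real_Ioi_le_integral_ramp (by linarith)
  have hcdf := stdGaussianCDF_sub_le_of_level (η := η) (x := y) (y := y + α)
    r.one_le_level (by linarith) (by linarith) (by ring)
  have hind : ∫ ω, ramp y (y + α) (W ω) ∂μ ≤ ∫ ω, ind (Set.Ioi y) (W ω) ∂μ := by
    refine ((r.bdd_blockSum _).comp_continuous (continuous_ramp _ _)).integral_mono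
      (.ind (r.bdd_blockSum _).measurable measurableSet_Ioi) fun ω => ?_
    by_cases hw : W ω ≤ y
    · rw [ramp_of_le (by linarith) hw]
      exact ind_nonneg _ _
    · rw [ind_of_mem (Set.mem_Ioi.2 (not_le.1 hw))]
      exact (ramp_mem_Icc _ _ _).2
  rw [← integral_ind_comp (r.bdd_blockSum _).measurable measurableSet_Ioi]
  nlinarith [r.error_pos, one_le_steinConst]

end TailRegime

namespace BddLocalDependence

variable (h : BddLocalDependence μ X A B C κ τ)
include h

lemma tails_le_of_lt_error_mul (hZ : 1 ≤ Z) (hη : 1 / 48 < η * Z ^ 6)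
    (hβ : κ ^ 2 * sumThirdMoments μ X ≤ η * Z ^ 3) (hsq : ∫ ω, W ω ^ 2 ∂μ ≤ 2)
    (hy : |y - (Z - 1)| ≤ 1 / 2) :
    μ.real {ω | W ω ∈ Set.Ici y} ≤ 10 ^ 21 * steinConst * η ∧
      1 - stdGaussianCDF y ≤ 10 ^ 21 * steinConst * η := by
  have hy_lower := (abs_le.1 hy).1
  have hc := one_le_steinConst
  have hη_pos : 0 < η := by
    have : 0 < Z ^ 6 := by positivity
    nlinarith
  have hcη : η ≤ steinConst * η := le_mul_of_one_le_left hη_pos.le hc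
  have hZη : (Z ^ 6)⁻¹ ≤ 48 * η := by
    rw [inv_le_iff_one_le_mul₀ (by positivity)]
    linarith
  rcases lt_or_ge Z 2 with hZ_lt | hZ_ge
  · have hone : 1 ≤ 48 * 2 ^ 6 * η := by
      have : Z ^ 6 ≤ 2 ^ 6 := by gcongr
      nlinarith
    have hprob := measureReal_le_one (μ := μ) (s := {ω | W ω ∈ Set.Ici y})
    have hcdf : 0 ≤ stdGaussianCDF y := stdGaussianCDF_eq_real y ▸ measureReal_nonneg
    constructor <;> linarith
  · constructor
    · have htail := h.integral_ind_Ici_le hZ hsq hβ hη_pos.le (by linarith : Z / 16 ≤ y)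
      rw [integral_ind_comp (h.bdd_blockSum _).measurable measurableSet_Ici] at htail
      linarith
    · have htail := stdGaussian_real_Ioi_le (by linarith : 0 ≤ y)
      have hexp := exp_neg_sq_half_le hZ (by linarith : Z - 3 ≤ y)
      have := mul_le_mul_of_nonneg_left hZη steinConst_pos.le
      rw [one_sub_stdGaussianCDF]
      linarith

theorem tail_bounds (hZ : 1 ≤ Z) (hη : 0 < η) (hblock : κ * τ ≤ Z / 16)
    (hβ : κ ^ 3 * sumThirdMoments μ X ≤ η * Z ^ 3) (hvar : |∫ ω, W ω ^ 2 ∂μ - 1| ≤ η * Z ^ 2)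
    (hηZ : η * Z ^ 2 ≤ 1) (hy : |y - (Z - 1)| ≤ 1 / 2) :
    μ.real {ω | W ω ∈ Set.Ici y} ≤ 1 - stdGaussianCDF y + 10 ^ 21 * steinConst * η ∧
      1 - stdGaussianCDF y - 10 ^ 21 * steinConst * η ≤ μ.real {ω | W ω ∈ Set.Ioi y} := by
  rcases le_or_gt (η * Z ^ 6) (1 / 48) with hsmall | hlarge
  · have r : TailRegime μ X A B C κ τ η Z := ⟨h, hZ, hη, hsmall, hblock, hβ, hvar⟩
    exact ⟨r.measureReal_Ici_le hy, r.le_measureReal_Ioi hy⟩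
  · have hβ_sq : κ ^ 2 * sumThirdMoments μ X ≤ η * Z ^ 3 :=
      (mul_le_mul_of_nonneg_right (pow_le_pow_right₀ h.one_le (by norm_num))
        sumThirdMoments_nonneg).trans hβ
    obtain ⟨htail, hgauss⟩ := h.tails_le_of_lt_error_mul hZ hlarge hβ_sq
      (by linarith [(abs_le.1 hvar).2]) hy
    have hcdf : stdGaussianCDF y ≤ 1 := stdGaussianCDF_eq_real y ▸ measureReal_le_one
    have hprob : 0 ≤ μ.real {ω | W ω ∈ Set.Ioi y} := measureReal_nonneg
    constructor <;> linarith

end BddLocalDependence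

end TailApproximation

section Truncation

variable {Ω : Type*} {Y Z : Ω → ℝ} {p t : ℝ}

lemma truncation_cases (Y : Ω → ℝ) (t : ℝ) (ω : Ω) :
    |Y ω| ≤ t ∧ truncation Y t ω = Y ω ∨ t ≤ |Y ω| ∧ truncation Y t ω = 0 := by
  rcases lt_or_ge (|Y ω|) t with hlt | hge
  · exact .inl ⟨hlt.le, truncation_eq_self hlt⟩
  · rcases hge.eq_or_lt with heq | hgt
    · by_cases hmem : Y ω ∈ Set.Ioc (-t) t
      · exact .inl ⟨heq.ge, Set.indicator_of_mem (a := Y ω) hmem id⟩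
      · exact .inr ⟨hge, Set.indicator_of_notMem (a := Y ω) hmem id⟩
    · have hmem : Y ω ∉ Set.Ioc (-t) t := fun hm => hgt.not_ge (abs_le.2 ⟨hm.1.le, hm.2⟩)
      exact .inr ⟨hge, Set.indicator_of_notMem (a := Y ω) hmem id⟩

lemma abs_truncation_le (ht : 0 ≤ t) (Y : Ω → ℝ) (ω : Ω) : |truncation Y t ω| ≤ t :=
  (abs_truncation_le_bound Y t ω).trans_eq (abs_of_nonneg ht)

lemma pow_abs_le_mul_rpow_of_le {x : ℝ} {k : ℕ} (hkp : k ≤ p) (ht : 0 < t) (hx : t ≤ |x|) :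
    |x| ^ k ≤ t ^ k * (|x| / t) ^ p := by
  have hone : 1 ≤ |x| / t := (one_le_div ht).2 hx
  have hpow : (|x| / t) ^ k ≤ (|x| / t) ^ p := by
    rw [← rpow_natCast]
    exact rpow_le_rpow_of_exponent_le hone hkp
  rwa [div_pow, div_le_iff₀' (by positivity)] at hpow

lemma pow_abs_le_mul_rpow_of_ge {x : ℝ} {k : ℕ} (hp : 0 < p) (hpk : p ≤ k) (ht : 0 < t)
    (hx : |x| ≤ t) : |x| ^ k ≤ t ^ k * (|x| / t) ^ p := by
  have hpow : (|x| / t) ^ k ≤ (|x| / t) ^ p := by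
    rw [← rpow_natCast]
    exact rpow_le_rpow_of_exponent_ge' (by positivity) ((div_le_one ht).2 hx) hp.le hpk
  rwa [div_pow, div_le_iff₀' (by positivity)] at hpow

lemma abs_sub_truncation_le (hp : 1 ≤ p) (ht : 0 < t) (ω : Ω) :
    |Y ω - truncation Y t ω| ≤ t * (|Y ω| / t) ^ p := by
  rcases truncation_cases Y t ω with ⟨-, htrunc⟩ | ⟨hge, htrunc⟩
  · rw [htrunc, sub_self, abs_zero]
    positivity
  · rw [htrunc, sub_zero]
    simpa only [pow_one] using pow_abs_le_mul_rpow_of_le (k := 1) (by simpa using hp) ht hge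

lemma abs_truncation_pow_three_le (hp : 0 < p) (hp₃ : p ≤ 3) (ht : 0 < t) (ω : Ω) :
    |truncation Y t ω| ^ 3 ≤ t ^ 3 * (|Y ω| / t) ^ p := by
  rcases truncation_cases Y t ω with ⟨hle, htrunc⟩ | ⟨-, htrunc⟩
  · rw [htrunc]
    exact pow_abs_le_mul_rpow_of_ge hp hp₃ ht hle
  · rw [htrunc, abs_zero, zero_pow three_ne_zero]
    positivity

lemma abs_mul_le_of_le_of_abs_le_abs {x y : ℝ} (hp : 2 ≤ p) (ht : 0 < t) (hy : t ≤ |y|)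
    (hxy : |x| ≤ |y|) : |x * y| ≤ t ^ 2 * (|y| / t) ^ p :=
  calc |x * y| ≤ |y| ^ 2 := by
        rw [abs_mul, sq]
        gcongr
    _ ≤ t ^ 2 * (|y| / t) ^ p := pow_abs_le_mul_rpow_of_le hp ht hy

lemma abs_mul_sub_truncation_mul_le (hp : 2 ≤ p) (ht : 0 < t) (ω : Ω) :
    |Y ω * Z ω - truncation Y t ω * truncation Z t ω| ≤
      t ^ 2 * ((|Y ω| / t) ^ p + (|Z ω| / t) ^ p) := by
  have hY : 0 ≤ t ^ 2 * (|Y ω| / t) ^ p := by positivity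
  have hZ : 0 ≤ t ^ 2 * (|Z ω| / t) ^ p := by positivity
  have hlarge (hmax : t ≤ |Y ω| ∨ t ≤ |Z ω|) :
      |Y ω * Z ω| ≤ t ^ 2 * ((|Y ω| / t) ^ p + (|Z ω| / t) ^ p) := by
    rcases le_total |Y ω| |Z ω| with h | h
    · have := abs_mul_le_of_le_of_abs_le_abs hp ht (hmax.elim h.trans' id) h
      linarith
    · have := abs_mul_le_of_le_of_abs_le_abs hp ht (hmax.elim id h.trans') h
      rw [mul_comm (Y ω)]
      linarith
  rcases truncation_cases Y t ω with ⟨-, hYt⟩ | ⟨hYge, hYt⟩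
  · rcases truncation_cases Z t ω with ⟨-, hZt⟩ | ⟨hZge, hZt⟩
    · rw [hYt, hZt, sub_self, abs_zero]
      linarith
    · rw [hZt, mul_zero, sub_zero]
      exact hlarge (.inr hZge)
  · rw [hYt, zero_mul, sub_zero]
    exact hlarge (.inl hYge)

variable [MeasurableSpace Ω]

lemma bddMeasurable_truncation (hYm : Measurable Y) (ht : 0 ≤ t) :
    BddMeasurable (truncation Y t) :=
  ⟨(measurable_id.indicator measurableSet_Ioc).comp hYm, t, abs_truncation_le ht Y⟩

/-- The `p`-th absolute moment `E (|Y| / t) ^ p` of `Y` in units of the truncation level `t`. It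
controls every error made by truncating `Y` at `t`. -/
noncomputable def scaledMoment (μ : Measure Ω) (Y : Ω → ℝ) (p t : ℝ) : ℝ :=
  ∫ ω, (|Y ω| / t) ^ p ∂μ

variable {μ : Measure Ω}

lemma scaledMoment_nonneg (ht : 0 < t) : 0 ≤ scaledMoment μ Y p t :=
  integral_nonneg fun ω => by positivity

lemma scaledMoment_eq_div (ht : 0 < t) :
    scaledMoment μ Y p t = (∫ ω, |Y ω| ^ p ∂μ) / t ^ p := by
  simp only [scaledMoment, div_rpow (abs_nonneg _) ht.le, integral_div]

lemma integrable_div_rpow (ht : 0 < t) (hY : Integrable (fun ω => |Y ω| ^ p) μ) :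
    Integrable (fun ω => (|Y ω| / t) ^ p) μ := by
  simpa only [div_rpow (abs_nonneg _) ht.le] using hY.div_const (t ^ p)

lemma memLp_two_of_integrable_rpow [IsFiniteMeasure μ] (hp : 2 ≤ p) (hYm : Measurable Y)
    (hY : Integrable (fun ω => |Y ω| ^ p) μ) : MemLp Y 2 μ := by
  have hp_pos : 0 < p := by linarith
  have hmem : MemLp Y (ENNReal.ofReal p) μ := by
    rw [← integrable_norm_rpow_iff hYm.aestronglyMeasurable (by simpa using hp_pos)
      ENNReal.ofReal_ne_top, ENNReal.toReal_ofReal hp_pos.le]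
    exact hY
  exact hmem.mono_exponent (by simpa using ENNReal.ofReal_le_ofReal hp)

lemma ae_eq_zero_of_scaledMoment_eq_zero (ht : 0 < t) (hp : 0 < p)
    (hY : Integrable (fun ω => |Y ω| ^ p) μ) (h : scaledMoment μ Y p t = 0) : Y =ᵐ[μ] 0 := by
  have hzero := (integral_eq_zero_iff_of_nonneg (fun ω => by positivity)
    (integrable_div_rpow ht hY)).1 h
  filter_upwards [hzero] with ω hω
  simpa [rpow_eq_zero (div_nonneg (abs_nonneg (Y ω)) ht.le) hp.ne', ht.ne'] using hω

lemma measureReal_le_scaledMoment [IsFiniteMeasure μ] (ht : 0 < t) (hp : 0 ≤ p)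
    (hY : Integrable (fun ω => |Y ω| ^ p) μ) : μ.real {ω | t ≤ |Y ω|} ≤ scaledMoment μ Y p t := by
  have hsub : {ω | t ≤ |Y ω|} ⊆ {ω | 1 ≤ (|Y ω| / t) ^ p} := fun ω hω =>
    one_le_rpow ((one_le_div ht).2 hω) hp
  have hmarkov := mul_meas_ge_le_integral_of_nonneg (.of_forall fun ω => by positivity)
    (integrable_div_rpow ht hY) 1
  rw [one_mul] at hmarkov
  exact (measureReal_mono hsub).trans hmarkov

variable [IsProbabilityMeasure μ]

lemma integral_abs_sub_mean_pow_three_le {f : Ω → ℝ} (hf : BddMeasurable f) :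
    ∫ ω, |f ω - ∫ ω', f ω' ∂μ| ^ 3 ∂μ ≤ 8 * ∫ ω, |f ω| ^ 3 ∂μ := by
  set m := ∫ ω, f ω ∂μ
  have hm : |m| ^ 3 ≤ ∫ ω, |f ω| ^ 3 ∂μ :=
    (pow_le_pow_left₀ (abs_nonneg _) abs_integral_le_integral_abs 3).trans
      (integral_abs_pow_three_le hf)
  have hpoint (ω : Ω) : |f ω - m| ^ 3 ≤ 4 * |f ω| ^ 3 + 4 * |m| ^ 3 := by
    calc |f ω - m| ^ 3 ≤ (|f ω| + |m|) ^ 3 := by gcongr; exact abs_sub _ _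
      _ ≤ 2 ^ (3 - 1) * (|f ω| ^ 3 + |m| ^ 3) := add_pow_le (abs_nonneg _) (abs_nonneg _) 3
      _ = 4 * |f ω| ^ 3 + 4 * |m| ^ 3 := by ring
  have hcube : BddMeasurable fun ω => 4 * |f ω| ^ 3 := (BddMeasurable.const 4).mul (hf.abs.pow 3)
  have hinteg := ((hf.sub (.const m)).abs.pow 3).integral_mono (μ := μ)
    (hcube.add (.const (4 * |m| ^ 3))) hpoint
  rw [integral_add hcube.integrable (BddMeasurable.const _).integrable, integral_const_mul,
    integral_const, probReal_univ, one_smul] at hinteg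
  linarith

lemma abs_integral_truncation_le (ht : 0 ≤ t) : |∫ ω, truncation Y t ω ∂μ| ≤ t := by
  have := norm_integral_le_of_norm_le_const (μ := μ) (f := truncation Y t) (C := t)
    (.of_forall fun ω => abs_truncation_le ht Y ω)
  rwa [probReal_univ, mul_one, norm_eq_abs] at this

lemma abs_integral_truncation_le_scaledMoment (hp : 2 ≤ p) (ht : 0 < t) (hYm : Measurable Y)
    (hY : Integrable (fun ω => |Y ω| ^ p) μ) (hY₀ : ∫ ω, Y ω ∂μ = 0) :
    |∫ ω, truncation Y t ω ∂μ| ≤ t * scaledMoment μ Y p t := by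
  have hYi : Integrable Y μ := (memLp_two_of_integrable_rpow hp hYm hY).integrable one_le_two
  have htrunc := (bddMeasurable_truncation hYm ht.le).integrable (μ := μ)
  have hmean : ∫ ω, (Y ω - truncation Y t ω) ∂μ = -∫ ω, truncation Y t ω ∂μ := by
    rw [integral_sub hYi htrunc, hY₀, zero_sub]
  rw [← abs_neg, ← hmean, scaledMoment, ← integral_const_mul]
  exact abs_integral_le_integral_abs.trans (integral_mono (hYi.sub htrunc).abs
    ((integrable_div_rpow ht hY).const_mul t) fun ω => abs_sub_truncation_le (by linarith) ht ω)

lemma integral_abs_truncation_sub_mean_pow_three_le (hp : 0 < p) (hp₃ : p ≤ 3) (ht : 0 < t)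
    (hYm : Measurable Y) (hY : Integrable (fun ω => |Y ω| ^ p) μ) :
    ∫ ω, |truncation Y t ω - ∫ ω', truncation Y t ω' ∂μ| ^ 3 ∂μ ≤
      8 * t ^ 3 * scaledMoment μ Y p t := by
  have htrunc := bddMeasurable_truncation hYm ht.le
  have hcube : ∫ ω, |truncation Y t ω| ^ 3 ∂μ ≤ t ^ 3 * scaledMoment μ Y p t := by
    rw [scaledMoment, ← integral_const_mul]
    exact integral_mono (htrunc.abs.pow 3).integrable ((integrable_div_rpow ht hY).const_mul _)
      fun ω => abs_truncation_pow_three_le hp hp₃ ht ω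
  linarith [integral_abs_sub_mean_pow_three_le (μ := μ) htrunc]

lemma abs_integral_mul_sub_integral_truncation_mul_le (hp : 2 ≤ p) (ht : 0 < t)
    (hYm : Measurable Y) (hY : Integrable (fun ω => |Y ω| ^ p) μ)
    (hZm : Measurable Z) (hZ : Integrable (fun ω => |Z ω| ^ p) μ) :
    |∫ ω, Y ω * Z ω ∂μ - ∫ ω, truncation Y t ω * truncation Z t ω ∂μ| ≤
      t ^ 2 * (scaledMoment μ Y p t + scaledMoment μ Z p t) := by
  have hprod : Integrable (fun ω => Y ω * Z ω) μ :=
    (memLp_two_of_integrable_rpow hp hYm hY).integrable_mul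
      (memLp_two_of_integrable_rpow hp hZm hZ)
  have htrunc := ((bddMeasurable_truncation hYm ht.le).mul
    (bddMeasurable_truncation hZm ht.le)).integrable (μ := μ)
  have hYs := integrable_div_rpow ht hY
  have hZs := integrable_div_rpow ht hZ
  rw [← integral_sub hprod htrunc, scaledMoment, scaledMoment, ← integral_add hYs hZs,
    ← integral_const_mul]
  exact abs_integral_le_integral_abs.trans (integral_mono (hprod.sub htrunc).abs
    ((hYs.add hZs).const_mul _) fun ω => abs_mul_sub_truncation_mul_le hp ht ω)

lemma abs_integral_mul_sub_covariance_truncation_le (hp : 2 ≤ p) (ht : 0 < t)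
    (hYm : Measurable Y) (hY : Integrable (fun ω => |Y ω| ^ p) μ)
    (hZm : Measurable Z) (hZ : Integrable (fun ω => |Z ω| ^ p) μ) (hZ₀ : ∫ ω, Z ω ∂μ = 0) :
    |∫ ω, Y ω * Z ω ∂μ - cov[truncation Y t, truncation Z t; μ]| ≤
      t ^ 2 * (scaledMoment μ Y p t + 2 * scaledMoment μ Z p t) := by
  have hprod := abs_integral_mul_sub_integral_truncation_mul_le hp ht hYm hY hZm hZ
  have hmeans : |(∫ ω, truncation Y t ω ∂μ) * ∫ ω, truncation Z t ω ∂μ| ≤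
      t * (t * scaledMoment μ Z p t) := by
    rw [abs_mul]
    exact mul_le_mul (abs_integral_truncation_le ht.le)
      (abs_integral_truncation_le_scaledMoment hp ht hZm hZ hZ₀) (abs_nonneg _) ht.le
  rw [covariance_eq_sub hYm.aestronglyMeasurable.memLp_truncation
    hZm.aestronglyMeasurable.memLp_truncation, ← sub_add]
  refine (abs_add_le _ _).trans ?_
  have := add_le_add hprod hmeans
  simp only [Pi.mul_apply]
  linarith

open Classical in
/-- The truncation of `Y` at level `t`, recentred. If `Y` vanishes almost surely this is `0`
everywhere and not merely almost everywhere, so that it is measurable for every σ-algebra. -/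
noncomputable def centredTruncation (μ : Measure Ω) (Y : Ω → ℝ) (t : ℝ) (ω : Ω) : ℝ :=
  if Y =ᵐ[μ] 0 then 0 else truncation Y t ω - ∫ ω', truncation Y t ω' ∂μ

end Truncation

section CentredTruncation

variable {Ω : Type*} [MeasurableSpace Ω] {μ : Measure Ω} {Y Z : Ω → ℝ} {p t : ℝ}

lemma centredTruncation_of_ae_eq_zero (h : Y =ᵐ[μ] 0) : centredTruncation μ Y t = 0 :=
  funext fun _ => if_pos h

lemma centredTruncation_of_not_ae_eq_zero (h : ¬Y =ᵐ[μ] 0) :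
    centredTruncation μ Y t = fun ω => truncation Y t ω - ∫ ω', truncation Y t ω' ∂μ :=
  funext fun _ => if_neg h

lemma centredTruncation_ae_eq :
    centredTruncation μ Y t =ᵐ[μ] fun ω => truncation Y t ω - ∫ ω', truncation Y t ω' ∂μ := by
  by_cases h : Y =ᵐ[μ] 0
  · have htrunc : truncation Y t =ᵐ[μ] 0 := by
      filter_upwards [h] with ω hω
      simp [truncation, hω]
    rw [centredTruncation_of_ae_eq_zero h, integral_eq_zero_of_ae htrunc]
    filter_upwards [htrunc] with ω hω
    simp [hω]
  · rw [centredTruncation_of_not_ae_eq_zero h]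

lemma measurable_comap_centredTruncation :
    Measurable[MeasurableSpace.comap Y inferInstance] (centredTruncation μ Y t) := by
  by_cases h : Y =ᵐ[μ] 0
  · rw [centredTruncation_of_ae_eq_zero h]
    exact measurable_const
  · rw [centredTruncation_of_not_ae_eq_zero h]
    exact ((measurable_id.indicator measurableSet_Ioc).comp (comap_measurable Y)).sub
      measurable_const

lemma integral_centredTruncation_mul :
    ∫ ω, centredTruncation μ Y t ω * centredTruncation μ Z t ω ∂μ =
      cov[truncation Y t, truncation Z t; μ] :=
  integral_congr_ae (centredTruncation_ae_eq.mul centredTruncation_ae_eq)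

variable [IsProbabilityMeasure μ]

lemma integral_centredTruncation (hYm : Measurable Y) (ht : 0 ≤ t) :
    ∫ ω, centredTruncation μ Y t ω ∂μ = 0 := by
  rw [integral_congr_ae centredTruncation_ae_eq,
    integral_sub (bddMeasurable_truncation hYm ht).integrable (integrable_const _)]
  simp

lemma abs_centredTruncation_le (ht : 0 ≤ t) (ω : Ω) : |centredTruncation μ Y t ω| ≤ 2 * t := by
  by_cases h : Y =ᵐ[μ] 0
  · rw [centredTruncation_of_ae_eq_zero h, Pi.zero_apply, abs_zero]
    linarith
  · rw [centredTruncation_of_not_ae_eq_zero h]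
    linarith [abs_sub (truncation Y t ω) (∫ ω', truncation Y t ω' ∂μ), abs_truncation_le ht Y ω,
      abs_integral_truncation_le (μ := μ) (Y := Y) ht]

lemma integral_abs_centredTruncation_pow_three_le (hp : 0 < p) (hp₃ : p ≤ 3) (ht : 0 < t)
    (hYm : Measurable Y) (hY : Integrable (fun ω => |Y ω| ^ p) μ) :
    ∫ ω, |centredTruncation μ Y t ω| ^ 3 ∂μ ≤ 8 * t ^ 3 * scaledMoment μ Y p t := by
  refine (integral_congr_ae ?_).trans_le
    (integral_abs_truncation_sub_mean_pow_three_le hp hp₃ ht hYm hY)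
  filter_upwards [centredTruncation_ae_eq (μ := μ) (Y := Y) (t := t)] with ω hω
  rw [hω]

end CentredTruncation

section StdLocalDependence

variable {Ω ι : Type*}

lemma familySigma_mono_of_measurable_comap {X Y : ι → Ω → ℝ}
    (h : ∀ i, Measurable[MeasurableSpace.comap (X i) inferInstance] (Y i)) (S : Set ι) :
    familySigma Y S ≤ familySigma X S :=
  iSup₂_mono fun i _ => measurable_iff_comap_le.1 (h i)

variable [MeasurableSpace Ω] [Fintype ι] {μ : Measure Ω} {X Y : ι → Ω → ℝ} {A B C : ι → Finset ι}
  {κ p t : ℝ}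

/-- The sum of the scaled moments of the summands, `∑ i, E |X i| ^ p / t ^ p`. -/
noncomputable def sumScaledMoments (μ : Measure Ω) (X : ι → Ω → ℝ) (p t : ℝ) : ℝ :=
  ∑ i, scaledMoment μ (X i) p t

lemma sumScaledMoments_eq_div (ht : 0 < t) :
    sumScaledMoments μ X p t = (∑ i, ∫ ω, |X i ω| ^ p ∂μ) / t ^ p := by
  simp only [sumScaledMoments, scaledMoment_eq_div ht, Finset.sum_div]

variable [DecidableEq ι]

lemma LocalDependence.of_measurable_comap (h : LocalDependence μ X A B C κ)
    (hY : ∀ i, Measurable[MeasurableSpace.comap (X i) inferInstance] (Y i))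
    (hY₀ : ∀ i, ∫ ω, Y i ω ∂μ = 0) : LocalDependence μ Y A B C κ := by
  have hle := familySigma_mono_of_measurable_comap hY
  exact
    { h with
      measurable := fun i => (hY i).mono (h.measurable i).comap_le le_rfl
      integral_eq_zero := hY₀
      indep_self := fun i => indep_of_indep_of_le_left
        (indep_of_indep_of_le_right (h.indep_self i) (hle _)) (hle _)
      indep_A := fun i => indep_of_indep_of_le_left
        (indep_of_indep_of_le_right (h.indep_A i) (hle _)) (hle _)
      indep_B := fun i => indep_of_indep_of_le_left
        (indep_of_indep_of_le_right (h.indep_B i) (hle _)) (hle _) }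

/-- The setting of the theorem: locally dependent centred variables with finite `p`-th moments whose
sum has variance one. -/
structure StdLocalDependence (μ : Measure Ω) (X : ι → Ω → ℝ) (A B C : ι → Finset ι) (κ p : ℝ) :
    Prop extends LocalDependence μ X A B C κ where
  two_le : 2 ≤ p
  le_three : p ≤ 3
  integrable_rpow : ∀ i, Integrable (fun ω => |X i ω| ^ p) μ
  integral_sq_eq_one : ∫ ω, blockSum X Finset.univ ω ^ 2 ∂μ = 1

local notation "W" => blockSum X Finset.univ
local notation "Xₜ" => fun i => centredTruncation μ (X i) t
local notation "Wₜ" => blockSum (fun i => centredTruncation μ (X i) t) Finset.univ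

namespace StdLocalDependence

variable (h : StdLocalDependence μ X A B C κ p)
include h

lemma exponent_pos : 0 < p := by linarith [h.two_le]

lemma neg : StdLocalDependence μ (fun i ω => -X i ω) A B C κ p where
  toLocalDependence := h.of_measurable_comap (fun i => measurable_neg.comp (comap_measurable (X i)))
    fun i => by rw [integral_neg, h.integral_eq_zero i, neg_zero]
  two_le := h.two_le
  le_three := h.le_three
  integrable_rpow i := by simpa only [abs_neg] using h.integrable_rpow i
  integral_sq_eq_one := by simpa [blockSum] using h.integral_sq_eq_one

lemma sumScaledMoments_pos (ht : 0 < t) : 0 < sumScaledMoments μ X p t := by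
  have hnonneg (i : ι) (_ : i ∈ Finset.univ) : 0 ≤ scaledMoment μ (X i) p t :=
    scaledMoment_nonneg ht
  refine (Finset.sum_nonneg hnonneg).lt_of_ne' fun hsum => ?_
  have hzero (i : ι) : X i =ᵐ[μ] 0 :=
    ae_eq_zero_of_scaledMoment_eq_zero ht h.exponent_pos (h.integrable_rpow i)
      ((Finset.sum_eq_zero_iff_of_nonneg hnonneg).1 hsum i (Finset.mem_univ i))
  have hW : (fun ω => W ω ^ 2) =ᵐ[μ] 0 := by
    filter_upwards [ae_all_iff.2 hzero] with ω hω
    simp [blockSum, hω]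
  exact zero_ne_one ((integral_eq_zero_of_ae hW).symm.trans h.integral_sq_eq_one)

variable [IsProbabilityMeasure μ]

lemma memLp_two (i : ι) : MemLp (X i) 2 μ :=
  memLp_two_of_integrable_rpow h.two_le (h.measurable i) (h.integrable_rpow i)

/-- Such an `X j` is independent of itself, hence almost surely constant. -/
lemma ae_eq_zero_of_mem_A_of_mem_B {i j l : ι} (hl : l ∉ C i) (hjA : j ∈ A l) (hjB : j ∈ B i) :
    X j =ᵐ[μ] 0 := by
  have hsq := integral_mul_of_indep (h.indep_B i) (familySigma_le h.measurable)
    (familySigma_le h.measurable) (measurable_familySigma (Finset.mem_coe.2 hjB))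
    (measurable_familySigma ⟨l, hl, hjA⟩)
  rw [h.integral_eq_zero j, mul_zero, integral_eq_zero_iff_of_nonneg
    (fun ω => mul_self_nonneg _) ((h.memLp_two j).integrable_mul (h.memLp_two j))] at hsq
  filter_upwards [hsq] with ω hω
  exact mul_self_eq_zero.1 hω

lemma measurable_centredTruncation_far {i l : ι} (hl : l ∉ C i) {j : ι}
    (hj : j ∉ A l ∨ j ∈ B i) :
    Measurable[familySigma X {j | j ∉ A l}] (centredTruncation μ (X j) t) := by
  by_cases hA : j ∈ A l
  · rw [centredTruncation_of_ae_eq_zero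
      (h.ae_eq_zero_of_mem_A_of_mem_B hl hA (hj.resolve_left (not_not.2 hA)))]
    exact measurable_const
  · exact measurable_comap_centredTruncation.mono (measurable_familySigma hA).comap_le le_rfl

lemma bddLocalDependence_centredTruncation (ht : 0 ≤ t) :
    BddLocalDependence μ Xₜ A B C κ (2 * t) where
  toLocalDependence := h.of_measurable_comap (fun _ => measurable_comap_centredTruncation)
    fun i => integral_centredTruncation (h.measurable i) ht
  abs_summand_le _ := abs_centredTruncation_le ht
  indep_far _ l hl := indep_of_indep_of_le_left (indep_of_indep_of_le_right (h.indep_self l)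
      (iSup₂_le fun _ hj => (h.measurable_centredTruncation_far hl hj).comap_le))
    (familySigma_mono_of_measurable_comap (fun _ => measurable_comap_centredTruncation) _)

lemma abs_sum_integral_truncation_le (ht : 0 < t) :
    |∑ i, ∫ ω, truncation (X i) t ω ∂μ| ≤ t * sumScaledMoments μ X p t := by
  rw [sumScaledMoments, Finset.mul_sum]
  exact (Finset.abs_sum_le_sum_abs _ _).trans (Finset.sum_le_sum fun i _ =>
    abs_integral_truncation_le_scaledMoment h.two_le ht (h.measurable i) (h.integrable_rpow i)
      (h.integral_eq_zero i))

lemma sumThirdMoments_centredTruncation_le (ht : 0 < t) :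
    sumThirdMoments μ Xₜ ≤ 8 * t ^ 3 * sumScaledMoments μ X p t := by
  rw [sumScaledMoments, Finset.mul_sum]
  exact Finset.sum_le_sum fun i _ => integral_abs_centredTruncation_pow_three_le h.exponent_pos
    h.le_three ht (h.measurable i) (h.integrable_rpow i)

lemma sum_integral_mul_A_eq_one : ∑ i, ∑ j ∈ A i, ∫ ω, X i ω * X j ω ∂μ = 1 := by
  have hinteg (i j : ι) : Integrable (fun ω => X i ω * X j ω) μ :=
    (h.memLp_two i).integrable_mul (h.memLp_two j)
  have hsq (ω : Ω) : W ω ^ 2 = ∑ i, ∑ j, X i ω * X j ω := by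
    rw [sq, blockSum, Finset.sum_mul_sum]
  rw [← h.integral_sq_eq_one]
  simp only [hsq]
  rw [integral_finsetSum _ fun i _ => integrable_finsetSum _ fun j _ => hinteg i j]
  refine Finset.sum_congr rfl fun i _ => ?_
  rw [integral_finsetSum _ fun j _ => hinteg i j]
  refine Finset.sum_subset (Finset.subset_univ _) fun j _ hj => ?_
  rw [integral_mul_of_indep (h.indep_self i) (familySigma_le h.measurable)
    (familySigma_le h.measurable) (measurable_familySigma rfl) (measurable_familySigma hj),
    h.integral_eq_zero i, zero_mul]

lemma integral_sq_sum_centredTruncation (ht : 0 ≤ t) :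
    ∫ ω, Wₜ ω ^ 2 ∂μ = ∑ i, ∑ j ∈ A i, cov[truncation (X i) t, truncation (X j) t; μ] := by
  have hbdd := h.bddLocalDependence_centredTruncation ht
  rw [← hbdd.sum_integral_mul_blockSum_A]
  refine Finset.sum_congr rfl fun i _ => ?_
  simp only [blockSum, Finset.mul_sum]
  rw [integral_finsetSum _ fun j _ => ((hbdd.bdd i).mul (hbdd.bdd j)).integrable]
  exact Finset.sum_congr rfl fun j _ => integral_centredTruncation_mul

lemma abs_integral_sq_sum_centredTruncation_sub_one_le (ht : 0 < t) :
    |∫ ω, Wₜ ω ^ 2 ∂μ - 1| ≤ 3 * κ * t ^ 2 * sumScaledMoments μ X p t := by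
  have hnonneg (i : ι) : 0 ≤ scaledMoment μ (X i) p t := scaledMoment_nonneg ht
  have hterm (i : ι) :
      |∑ j ∈ A i, (∫ ω, X i ω * X j ω ∂μ - cov[truncation (X i) t, truncation (X j) t; μ])| ≤
        ∑ j ∈ C i, t ^ 2 * (scaledMoment μ (X i) p t + 2 * scaledMoment μ (X j) p t) :=
    (Finset.abs_sum_le_sum_abs _ _).trans <|
      (Finset.sum_le_sum fun j _ => abs_integral_mul_sub_covariance_truncation_le h.two_le ht
        (h.measurable i) (h.integrable_rpow i) (h.measurable j) (h.integrable_rpow j)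
        (h.integral_eq_zero j)).trans <|
      Finset.sum_le_sum_of_subset_of_nonneg (h.A_subset_C i) fun j _ _ =>
        mul_nonneg (sq_nonneg t) (by linarith [hnonneg i, hnonneg j])
  rw [abs_sub_comm, ← h.sum_integral_mul_A_eq_one, h.integral_sq_sum_centredTruncation ht.le]
  simp only [← Finset.sum_sub_distrib]
  refine ((Finset.abs_sum_le_sum_abs _ _).trans (Finset.sum_le_sum fun i _ => hterm i)).trans ?_
  simp only [← Finset.mul_sum, Finset.sum_add_distrib]
  have hown := sum_sum_const_le h.card_C_le hnonneg
  have hother := sum_sum_le h.card_mem_C_le hnonneg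
  rw [sumScaledMoments]
  nlinarith [mul_le_mul_of_nonneg_left hown (sq_nonneg t),
    mul_le_mul_of_nonneg_left hother (sq_nonneg t)]

lemma measureReal_exists_le_abs_le (ht : 0 < t) :
    μ.real {ω | ∃ i, t ≤ |X i ω|} ≤ sumScaledMoments μ X p t := by
  rw [Set.ofPred_exists]
  exact (measureReal_iUnion_fintype_le _).trans (Finset.sum_le_sum fun i _ =>
    measureReal_le_scaledMoment ht h.exponent_pos.le (h.integrable_rpow i))

end StdLocalDependence

end StdLocalDependence

section HalfLine

lemma inv_pow_six_le_of_lt {Z η : ℝ} (hZ : 1 ≤ Z) (hη : 1 < η * Z ^ 2) : (Z ^ 6)⁻¹ ≤ η := by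
  have hη_pos : 0 < η := pos_of_mul_pos_left (zero_lt_one.trans hη) (sq_nonneg Z)
  rw [inv_le_iff_one_le_mul₀ (by positivity)]
  exact hη.le.trans (by gcongr; norm_num)

variable {Ω ι : Type*} [MeasurableSpace Ω] [Fintype ι] {μ : Measure Ω}
  {X : ι → Ω → ℝ} {A B C : ι → Finset ι} {κ p t z : ℝ}

local notation "W" => blockSum X Finset.univ
local notation "Wₜ" => blockSum (fun i => centredTruncation μ (X i) t) Finset.univ
local notation "m" => ∑ i, ∫ ω, truncation (X i) t ω ∂μ
local notation "θ" => sumScaledMoments μ X p t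

lemma ae_exists_le_abs_or_sum_centredTruncation_eq :
    ∀ᵐ ω ∂μ, (∃ i, t ≤ |X i ω|) ∨ Wₜ ω = W ω - m := by
  filter_upwards [ae_all_iff.2 fun i => centredTruncation_ae_eq (μ := μ) (Y := X i) (t := t)]
    with ω hω
  refine or_iff_not_imp_left.2 fun hsmall => ?_
  push Not at hsmall
  simp only [blockSum, hω, truncation_eq_self (hsmall _), Finset.sum_sub_distrib]

variable [DecidableEq ι]

namespace StdLocalDependence

variable (h : StdLocalDependence μ X A B C κ p)
include h

lemma measurable_sum : Measurable W := Finset.measurable_sum _ fun i _ => h.measurable i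

variable [IsProbabilityMeasure μ]

lemma measureReal_Ici_le_truncated (ht : 0 < t) :
    μ.real {ω | z ≤ W ω} ≤ μ.real {ω | Wₜ ω ∈ Set.Ici (z - m)} + θ := by
  refine le_trans ?_ (add_le_add_right (h.measureReal_exists_le_abs_le ht) _)
  refine le_trans ?_ (measureReal_union_le _ _)
  refine ENNReal.toReal_mono (measure_ne_top _ _) (measure_mono_ae ?_)
  filter_upwards [ae_exists_le_abs_or_sum_centredTruncation_eq (μ := μ) (X := X) (t := t)]
    with ω hω (hz : z ≤ W ω)
  exact hω.symm.imp_left fun heq => show z - m ≤ Wₜ ω by linarith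

lemma measureReal_truncated_Ioi_le (ht : 0 < t) :
    μ.real {ω | Wₜ ω ∈ Set.Ioi (z - m)} ≤ μ.real {ω | z < W ω} + θ := by
  refine le_trans ?_ (add_le_add_right (h.measureReal_exists_le_abs_le ht) _)
  refine le_trans ?_ (measureReal_union_le _ _)
  refine ENNReal.toReal_mono (measure_ne_top _ _) (measure_mono_ae ?_)
  filter_upwards [ae_exists_le_abs_or_sum_centredTruncation_eq (μ := μ) (X := X) (t := t)]
    with ω hω (hz : z - m < Wₜ ω)
  exact hω.symm.imp_left fun heq => show z < W ω by linarith

lemma sq_mul_measureReal_le (hz : 0 ≤ z) : (1 + z) ^ 2 * μ.real {ω | z ≤ W ω} ≤ 4 := by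
  have hsq : Integrable (fun ω => 2 * W ω ^ 2) μ :=
    (integrable_of_integral_eq_one h.integral_sq_eq_one).const_mul 2
  have hsub : {ω | z ≤ W ω} ⊆ {ω | (1 + z) ^ 2 ≤ 2 + 2 * W ω ^ 2} := fun ω (hω : z ≤ W ω) =>
    show (1 + z) ^ 2 ≤ 2 + 2 * W ω ^ 2 by nlinarith [sq_nonneg (1 - W ω)]
  calc (1 + z) ^ 2 * μ.real {ω | z ≤ W ω}
      ≤ (1 + z) ^ 2 * μ.real {ω | (1 + z) ^ 2 ≤ 2 + 2 * W ω ^ 2} :=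
        mul_le_mul_of_nonneg_left (measureReal_mono hsub) (sq_nonneg _)
    _ ≤ ∫ ω, (2 + 2 * W ω ^ 2) ∂μ := mul_meas_ge_le_integral_of_nonneg
        (.of_forall fun ω => add_nonneg zero_le_two (mul_nonneg zero_le_two (sq_nonneg _)))
        ((integrable_const 2).add hsq) _
    _ = 4 := by
        rw [integral_add (integrable_const 2) hsq, integral_const_mul, h.integral_sq_eq_one]
        norm_num

lemma abs_sum_integral_truncation_le_level (ht : 0 < t) (hκt : κ * t = (1 + z) / 32) :
    |m| ≤ (1 + z) / 32 * θ := by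
  have htκ : t ≤ κ * t := le_mul_of_one_le_left ht.le h.one_le
  exact (h.abs_sum_integral_truncation_le ht).trans
    (mul_le_mul_of_nonneg_right (htκ.trans_eq hκt) (h.sumScaledMoments_pos ht).le)

lemma truncated_tail_bounds (hz : 0 ≤ z) (ht : 0 < t) (hκt : κ * t = (1 + z) / 32)
    (hθ : θ * (1 + z) ^ 2 ≤ 1) (hm : |m| ≤ 1 / 2) :
    μ.real {ω | Wₜ ω ∈ Set.Ici (z - m)} ≤ 1 - stdGaussianCDF (z - m) + 10 ^ 21 * steinConst * θ ∧
      1 - stdGaussianCDF (z - m) - 10 ^ 21 * steinConst * θ ≤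
        μ.real {ω | Wₜ ω ∈ Set.Ioi (z - m)} := by
  have hθ_pos := h.sumScaledMoments_pos (t := t) ht
  have hκ := h.one_le
  have htκ : t ≤ (1 + z) / 32 := (le_mul_of_one_le_left ht.le hκ).trans_eq hκt
  refine (h.bddLocalDependence_centredTruncation ht.le).tail_bounds (by linarith) hθ_pos
    (by linarith) ?_ ?_ hθ ?_
  · calc κ ^ 3 * sumThirdMoments μ (fun i => centredTruncation μ (X i) t)
        ≤ κ ^ 3 * (8 * t ^ 3 * θ) := by
          gcongr
          exact h.sumThirdMoments_centredTruncation_le ht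
      _ = 8 / 32 ^ 3 * (θ * (1 + z) ^ 3) := by
          rw [show κ ^ 3 * (8 * t ^ 3 * θ) = 8 * (κ * t) ^ 3 * θ by ring, hκt]
          ring
      _ ≤ θ * (1 + z) ^ 3 := mul_le_of_le_one_left (by positivity) (by norm_num)
  · calc |∫ ω, Wₜ ω ^ 2 ∂μ - 1| ≤ 3 * κ * t ^ 2 * θ :=
          h.abs_integral_sq_sum_centredTruncation_sub_one_le ht
      _ = 3 * (κ * t) * t * θ := by ring
      _ ≤ 3 * ((1 + z) / 32) * ((1 + z) / 32) * θ := by rw [hκt]; gcongr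
      _ = 3 / 32 ^ 2 * (θ * (1 + z) ^ 2) := by ring
      _ ≤ θ * (1 + z) ^ 2 := mul_le_of_le_one_left (by positivity) (by norm_num)
  · rw [show z - m - (1 + z - 1) = -m by ring, abs_neg]
    exact hm

lemma tail_bounds_of_le (hz : 0 ≤ z) (ht : 0 < t) (hκt : κ * t = (1 + z) / 32)
    (hθ : θ * (1 + z) ^ 2 ≤ 1) :
    μ.real {ω | z ≤ W ω} ≤ 1 - stdGaussianCDF z + 10 ^ 22 * steinConst * θ ∧
      1 - stdGaussianCDF z - 10 ^ 22 * steinConst * θ ≤ μ.real {ω | z < W ω} := by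
  have hθ_pos := h.sumScaledMoments_pos (t := t) ht
  have hm_le := h.abs_sum_integral_truncation_le_level ht hκt
  have hm : |m| ≤ 1 / 2 := by nlinarith
  have hshift : |stdGaussianCDF (z - m) - stdGaussianCDF z| ≤ steinConst * θ := by
    calc |stdGaussianCDF (z - m) - stdGaussianCDF z|
        ≤ |z - m - z| * (steinConst * ((1 + z) ^ 6)⁻¹) :=
          abs_stdGaussianCDF_sub_le (by linarith) (by linarith [(abs_le.1 hm).2]) (by linarith)
      _ ≤ (1 + z) / 32 * θ * (steinConst * (1 + z)⁻¹) := by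
          rw [sub_sub_cancel_left, abs_neg]
          have := steinConst_pos
          gcongr
          exact le_self_pow₀ (by linarith) (by norm_num)
      _ = steinConst * θ / 32 := by field_simp
      _ ≤ steinConst * θ := div_le_self (mul_pos steinConst_pos hθ_pos).le (by norm_num)
  obtain ⟨hupper, hlower⟩ := h.truncated_tail_bounds hz ht hκt hθ hm
  have hIci := h.measureReal_Ici_le_truncated (z := z) ht
  have hIoi := h.measureReal_truncated_Ioi_le (z := z) ht
  have hcθ : θ ≤ steinConst * θ := le_mul_of_one_le_left hθ_pos.le one_le_steinConst
  have hshift' := abs_le.1 hshift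
  constructor <;> linarith

lemma tail_bounds_of_gt (hz : 0 ≤ z) (hθ : 1 < θ * (1 + z) ^ 2) :
    μ.real {ω | z ≤ W ω} ≤ 1 - stdGaussianCDF z + 10 ^ 22 * steinConst * θ ∧
      1 - stdGaussianCDF z - 10 ^ 22 * steinConst * θ ≤ μ.real {ω | z < W ω} := by
  have hprob : μ.real {ω | z ≤ W ω} ≤ 4 * θ := by
    have := h.sq_mul_measureReal_le hz
    have hpos : 0 < (1 + z) ^ 2 := by positivity
    refine le_of_mul_le_mul_left ?_ hpos
    linarith
  have hgauss : 1 - stdGaussianCDF z ≤ 9 * steinConst * θ := by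
    calc 1 - stdGaussianCDF z ≤ 9 * exp (-z ^ 2 / 2) :=
          (one_sub_stdGaussianCDF z).trans_le (stdGaussian_real_Ioi_le hz)
      _ ≤ 9 * (steinConst * ((1 + z) ^ 6)⁻¹) := by
          gcongr
          exact exp_neg_sq_half_le (by linarith) (by linarith)
      _ ≤ 9 * (steinConst * θ) := by
          have := steinConst_pos
          gcongr
          exact inv_pow_six_le_of_lt (by linarith) hθ
      _ = 9 * steinConst * θ := by ring
  have hθ_pos : 0 < θ := pos_of_mul_pos_left (zero_lt_one.trans hθ) (sq_nonneg (1 + z))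
  have hcθ : θ ≤ steinConst * θ := le_mul_of_one_le_left hθ_pos.le one_le_steinConst
  have hcdf : stdGaussianCDF z ≤ 1 := stdGaussianCDF_eq_real z ▸ measureReal_le_one
  have hnonneg : 0 ≤ μ.real {ω | z < W ω} := measureReal_nonneg
  constructor <;> linarith

lemma tail_bounds (hz : 0 ≤ z) (ht : 0 < t) (hκt : κ * t = (1 + z) / 32) :
    μ.real {ω | z ≤ W ω} ≤ 1 - stdGaussianCDF z + 10 ^ 22 * steinConst * θ ∧
      1 - stdGaussianCDF z - 10 ^ 22 * steinConst * θ ≤ μ.real {ω | z < W ω} :=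
  (le_or_gt (θ * (1 + z) ^ 2) 1).elim (h.tail_bounds_of_le hz ht hκt) (h.tail_bounds_of_gt hz)

end StdLocalDependence

end HalfLine

section NonuniformBound

variable {Ω ι : Type*}

lemma one_le_of_card_le [Nonempty ι] {A C : ι → Finset ι} {κ : ℝ} (hA : ∀ i, i ∈ A i)
    (hAC : ∀ i, A i ⊆ C i) (hC : ∀ i, ((C i).card : ℝ) ≤ κ) : 1 ≤ κ := by
  obtain ⟨i⟩ := ‹Nonempty ι›
  have : 1 ≤ (C i).card := Finset.card_pos.2 ⟨i, hAC i (hA i)⟩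
  exact (by exact_mod_cast this : (1 : ℝ) ≤ (C i).card).trans (hC i)

lemma indep_familySigma_of_indepFun {β γ : Type*} [MeasurableSpace Ω] [mβ : MeasurableSpace β]
    [mγ : MeasurableSpace γ] {μ : Measure Ω} {X : ι → Ω → ℝ} {S T : Set ι} {f : Ω → β} {g : Ω → γ}
    (hfg : IndepFun f g μ) (hS : ∀ j ∈ S, Measurable[mβ.comap f] (X j))
    (hT : ∀ j ∈ T, Measurable[mγ.comap g] (X j)) :
    Indep (familySigma X S) (familySigma X T) μ :=
  indep_of_indep_of_le_left (indep_of_indep_of_le_right ((IndepFun_iff_Indep _ _ _).1 hfg)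
    (iSup₂_le fun j hj => (hT j hj).comap_le)) (iSup₂_le fun j hj => (hS j hj).comap_le)

lemma measurable_comap_restrict (X : ι → Ω → ℝ) {F : Finset ι} {j : ι} (hj : j ∈ F) :
    Measurable[MeasurableSpace.comap (fun ω (k : F) => X k ω) inferInstance] (X j) :=
  (measurable_pi_apply (⟨j, hj⟩ : F)).comp (comap_measurable fun ω (k : F) => X k ω)

lemma measurable_comap_restrict_restrict (X : ι → Ω → ℝ) {F : Finset ι} {A : ι → Finset ι}
    {j l : ι} (hl : l ∈ F) (hj : j ∈ A l) :
    Measurable[MeasurableSpace.comap (fun ω (k : F) (i : A k) => X i ω) inferInstance] (X j) :=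
  (measurable_pi_apply (⟨j, hj⟩ : A l)).comp ((measurable_pi_apply (⟨l, hl⟩ : F)).comp
    (comap_measurable fun ω (k : F) (i : A k) => X i ω))

variable [MeasurableSpace Ω] [Fintype ι] {μ : Measure Ω} {X : ι → Ω → ℝ} {A B C : ι → Finset ι}
  {κ p t : ℝ}

lemma sumScaledMoments_neg :
    sumScaledMoments μ (fun i ω => -X i ω) p t = sumScaledMoments μ X p t := by
  simp only [sumScaledMoments, scaledMoment, abs_neg]

lemma sumScaledMoments_le {Z : ℝ} (hp : p ≤ 3) (hκ : 0 < κ) (hZ : 0 < Z) :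
    sumScaledMoments μ X p (Z / (32 * κ)) ≤
      32 ^ 3 * (κ ^ p * Z ^ (-p) * ∑ i, ∫ ω, |X i ω| ^ p ∂μ) := by
  have : 0 ≤ ∑ i, ∫ ω, |X i ω| ^ p ∂μ :=
    Finset.sum_nonneg fun i _ => integral_nonneg fun ω => by positivity
  have h32 : (32 : ℝ) ^ p ≤ 32 ^ 3 := by
    rw [← rpow_natCast]
    exact rpow_le_rpow_of_exponent_le (by norm_num) (by exact_mod_cast hp)
  calc sumScaledMoments μ X p (Z / (32 * κ))
      = 32 ^ p * (κ ^ p * Z ^ (-p) * ∑ i, ∫ ω, |X i ω| ^ p ∂μ) := by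
        rw [sumScaledMoments_eq_div (by positivity), div_rpow hZ.le (by positivity),
          mul_rpow (by norm_num) hκ.le, rpow_neg hZ.le]
        field_simp
    _ ≤ 32 ^ 3 * (κ ^ p * Z ^ (-p) * ∑ i, ∫ ω, |X i ω| ^ p ∂μ) := by gcongr

variable [DecidableEq ι] [IsProbabilityMeasure μ]

local notation "W" => blockSum X Finset.univ

namespace StdLocalDependence

variable (h : StdLocalDependence μ X A B C κ p)
include h

lemma abs_measureReal_sub_le_of_nonneg {z : ℝ} (hz : 0 ≤ z) (ht : 0 < t)
    (hκt : κ * t = (1 + z) / 32) :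
    |μ.real {ω | W ω ≤ z} - stdGaussianCDF z| ≤
      10 ^ 22 * steinConst * sumScaledMoments μ X p t := by
  obtain ⟨hupper, hlower⟩ := h.tail_bounds hz ht hκt
  have hcompl : μ.real {ω | W ω ≤ z} = 1 - μ.real {ω | z < W ω} := by
    rw [← probReal_compl_eq_one_sub (measurableSet_lt measurable_const h.measurable_sum)]
    simp only [Set.compl_ofPred, not_lt]
  have hmono : μ.real {ω | z < W ω} ≤ μ.real {ω | z ≤ W ω} :=
    measureReal_mono fun ω (hω : z < W ω) => hω.le
  rw [hcompl, abs_le]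
  constructor <;> linarith

lemma abs_measureReal_sub_le_of_nonpos {z : ℝ} (hz : z ≤ 0) (ht : 0 < t)
    (hκt : κ * t = (1 - z) / 32) :
    |μ.real {ω | W ω ≤ z} - stdGaussianCDF z| ≤
      10 ^ 22 * steinConst * sumScaledMoments μ X p t := by
  have htails := h.neg.tail_bounds (neg_nonneg.2 hz) ht (by rw [hκt, sub_eq_add_neg])
  simp only [blockSum, Finset.sum_neg_distrib, neg_le_neg_iff, neg_lt_neg_iff, sumScaledMoments_neg,
    stdGaussianCDF_neg] at htails
  obtain ⟨hupper, hlower⟩ := htails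
  have hmono : μ.real {ω | W ω < z} ≤ μ.real {ω | W ω ≤ z} :=
    measureReal_mono fun ω (hω : W ω < z) => hω.le
  simp only [blockSum] at hmono ⊢
  rw [abs_le]
  constructor <;> linarith

theorem abs_measureReal_sub_stdGaussianCDF_le (z : ℝ) :
    |μ.real {ω | W ω ≤ z} - stdGaussianCDF z| ≤
      10 ^ 27 * steinConst * κ ^ p * (1 + |z|) ^ (-p) * ∑ i, ∫ ω, |X i ω| ^ p ∂μ := by
  have hκ : 0 < κ := zero_lt_one.trans_le h.one_le
  have ht : 0 < (1 + |z|) / (32 * κ) := by positivity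
  have hκt : κ * ((1 + |z|) / (32 * κ)) = (1 + |z|) / 32 := by field_simp
  have hbound : |μ.real {ω | W ω ≤ z} - stdGaussianCDF z| ≤
      10 ^ 22 * steinConst * sumScaledMoments μ X p ((1 + |z|) / (32 * κ)) := by
    rcases le_total 0 z with hz | hz
    · exact h.abs_measureReal_sub_le_of_nonneg hz ht (hκt.trans (by rw [abs_of_nonneg hz]))
    · exact h.abs_measureReal_sub_le_of_nonpos hz ht
        (hκt.trans (by rw [abs_of_nonpos hz, sub_eq_add_neg]))
  have : 0 ≤ ∑ i, ∫ ω, |X i ω| ^ p ∂μ :=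
    Finset.sum_nonneg fun i _ => integral_nonneg fun ω => by positivity
  have hc := steinConst_pos
  calc |μ.real {ω | W ω ≤ z} - stdGaussianCDF z|
      ≤ 10 ^ 22 * steinConst * (32 ^ 3 * (κ ^ p * (1 + |z|) ^ (-p) *
          ∑ i, ∫ ω, |X i ω| ^ p ∂μ)) := hbound.trans (by
        gcongr
        exact sumScaledMoments_le h.le_three hκ (by positivity))
    _ = 10 ^ 22 * 32 ^ 3 * (steinConst * κ ^ p * (1 + |z|) ^ (-p) *
          ∑ i, ∫ ω, |X i ω| ^ p ∂μ) := by ring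
    _ ≤ 10 ^ 27 * (steinConst * κ ^ p * (1 + |z|) ^ (-p) * ∑ i, ∫ ω, |X i ω| ^ p ∂μ) := by
        gcongr
        norm_num
    _ = _ := by ring

end StdLocalDependence

end NonuniformBound

theorem stmt_4_general {Ω ι : Type*} [MeasurableSpace Ω] {μ : Measure Ω} [IsProbabilityMeasure μ]
    [Fintype ι] [DecidableEq ι] {p κ : ℝ} (hp : 2 ≤ p) (hp₃ : p ≤ 3) {X : ι → Ω → ℝ}
    {A B C : ι → Finset ι} (hX : ∀ i, Measurable (X i)) (hX₀ : ∀ i, ∫ ω, X i ω ∂μ = 0)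
    (hXp : ∀ i, Integrable (fun ω => |X i ω| ^ p) μ)
    (hA : ∀ i, i ∈ A i) (hAB : ∀ i, A i ⊆ B i) (hBC : ∀ i, B i ⊆ C i)
    (hindep_self : ∀ i, IndepFun (X i) (fun ω (j : ((A i)ᶜ : Finset ι)) => X j ω) μ)
    (hindep_A : ∀ i, IndepFun (fun ω (j : A i) => X j ω)
      (fun ω (l : ((B i)ᶜ : Finset ι)) (j : A l) => X j ω) μ)
    (hindep_B : ∀ i, IndepFun (fun ω (l : B i) (j : A l) => X j ω)
      (fun ω (l : ((C i)ᶜ : Finset ι)) (j : A l) => X j ω) μ)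
    (hvar : ∫ ω, (∑ i, X i ω) ^ 2 ∂μ = 1) (hcard : ∀ i, ((C i).card : ℝ) ≤ κ)
    (hcard_mem : ∀ i, ((Finset.univ.filter fun j => i ∈ C j).card : ℝ) ≤ κ) (z : ℝ) :
    |μ.real {ω | ∑ i, X i ω ≤ z} - stdGaussianCDF z| ≤
      10 ^ 27 * steinConst * κ ^ p * (1 + |z|) ^ (-p) * ∑ i, ∫ ω, |X i ω| ^ p ∂μ := by
  have hne : Nonempty ι := not_isEmpty_iff.1 fun _ => by simp at hvar
  have h : StdLocalDependence μ X A B C κ p :=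
    { measurable := hX, integral_eq_zero := hX₀, mem_A := hA, A_subset_B := hAB, B_subset_C := hBC
      one_le := one_le_of_card_le hA (fun i => (hAB i).trans (hBC i)) hcard
      card_C_le := hcard, card_mem_C_le := hcard_mem
      two_le := hp, le_three := hp₃, integrable_rpow := hXp, integral_sq_eq_one := hvar
      indep_self := fun i => indep_familySigma_of_indepFun (hindep_self i)
        (fun j hj => hj ▸ comap_measurable (X j))
        fun j hj => measurable_comap_restrict X (Finset.mem_compl.2 hj)
      indep_A := fun i => indep_familySigma_of_indepFun (hindep_A i)
        (fun j hj => measurable_comap_restrict X hj)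
        fun j ⟨l, hl, hj⟩ => measurable_comap_restrict_restrict X (Finset.mem_compl.2 hl) hj
      indep_B := fun i => indep_familySigma_of_indepFun (hindep_B i)
        (fun j hj => measurable_comap_restrict_restrict X hj (hA j))
        fun j ⟨l, hl, hj⟩ => measurable_comap_restrict_restrict X (Finset.mem_compl.2 hl) hj }
  exact h.abs_measureReal_sub_stdGaussianCDF_le z

theorem stmt_4 :
    ∃ Cc : ℝ, 0 < Cc ∧
    ∀ (Ω : Type) [MeasurableSpace Ω] (μ : Measure Ω) [IsProbabilityMeasure μ]
      (ι : Type) [Fintype ι] [DecidableEq ι]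
      (p : ℝ), 2 < p → p ≤ 3 →
    ∀ (X : ι → Ω → ℝ) (A B Bstar Cstar Dstar : ι → Finset ι),
      (∀ i, Measurable (X i)) →
      (∀ i, ∫ ω, X i ω ∂μ = 0) →
      (∀ i, Integrable (fun ω => |X i ω| ^ p) μ) →
      (∀ i, i ∈ A i) → (∀ i, A i ⊆ B i) → (∀ i, B i ⊆ Bstar i) →
      (∀ i, Bstar i ⊆ Cstar i) → (∀ i, Cstar i ⊆ Dstar i) →
      (∀ i, IndepFun (X i) (fun ω => fun j : ((A i)ᶜ : Finset ι) => X j.1 ω) μ) →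
      (∀ i, IndepFun (fun ω => fun j : (A i : Finset ι) => X j.1 ω)
        (fun ω => fun j : ((B i)ᶜ : Finset ι) => X j.1 ω) μ) →
      (∀ i, IndepFun (fun ω => fun j : (A i : Finset ι) => X j.1 ω)
        (fun ω => fun l : ((Bstar i)ᶜ : Finset ι) =>
          fun j : (A l.1 : Finset ι) => X j.1 ω) μ) →
      (∀ i, IndepFun (fun ω => fun l : (Bstar i : Finset ι) =>
          fun j : (A l.1 : Finset ι) => X j.1 ω)
        (fun ω => fun l : ((Cstar i)ᶜ : Finset ι) =>
          fun j : (A l.1 : Finset ι) => X j.1 ω) μ) →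
      (∀ i, IndepFun (fun ω => fun l : (Cstar i : Finset ι) =>
          fun j : (A l.1 : Finset ι) => X j.1 ω)
        (fun ω => fun l : ((Dstar i)ᶜ : Finset ι) =>
          fun j : (A l.1 : Finset ι) => X j.1 ω) μ) →
    ∀ (W : Ω → ℝ), (∀ ω, W ω = ∑ i, X i ω) →
      (∫ ω, (W ω) ^ 2 ∂μ) = 1 →
    ∀ (κ : ℕ), (κ = Finset.univ.sup fun i => max (Dstar i).card
        (Finset.univ.filter fun j => i ∈ Dstar j).card) →
    ∀ z : ℝ, |(μ {ω | W ω ≤ z}).toReal - stdGaussianCDF z| ≤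
      Cc * (κ : ℝ) ^ p * (1 + |z|) ^ (-p) * ∑ i, ∫ ω, |X i ω| ^ p ∂μ := by
  refine ⟨10 ^ 27 * steinConst, mul_pos (by norm_num) steinConst_pos, ?_⟩
  intro Ω _ μ _ ι _ _ p hp hp₃ X A B Bstar Cstar Dstar hX hX₀ hXp hA hAB hBB hBC hCD
    hindep_self _ hindep_A hindep_B _ W hW hvar κ hκ z
  have hcard (i : ι) : max (Dstar i).card (Finset.univ.filter fun j => i ∈ Dstar j).card ≤ κ :=
    hκ ▸ Finset.le_sup (f := fun i => max (Dstar i).card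
      (Finset.univ.filter fun j => i ∈ Dstar j).card) (Finset.mem_univ i)
  have hcard_C (i : ι) : (Cstar i).card ≤ κ :=
    (Finset.card_le_card (hCD i)).trans ((le_max_left _ _).trans (hcard i))
  have hcard_mem (i : ι) : (Finset.univ.filter fun j => i ∈ Cstar j).card ≤ κ :=
    (Finset.card_le_card (Finset.monotone_filter_right _ fun j _ hj => hCD j hj)).trans
      ((le_max_right _ _).trans (hcard i))
  obtain rfl : W = fun ω => ∑ i, X i ω := funext hW
  exact stmt_4_general hp.le hp₃ hX hX₀ hXp hA (fun i => (hAB i).trans (hBB i)) hBC hindep_self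
    hindep_A hindep_B hvar (fun i => by exact_mod_cast hcard_C i)
    (fun i => by exact_mod_cast hcard_mem i) z
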